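/- There is a constant C > 0 such that for every p ∈ (1, 2] and every f ∈ ℓ^p(ℤ), ‖ sup_{N ≥ 2} |ℳ_N f| ‖_{ℓ^p(ℤ)} ≤ C (p−1)^{−4} ‖f‖_{ℓ^p(ℤ)}. -/

import Mathlib

open scoped BigOperators

/-- The set of primes `p ≤ N`. -/
def primesUpTo (N : ℕ) : Finset ℕ := (Finset.range (N + 1)).filter Nat.Prime

/-- `ϑ(N) = Σ_{p ∈ ℙ_N} log p`. -/
noncomputable def theta (N : ℕ) : ℝ := ∑ p ∈ primesUpTo N, Real.log p

/-- The weighted average `ℳ_N f(x) = (1/ϑ(N)) Σ_{p ∈ ℙ_N} f(x + p) log p`. -/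
noncomputable def weightedPrimeAvg (f : ℤ → ℂ) (N : ℕ) (x : ℤ) : ℂ :=
  ((theta N : ℂ))⁻¹ * ∑ p ∈ primesUpTo N, f (x + p) * (Real.log p : ℂ)

/-!
At length `N ≈ 2 ^ m` the weight `log p` on the primes above a small power of `N` is at most a
constant times a nonnegative Brun sieve weight of mean one; the primes below that power are absorbed
by the Hardy–Littlewood maximal function. Sieving one block of primes `(y_j, y_{j+1}]` at a time,
where `log y_j ≈ x_j = (3/2) ^ j`, writes the sieve weight as `1` plus a telescoping sum of
increments `h_j`. The constant `1` is again a Hardy–Littlewood average, and the maximal function of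
the averages weighted by `h_j` is estimated at two exponents.

* Near `ℓ^1`: `h_j` is a divisor sum, so expanding it into averages along progressions bounds the
  maximal operator on `ℓ^q` by `O(x_j ^ 3 / (q - 1))`.
* On `ℓ^2`: the Fourier coefficients of `h_j` are `O(x_j ^ 3 / y_j)`, since a coefficient at a
  rational whose denominator has no prime factor in the `j`-th block vanishes. A single average is
  therefore small, and there are few scales at which `x_J`, `J` being the depth of the sieve, is
  below `y_{j+1}`. At the remaining scales `h_j` is an increment of the full sieve of Eratosthenes,
  hence periodic, and the maximal function factors through one average over a period.

Riesz–Thorin interpolation between `(1 + p) / 2` and `2`, applied to linearized maximal operators,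
gives `O((p - 1)⁻¹ x_j ^ 3 exp (-(p - 1) x_j / 8))` on `ℓ^p`, and summing over the geometric
sequence `x_j` costs another `(p - 1)⁻³`.
-/

namespace PrimeMaximal

open Finset MeasureTheory
open scoped ENNReal NNReal

section ErgodicMaximal

variable {X : Type*} {T : X → X} {F : X → ℝ≥0∞} {c : ℝ≥0∞} {A : Set X}

/-- The maximal function `sup_{n ≥ 1} (F + F ∘ T + ⋯ + F ∘ T^(n-1)) / n` of the ergodic averages of
`F` along `T`. -/
noncomputable def ergodicMaximal (T : X → X) (F : X → ℝ≥0∞) (x : X) : ℝ≥0∞ :=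
  ⨆ n : ℕ, birkhoffSum T F (n + 1) x / (n + 1 : ℕ)

/-- Garsia's function `max (0, S₁, …, S_K)`, where `S_n` is the `n`-th ergodic sum of `F - c 1_A`.
The recursion uses that truncated subtraction is subtraction followed by the positive part. -/
noncomputable def garsiaMax (T : X → X) (F : X → ℝ≥0∞) (c : ℝ≥0∞) (A : Set X) : ℕ → X → ℝ≥0∞
  | 0, _ => 0
  | K + 1, x => F x + garsiaMax T F c A K (T x) - A.indicator (fun _ => c) x

lemma garsiaMax_le_succ (K : ℕ) (x : X) :
    garsiaMax T F c A K x ≤ garsiaMax T F c A (K + 1) x := by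
  induction K generalizing x with
  | zero => exact zero_le
  | succ K ih => exact tsub_le_tsub_right (add_le_add_right (ih (T x)) _) _

lemma birkhoffSum_le_mul_add_garsiaMax {n K : ℕ} (hn : n ≤ K) (x : X) :
    birkhoffSum T F n x ≤ c * n + garsiaMax T F c A K x := by
  induction K generalizing n x with
  | zero => simp [Nat.le_zero.1 hn]
  | succ K ih =>
    rcases n with _ | n
    · simp
    have hA : A.indicator (fun _ => c) x ≤ c := Set.indicator_le_self _ _ _
    calc birkhoffSum T F (n + 1) x = F x + birkhoffSum T F n (T x) := birkhoffSum_succ' T F n x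
      _ ≤ F x + (c * n + garsiaMax T F c A K (T x)) := by gcongr; exact ih (by omega) _
      _ = c * n + (F x + garsiaMax T F c A K (T x)) := by ring
      _ ≤ c * n + (garsiaMax T F c A (K + 1) x + c) :=
        add_le_add_right (tsub_le_iff_right.1 (tsub_le_tsub_left hA _)) _
      _ = c * (n + 1 : ℕ) + garsiaMax T F c A (K + 1) x := by push_cast; ring

lemma le_add_garsiaMax_of_mul_le_birkhoffSum (hc : c ≠ ∞) {n K : ℕ} (hn : n ≤ K) {x : X}
    (hx : c * (n + 1 : ℕ) ≤ birkhoffSum T F (n + 1) x) :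
    c ≤ F x + garsiaMax T F c A K (T x) := by
  have hfin : c * n ≠ ∞ := ENNReal.mul_ne_top hc (by simp)
  refine (ENNReal.add_le_add_iff_left hfin).1 ?_
  calc c * n + c = c * (n + 1 : ℕ) := by push_cast; ring
    _ ≤ F x + birkhoffSum T F n (T x) := by rwa [← birkhoffSum_succ']
    _ ≤ F x + (c * n + garsiaMax T F c A K (T x)) := by
      gcongr; exact birkhoffSum_le_mul_add_garsiaMax hn _
    _ = c * n + (F x + garsiaMax T F c A K (T x)) := by ring

lemma lt_ergodicMaximal_tsub {x : X} (h : c + c < ergodicMaximal T F x) :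
    c < ergodicMaximal T (fun y => F y - c) x := by
  obtain ⟨n, hn⟩ := lt_iSup_iff.1 h
  refine lt_iSup_iff.2 ⟨n, ?_⟩
  have hsum : birkhoffSum T F (n + 1) x ≤
      birkhoffSum T (fun y => F y - c) (n + 1) x + c * (n + 1 : ℕ) := by
    simp only [birkhoffSum]
    calc ∑ k ∈ range (n + 1), F (T^[k] x) ≤ ∑ k ∈ range (n + 1), (F (T^[k] x) - c + c) :=
          sum_le_sum fun _ _ => le_tsub_add
      _ = _ := by simp [sum_add_distrib, mul_comm]
  rw [ENNReal.lt_div_iff_mul_lt (by simp) (by simp)] at hn ⊢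
  exact lt_of_add_lt_add_right ((add_mul c c _ ▸ hn).trans_le hsum)

variable [MeasurableSpace X] {μ : Measure X}

lemma measurable_birkhoffSum (hT : Measurable T) (hF : Measurable F) (n : ℕ) :
    Measurable (birkhoffSum T F n) :=
  Finset.measurable_fun_sum _ fun k _ => hF.comp (hT.iterate k)

lemma measurable_ergodicMaximal (hT : Measurable T) (hF : Measurable F) :
    Measurable (ergodicMaximal T F) :=
  Measurable.iSup fun n => (measurable_birkhoffSum hT hF (n + 1)).div_const _

lemma measurable_garsiaMax (hT : Measurable T) (hF : Measurable F) (hA : MeasurableSet A) (K : ℕ) :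
    Measurable (garsiaMax T F c A K) := by
  induction K with
  | zero => exact measurable_const
  | succ K ih => exact (hF.add (ih.comp hT)).sub (measurable_const.indicator hA)

lemma lintegral_garsiaMax_le (hT : MeasurePreserving T μ μ) (hF : Measurable F)
    (hA : MeasurableSet A) (K : ℕ) : ∫⁻ x, garsiaMax T F c A K x ∂μ ≤ K * ∫⁻ x, F x ∂μ := by
  induction K with
  | zero => simp [garsiaMax]
  | succ K ih =>
    calc ∫⁻ x, garsiaMax T F c A (K + 1) x ∂μ ≤ ∫⁻ x, F x + garsiaMax T F c A K (T x) ∂μ :=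
          lintegral_mono fun x => tsub_le_self
      _ = ∫⁻ x, F x ∂μ + ∫⁻ x, garsiaMax T F c A K x ∂μ := by
        rw [lintegral_add_left hF,
          hT.lintegral_comp (measurable_garsiaMax hT.measurable hF hA K)]
      _ ≤ (K + 1 : ℕ) * ∫⁻ x, F x ∂μ := by
        rw [Nat.cast_add_one, add_mul, one_mul, add_comm]; gcongr

lemma measurableSet_exists_mul_le_birkhoffSum (hT : Measurable T) (hF : Measurable F) (K : ℕ) :
    MeasurableSet {x | ∃ n ≤ K, c * (n + 1 : ℕ) ≤ birkhoffSum T F (n + 1) x} := by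
  simp only [Set.ofPred_exists, Set.ofPred_and]
  exact .iUnion fun n => (MeasurableSet.const _).inter
    (measurableSet_le measurable_const (measurable_birkhoffSum hT hF (n + 1)))

theorem mul_measure_exists_mul_le_birkhoffSum_le (hT : MeasurePreserving T μ μ) (hF : Measurable F)
    (hc : c ≠ ∞) (K : ℕ) :
    c * μ {x | ∃ n ≤ K, c * (n + 1 : ℕ) ≤ birkhoffSum T F (n + 1) x} ≤ ∫⁻ x, F x ∂μ := by
  rcases eq_or_ne (∫⁻ x, F x ∂μ) ∞ with htop | hfin
  · simp [htop]
  set A := {x | ∃ n ≤ K, c * (n + 1 : ℕ) ≤ birkhoffSum T F (n + 1) x}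
  have hA : MeasurableSet A := measurableSet_exists_mul_le_birkhoffSum hT.measurable hF K
  have hG := measurable_garsiaMax (c := c) hT.measurable hF hA
  have hG_fin : ∫⁻ x, garsiaMax T F c A (K + 1) x ∂μ ≠ ∞ :=
    ((lintegral_garsiaMax_le hT hF hA _).trans_lt
      (ENNReal.mul_lt_top (by simp) hfin.lt_top)).ne
  have hstep (x : X) : garsiaMax T F c A (K + 1) x + A.indicator (fun _ => c) x
      = F x + garsiaMax T F c A K (T x) := by
    refine tsub_add_cancel_of_le (Set.indicator_apply_le' (fun hxA => ?_) fun _ => zero_le)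
    obtain ⟨n, hn, hx⟩ := hxA
    exact le_add_garsiaMax_of_mul_le_birkhoffSum hc hn hx
  refine (ENNReal.add_le_add_iff_left hG_fin).1 ?_
  calc ∫⁻ x, garsiaMax T F c A (K + 1) x ∂μ + c * μ A
      = ∫⁻ x, (F x + garsiaMax T F c A K (T x)) ∂μ := by
        simp_rw [← hstep]
        rw [lintegral_add_left (hG _), lintegral_indicator_const hA]
    _ = ∫⁻ x, F x ∂μ + ∫⁻ x, garsiaMax T F c A K x ∂μ := by
        rw [lintegral_add_left hF, hT.lintegral_comp (hG K)]
    _ ≤ ∫⁻ x, F x ∂μ + ∫⁻ x, garsiaMax T F c A (K + 1) x ∂μ := by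
        gcongr; exact garsiaMax_le_succ K _
    _ = ∫⁻ x, garsiaMax T F c A (K + 1) x ∂μ + ∫⁻ x, F x ∂μ := add_comm _ _

theorem mul_measure_lt_ergodicMaximal_le (hT : MeasurePreserving T μ μ) (hF : Measurable F)
    (hc : c ≠ ∞) : c * μ {x | c < ergodicMaximal T F x} ≤ ∫⁻ x, F x ∂μ := by
  have hsub : {x | c < ergodicMaximal T F x} ⊆
      ⋃ K : ℕ, {x | ∃ n ≤ K, c * (n + 1 : ℕ) ≤ birkhoffSum T F (n + 1) x} := fun x hx => by
    obtain ⟨n, hn⟩ := lt_iSup_iff.1 (show c < ergodicMaximal T F x from hx)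
    rw [ENNReal.lt_div_iff_mul_lt (by simp) (by simp)] at hn
    exact Set.mem_iUnion.2 ⟨n, n, le_rfl, hn.le⟩
  have hmono : Monotone fun K : ℕ => {x | ∃ n ≤ K, c * (n + 1 : ℕ) ≤ birkhoffSum T F (n + 1) x} :=
    fun K L hKL x ⟨n, hn, hx⟩ => ⟨n, hn.trans hKL, hx⟩
  calc c * μ {x | c < ergodicMaximal T F x} 
      ≤ c * μ (⋃ K : ℕ, {x | ∃ n ≤ K, c * (n + 1 : ℕ) ≤ birkhoffSum T F (n + 1) x}) := by gcongr
    _ ≤ ∫⁻ x, F x ∂μ := by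
      rw [hmono.measure_iUnion, ENNReal.mul_iSup]
      exact iSup_le fun K => mul_measure_exists_mul_le_birkhoffSum_le hT hF hc K

end ErgodicMaximal

section StrongType

variable {X : Type*} [MeasurableSpace X] {μ : Measure X} {p : ℝ}

lemma setLIntegral_Ioc_zero_ofReal_rpow_sub_two (hp : 1 < p) {a : ℝ} (ha : 0 ≤ a) :
    ∫⁻ t in Set.Ioc 0 a, ENNReal.ofReal (t ^ (p - 2)) = ENNReal.ofReal (a ^ (p - 1) / (p - 1)) := by
  have h_integrable : IntervalIntegrable (fun t : ℝ => t ^ (p - 2)) volume 0 a :=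
    intervalIntegral.intervalIntegrable_rpow' (by linarith)
  rw [← ofReal_integral_eq_lintegral_ofReal
    ((intervalIntegrable_iff_integrableOn_Ioc_of_le ha).1 h_integrable)]
  · rw [← intervalIntegral.integral_of_le ha, integral_rpow (Or.inl (by linarith)),
      show p - 2 + 1 = p - 1 by ring, Real.zero_rpow (by linarith), sub_zero]
  · filter_upwards [ae_restrict_mem measurableSet_Ioc] with t ht
    exact Real.rpow_nonneg ht.1.le _

lemma setLIntegral_Ioi_zero_rpow_mul_tsub_le (hp : 1 < p) (y : ℝ≥0∞) :
    ∫⁻ t in Set.Ioi (0 : ℝ), ENNReal.ofReal (t ^ (p - 2)) * (y - ENNReal.ofReal (t / 2)) ≤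
      ENNReal.ofReal (2 ^ (p - 1) / (p - 1)) * y ^ p := by
  have := sub_pos.2 hp
  rcases eq_or_ne y ∞ with rfl | hy
  · rw [ENNReal.top_rpow_of_pos (by linarith),
      ENNReal.mul_top (ENNReal.ofReal_pos.2 (by positivity)).ne']
    exact le_top
  lift y to ℝ≥0 using hy
  calc ∫⁻ t in Set.Ioi (0 : ℝ), ENNReal.ofReal (t ^ (p - 2)) * (y - ENNReal.ofReal (t / 2))
      ≤ ∫⁻ t in Set.Ioi (0 : ℝ),
          (Set.Ioc 0 (2 * (y : ℝ))).indicator (fun t => ENNReal.ofReal (t ^ (p - 2)) * y) t := by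
        refine setLIntegral_mono' measurableSet_Ioi fun t ht => ?_
        by_cases hty : t ≤ 2 * y
        · rw [Set.indicator_of_mem (Set.mem_Ioc.2 ⟨ht, hty⟩)]
          gcongr
          exact tsub_le_self
        · have hle : (y : ℝ≥0∞) ≤ ENNReal.ofReal (t / 2) := by
            rw [ENNReal.coe_nnreal_eq]
            exact ENNReal.ofReal_le_ofReal (by linarith)
          simp [tsub_eq_zero_of_le hle]
    _ = ENNReal.ofReal ((2 * (y : ℝ)) ^ (p - 1) / (p - 1)) * y := by
        rw [lintegral_indicator measurableSet_Ioc, Measure.restrict_restrict measurableSet_Ioc,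
          Set.inter_eq_left.2 Set.Ioc_subset_Ioi_self, lintegral_mul_const _ (by fun_prop),
          setLIntegral_Ioc_zero_ofReal_rpow_sub_two hp (by positivity)]
    _ = ENNReal.ofReal (2 ^ (p - 1) / (p - 1)) * y ^ p := by
        rw [ENNReal.coe_nnreal_eq, ← ENNReal.ofReal_mul (by positivity),
          ENNReal.ofReal_rpow_of_nonneg (by positivity) (by linarith),
          ← ENNReal.ofReal_mul (by positivity), Real.mul_rpow (by norm_num) (by positivity),
          show (y : ℝ) ^ p = y ^ (p - 1) * y by
            rw [← Real.rpow_add_one' (by positivity) (by linarith), sub_add_cancel]]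
        ring_nf

variable {M F : X → ℝ≥0∞}

lemma lintegral_iSup_rpow (hp : 0 < p) {G : ℕ → X → ℝ≥0∞} (hG : ∀ n, Measurable (G n))
    (hG_mono : Monotone G) : ∫⁻ x, (⨆ n, G n x) ^ p ∂μ = ⨆ n, ∫⁻ x, G n x ^ p ∂μ := by
  have hsup (x : X) : (⨆ n, G n x) ^ p = ⨆ n, G n x ^ p :=
    (ENNReal.orderIsoRpow p hp).map_iSup fun n => G n x
  simp_rw [hsup]
  exact lintegral_iSup (fun n => (hG n).pow_const p) fun m n hmn x =>
    ENNReal.rpow_le_rpow (hG_mono hmn x) hp.le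

lemma lintegral_rpow_le_of_forall_lintegral_min_rpow_le (hp : 0 < p) (hM : Measurable M)
    {B : ℝ≥0∞} (h : ∀ n : ℕ, ∫⁻ x, min (M x) n ^ p ∂μ ≤ B) : ∫⁻ x, M x ^ p ∂μ ≤ B := by
  have hmin (x : X) : ⨆ n : ℕ, min (M x) (n : ℝ≥0∞) = M x := by
    rw [← inf_iSup_eq, ENNReal.iSup_natCast, inf_top_eq]
  have hsup := lintegral_iSup_rpow (μ := μ) hp (G := fun (n : ℕ) x => min (M x) n)
    (fun n => hM.min measurable_const)
    (fun m n hmn x => min_le_min_left _ (Nat.cast_le.2 hmn))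
  simp only [hmin] at hsup
  exact hsup ▸ iSup_le h

lemma mul_ofReal_rpow_le_of_ofReal_half_mul_le (hF : Measurable F) {t : ℝ} (ht : 0 < t) {m : ℝ≥0∞}
    (hm : ENNReal.ofReal (t / 2) * m ≤ ∫⁻ x, (F x - ENNReal.ofReal (t / 2)) ∂μ) :
    m * ENNReal.ofReal (t ^ (p - 1)) ≤
      2 * ∫⁻ x, ENNReal.ofReal (t ^ (p - 2)) * (F x - ENNReal.ofReal (t / 2)) ∂μ := by
  have hreal : t ^ (p - 1) = 2 * t ^ (p - 2) * (t / 2) := by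
    rw [mul_comm 2, mul_assoc, mul_div_cancel₀ t two_ne_zero, ← Real.rpow_add_one ht.ne']
    ring_nf
  have hpow : ENNReal.ofReal (t ^ (p - 1)) =
      2 * ENNReal.ofReal (t ^ (p - 2)) * ENNReal.ofReal (t / 2) := by
    rw [hreal, ENNReal.ofReal_mul (by positivity), ENNReal.ofReal_mul (by norm_num),
      ENNReal.ofReal_ofNat]
  calc m * ENNReal.ofReal (t ^ (p - 1))
      = 2 * ENNReal.ofReal (t ^ (p - 2)) * (ENNReal.ofReal (t / 2) * m) := by rw [hpow]; ring
    _ ≤ 2 * ENNReal.ofReal (t ^ (p - 2)) * ∫⁻ x, (F x - ENNReal.ofReal (t / 2)) ∂μ := by gcongr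
    _ = _ := by rw [mul_assoc, lintegral_const_mul _ (hF.sub_const _)]

lemma lintegral_rpow_le_of_ne_top_of_mul_measure_lt_le [SFinite μ] (hp : 1 < p) (hM : Measurable M)
    (hM_fin : ∀ x, M x ≠ ∞) (hF : Measurable F)
    (h : ∀ t : ℝ, 0 < t → ENNReal.ofReal (t / 2) * μ {x | ENNReal.ofReal t < M x} ≤
      ∫⁻ x, (F x - ENNReal.ofReal (t / 2)) ∂μ) :
    ∫⁻ x, M x ^ p ∂μ ≤ ENNReal.ofReal (p * 2 ^ p / (p - 1)) * ∫⁻ x, F x ^ p ∂μ := by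
  have hp0 : 0 < p := by linarith
  have hM_eq (x : X) : M x ^ p = ENNReal.ofReal ((M x).toReal ^ p) := by
    rw [← ENNReal.ofReal_rpow_of_nonneg ENNReal.toReal_nonneg hp0.le,
      ENNReal.ofReal_toReal (hM_fin x)]
  have hset {t : ℝ} (ht : 0 < t) : {x | t < (M x).toReal} = {x | ENNReal.ofReal t < M x} := by
    ext x
    exact (ENNReal.ofReal_lt_iff_lt_toReal ht.le (hM_fin x)).symm
  calc ∫⁻ x, M x ^ p ∂μ
      = ENNReal.ofReal p *
          ∫⁻ t in Set.Ioi 0, μ {x | t < (M x).toReal} * ENNReal.ofReal (t ^ (p - 1)) := by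
        simp_rw [hM_eq]
        exact lintegral_rpow_eq_lintegral_meas_lt_mul μ
          (.of_forall fun _ => ENNReal.toReal_nonneg) hM.ennreal_toReal.aemeasurable hp0
    _ ≤ ENNReal.ofReal p * ∫⁻ t in Set.Ioi 0,
          2 * ∫⁻ x, ENNReal.ofReal (t ^ (p - 2)) * (F x - ENNReal.ofReal (t / 2)) ∂μ := by
        gcongr 1
        refine setLIntegral_mono' measurableSet_Ioi fun t ht => ?_
        exact mul_ofReal_rpow_le_of_ofReal_half_mul_le hF ht (hset ht ▸ h t ht)
    _ = ENNReal.ofReal p * (2 * ∫⁻ x, (∫⁻ t in Set.Ioi 0,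
          ENNReal.ofReal (t ^ (p - 2)) * (F x - ENNReal.ofReal (t / 2))) ∂μ) := by
        rw [lintegral_const_mul' _ _ (by simp), lintegral_lintegral_swap (by fun_prop)]
    _ ≤ ENNReal.ofReal p * (2 * ∫⁻ x, ENNReal.ofReal (2 ^ (p - 1) / (p - 1)) * F x ^ p ∂μ) := by
        gcongr with x
        exact setLIntegral_Ioi_zero_rpow_mul_tsub_le hp (F x)
    _ = ENNReal.ofReal (p * 2 ^ p / (p - 1)) * ∫⁻ x, F x ^ p ∂μ := by
        rw [lintegral_const_mul _ (by fun_prop), ← mul_assoc, ← mul_assoc, ← ENNReal.ofReal_ofNat 2,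
          ← ENNReal.ofReal_mul hp0.le, ← ENNReal.ofReal_mul (by positivity)]
        rw [show p * 2 * (2 ^ (p - 1) / (p - 1)) = p * 2 ^ p / (p - 1) by
          rw [show (2 : ℝ) ^ p = 2 * 2 ^ (p - 1) by
            rw [← Real.rpow_one_add' (by norm_num) (by linarith)]; ring_nf]
          ring]

variable {T : X → X}

lemma ofReal_mul_measure_lt_ergodicMaximal_le (hT : MeasurePreserving T μ μ) (hF : Measurable F)
    {t : ℝ} (ht : 0 ≤ t) :
    ENNReal.ofReal (t / 2) * μ {x | ENNReal.ofReal t < ergodicMaximal T F x} ≤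
      ∫⁻ x, (F x - ENNReal.ofReal (t / 2)) ∂μ := by
  have hsplit : ENNReal.ofReal t = ENNReal.ofReal (t / 2) + ENNReal.ofReal (t / 2) := by
    rw [← ENNReal.ofReal_add (by positivity) (by positivity), add_halves]
  calc _ ≤ ENNReal.ofReal (t / 2) * μ {x | ENNReal.ofReal (t / 2) <
        ergodicMaximal T (fun y => F y - ENNReal.ofReal (t / 2)) x} := by
        refine mul_le_mul_right (measure_mono fun x hx => ?_) _
        rw [Set.mem_ofPred_eq, hsplit] at hx
        exact lt_ergodicMaximal_tsub hx
    _ ≤ _ := mul_measure_lt_ergodicMaximal_le hT (hF.sub_const _) ENNReal.ofReal_ne_top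

theorem lintegral_ergodicMaximal_rpow_le [SFinite μ] (hp : 1 < p) (hT : MeasurePreserving T μ μ)
    (hF : Measurable F) : ∫⁻ x, ergodicMaximal T F x ^ p ∂μ ≤
      ENNReal.ofReal (p * 2 ^ p / (p - 1)) * ∫⁻ x, F x ^ p ∂μ := by
  have hM := measurable_ergodicMaximal hT.measurable hF
  refine lintegral_rpow_le_of_forall_lintegral_min_rpow_le (by linarith) hM fun n => ?_
  refine lintegral_rpow_le_of_ne_top_of_mul_measure_lt_le hp (hM.min measurable_const)
    (fun x => ((min_le_right _ _).trans_lt (ENNReal.natCast_lt_top n)).ne) hF fun t ht => ?_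
  refine le_trans ?_ (ofReal_mul_measure_lt_ergodicMaximal_le hT hF ht.le)
  gcongr
  exact min_le_left _ _

theorem eLpNorm'_ergodicMaximal_le [SFinite μ] (hp : 1 < p) (hT : MeasurePreserving T μ μ)
    (hF : Measurable F) : eLpNorm' (ergodicMaximal T F) p μ ≤
      ENNReal.ofReal (2 * p / (p - 1)) * eLpNorm' F p μ := by
  have hp0 : 0 < p := by linarith
  have hp1 : 0 < p - 1 := by linarith
  have hconst : (p * 2 ^ p / (p - 1)) ^ (1 / p) ≤ 2 * p / (p - 1) := by
    have hone : 1 ≤ p / (p - 1) := by rw [one_le_div hp1]; linarith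
    calc (p * 2 ^ p / (p - 1)) ^ (1 / p) = (p / (p - 1)) ^ (1 / p) * 2 := by
          rw [show p * 2 ^ p / (p - 1) = p / (p - 1) * 2 ^ p by ring,
            Real.mul_rpow (by positivity) (by positivity), one_div,
            Real.rpow_rpow_inv (by norm_num) hp0.ne']
      _ ≤ p / (p - 1) * 2 := by
        gcongr
        exact Real.rpow_le_self_of_one_le hone (by rw [div_le_one hp0]; exact hp.le)
      _ = 2 * p / (p - 1) := by ring
  simp only [eLpNorm', enorm_eq_self]
  calc (∫⁻ x, ergodicMaximal T F x ^ p ∂μ) ^ (1 / p)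
      ≤ (ENNReal.ofReal (p * 2 ^ p / (p - 1)) * ∫⁻ x, F x ^ p ∂μ) ^ (1 / p) := by
        gcongr; exact lintegral_ergodicMaximal_rpow_le hp hT hF
    _ = ENNReal.ofReal ((p * 2 ^ p / (p - 1)) ^ (1 / p)) * (∫⁻ x, F x ^ p ∂μ) ^ (1 / p) := by
        rw [ENNReal.mul_rpow_of_nonneg _ _ (by positivity),
          ENNReal.ofReal_rpow_of_nonneg (by positivity) (by positivity)]
    _ ≤ ENNReal.ofReal (2 * p / (p - 1)) * (∫⁻ x, F x ^ p ∂μ) ^ (1 / p) := by gcongr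

end StrongType

section RieszThorin

open ComplexConjugate

/-- The power `|w| ^ s` of a complex number carrying the phase of `w`: the building block of the
analytic families in Stein's complex interpolation. It vanishes at `w = 0` for every `s`. -/
noncomputable def phasePow (w s : ℂ) : ℂ := w / ‖w‖ * Complex.exp (s * (Real.log ‖w‖ : ℝ))

lemma phasePow_zero (s : ℂ) : phasePow 0 s = 0 := by simp [phasePow]

lemma norm_phasePow {w : ℂ} (hw : w ≠ 0) (s : ℂ) :
    ‖phasePow w s‖ = Real.exp (s.re * Real.log ‖w‖) := by
  rw [phasePow, norm_mul, norm_div, Complex.norm_real, norm_norm, div_self (norm_ne_zero_iff.2 hw),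
    one_mul, Complex.norm_exp, Complex.re_mul_ofReal]

lemma norm_phasePow_rpow (w : ℂ) {s : ℂ} {r p : ℝ} (hr : 0 < r) (hp : 0 < p) (h : s.re * r = p) :
    ‖phasePow w s‖ ^ r = ‖w‖ ^ p := by
  rcases eq_or_ne w 0 with rfl | hw
  · simp [phasePow_zero, Real.zero_rpow hr.ne', Real.zero_rpow hp.ne']
  · rw [norm_phasePow hw, ← Real.exp_mul, Real.rpow_def_of_pos (norm_pos_iff.2 hw), ← h]
    ring_nf

lemma norm_phasePow_le (w : ℂ) {s : ℂ} {A : ℝ} (h : |s.re| ≤ A) :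
    ‖phasePow w s‖ ≤ Real.exp (A * |Real.log ‖w‖|) := by
  rcases eq_or_ne w 0 with rfl | hw
  · simp [phasePow_zero]
  · rw [norm_phasePow hw, Real.exp_le_exp]
    calc s.re * Real.log ‖w‖ ≤ |s.re| * |Real.log ‖w‖| := (le_abs_self _).trans (abs_mul _ _).le
      _ ≤ A * |Real.log ‖w‖| := by gcongr

lemma phasePow_one (w : ℂ) : phasePow w 1 = w := by
  rcases eq_or_ne w 0 with rfl | hw
  · exact phasePow_zero 1
  · rw [phasePow, one_mul, ← Complex.ofReal_exp, Real.exp_log (norm_pos_iff.2 hw)]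
    exact div_mul_cancel₀ _ (by exact_mod_cast norm_ne_zero_iff.2 hw)

lemma mul_phasePow_conj (w : ℂ) {p : ℝ} (hp : 0 < p) :
    w * phasePow (conj w) ((p - 1 : ℝ) : ℂ) = ((‖w‖ ^ p : ℝ) : ℂ) := by
  rcases eq_or_ne w 0 with rfl | hw
  · simp [Real.zero_rpow hp.ne']
  · have hw0 : (‖w‖ : ℂ) ≠ 0 := by exact_mod_cast norm_ne_zero_iff.2 hw
    have hexp : Real.exp ((p - 1) * Real.log ‖w‖) = ‖w‖ ^ p / ‖w‖ := by
      rw [mul_comm, ← Real.rpow_def_of_pos (norm_pos_iff.2 hw),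
        Real.rpow_sub_one (norm_ne_zero_iff.2 hw)]
    have hsq : w * conj w = (‖w‖ : ℂ) ^ 2 := by
      rw [Complex.mul_conj, Complex.normSq_eq_norm_sq, Complex.ofReal_pow]
    rw [phasePow, RCLike.norm_conj, ← Complex.ofReal_mul, ← Complex.ofReal_exp, hexp, ← mul_assoc,
      ← mul_div_assoc, hsq]
    push_cast
    field_simp

variable {ι κ : Type*} (A : ι → κ → ℂ) (X : Finset κ) (Y : Finset ι)

/-- The matrix `A`, restricted to rows in `Y` and columns in `X`, maps `ℓ^r(X)` to `ℓ^r(Y)` with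
norm at most `B`. -/
def MatrixLpBound (r B : ℝ) : Prop :=
  ∀ f : κ → ℂ, (∑ x ∈ Y, ‖∑ y ∈ X, A x y * f y‖ ^ r) ^ (1 / r) ≤
    B * (∑ y ∈ X, ‖f y‖ ^ r) ^ (1 / r)

/-- The analytic family obtained by pairing `A (|f| ^ (p α))` with `|u| ^ (p (1 - α))`, phases
included. The Riesz–Thorin theorem is the three lines theorem for this function of `α`. -/
noncomputable def interpolationPairing (p : ℝ) (f : κ → ℂ) (u : ι → ℂ) (α : ℂ) : ℂ :=
  ∑ x ∈ Y, (∑ y ∈ X, A x y * phasePow (f y) (p * α)) * phasePow (conj (u x)) (p * (1 - α))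

variable {A X Y}

lemma MatrixLpBound.norm_pairing_le {r B : ℝ} (h : MatrixLpBound A X Y r B) (hr : 1 < r)
    (f : κ → ℂ) (g : ι → ℂ) :
    ‖∑ x ∈ Y, (∑ y ∈ X, A x y * f y) * g x‖ ≤
      B * (∑ y ∈ X, ‖f y‖ ^ r) ^ (1 / r) * (∑ x ∈ Y, ‖g x‖ ^ (r / (r - 1))) ^ (1 - 1 / r) := by
  have hconj : r.HolderConjugate (r / (r - 1)) := by
    rw [Real.holderConjugate_iff_eq_conjExponent hr]
  have holder := Real.inner_le_Lp_mul_Lq Y (fun x => ‖∑ y ∈ X, A x y * f y‖) (fun x => ‖g x‖) hconj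
  have hexp : 1 / (r / (r - 1)) = 1 - 1 / r := by
    have : r ≠ 0 := by positivity
    field_simp
  simp only [abs_norm, hexp] at holder
  calc ‖∑ x ∈ Y, (∑ y ∈ X, A x y * f y) * g x‖
      ≤ ∑ x ∈ Y, ‖∑ y ∈ X, A x y * f y‖ * ‖g x‖ := by
        simpa only [norm_mul] using norm_sum_le Y fun x => (∑ y ∈ X, A x y * f y) * g x
    _ ≤ _ := holder
    _ ≤ _ := by gcongr; exact h f

lemma MatrixLpBound.norm_interpolationPairing_le {r B p : ℝ} (h : MatrixLpBound A X Y r B)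
    (hr : 1 < r) (hp : 0 < p) (f : κ → ℂ) (u : ι → ℂ) {α : ℂ} (hα : α.re = 1 / r) :
    ‖interpolationPairing A X Y p f u α‖ ≤
      B * (∑ y ∈ X, ‖f y‖ ^ p) ^ (1 / r) * (∑ x ∈ Y, ‖u x‖ ^ p) ^ (1 - 1 / r) := by
  have hr0 : 0 < r := by positivity
  have hr1 : 0 < r - 1 := sub_pos.2 hr
  have hf : ∑ y ∈ X, ‖phasePow (f y) (p * α)‖ ^ r = ∑ y ∈ X, ‖f y‖ ^ p :=
    sum_congr rfl fun y _ => norm_phasePow_rpow _ hr0 hp <| by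
      rw [Complex.re_ofReal_mul, hα]
      field_simp
  have hu : ∑ x ∈ Y, ‖phasePow (conj (u x)) (p * (1 - α))‖ ^ (r / (r - 1)) =
      ∑ x ∈ Y, ‖u x‖ ^ p :=
    sum_congr rfl fun x _ => by
      rw [← RCLike.norm_conj (u x)]
      refine norm_phasePow_rpow _ (by positivity) hp ?_
      rw [Complex.re_ofReal_mul, Complex.sub_re, hα, Complex.one_re]
      field_simp
  simpa only [interpolationPairing, hf, hu] using
    h.norm_pairing_le hr (fun y => phasePow (f y) (p * α))
      fun x => phasePow (conj (u x)) (p * (1 - α))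

lemma norm_interpolationPairing_le_of_re_mem_Icc {p : ℝ} (hp : 0 ≤ p) (f : κ → ℂ) (u : ι → ℂ)
    {α : ℂ} (hα : α.re ∈ Set.Icc 0 1) :
    ‖interpolationPairing A X Y p f u α‖ ≤
      ∑ x ∈ Y, (∑ y ∈ X, ‖A x y‖ * Real.exp (p * |Real.log ‖f y‖|)) *
        Real.exp (p * |Real.log ‖conj (u x)‖|) := by
  have hre : ∀ β : ℂ, 0 ≤ β.re → β.re ≤ 1 → |(p * β : ℂ).re| ≤ p := fun β h0 h1 => by
    rw [Complex.re_ofReal_mul, abs_of_nonneg (by positivity)]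
    exact mul_le_of_le_one_right hp h1
  refine norm_sum_le_of_le _ fun x _ => ?_
  rw [norm_mul]
  gcongr
  · refine norm_sum_le_of_le _ fun y _ => ?_
    rw [norm_mul]
    gcongr
    exact norm_phasePow_le _ (hre _ hα.1 hα.2)
  · exact norm_phasePow_le _ (hre _ (by simp [hα.2]) (by simp [hα.1]))

lemma interpolationPairing_one_div {p : ℝ} (hp : 0 < p) (f : κ → ℂ) :
    interpolationPairing A X Y p f (fun x => ∑ y ∈ X, A x y * f y) ((1 / p : ℝ) : ℂ) =
      ((∑ x ∈ Y, ‖∑ y ∈ X, A x y * f y‖ ^ p : ℝ) : ℂ) := by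
  have hp1 : (p : ℂ) * ((1 / p : ℝ) : ℂ) = 1 := by
    rw [← Complex.ofReal_mul, mul_one_div_cancel hp.ne', Complex.ofReal_one]
  have hp2 : (p : ℂ) * (1 - ((1 / p : ℝ) : ℂ)) = ((p - 1 : ℝ) : ℂ) := by
    rw [mul_sub, hp1, mul_one, Complex.ofReal_sub, Complex.ofReal_one]
  rw [interpolationPairing, Complex.ofReal_sum, hp1, hp2]
  refine sum_congr rfl fun x _ => ?_
  simp only [phasePow_one]
  exact mul_phasePow_conj _ hp

lemma MatrixLpBound.norm_interpolationPairing_le_interp {p₀ p₁ B₀ B₁ p θ : ℝ}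
    (h₀ : MatrixLpBound A X Y p₀ B₀) (h₁ : MatrixLpBound A X Y p₁ B₁) (hp₀ : 1 < p₀) (hp₁ : 1 < p₁)
    (hp : 0 < p) (hθ : θ ∈ Set.Icc 0 1) (f : κ → ℂ) (u : ι → ℂ) :
    ‖interpolationPairing A X Y p f u (((1 - θ) / p₀ + θ / p₁ : ℝ) : ℂ)‖ ≤
      (B₀ * (∑ y ∈ X, ‖f y‖ ^ p) ^ (1 / p₀) * (∑ x ∈ Y, ‖u x‖ ^ p) ^ (1 - 1 / p₀)) ^ (1 - θ) *
      (B₁ * (∑ y ∈ X, ‖f y‖ ^ p) ^ (1 / p₁) * (∑ x ∈ Y, ‖u x‖ ^ p) ^ (1 - 1 / p₁)) ^ θ := by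
  set α : ℂ → ℂ := fun z => (1 - z) * ((1 / p₀ : ℝ) : ℂ) + z * ((1 / p₁ : ℝ) : ℂ) with hα
  have hα_re : ∀ z, (α z).re = (1 - z.re) * (1 / p₀) + z.re * (1 / p₁) := fun z => by
    simp only [hα, Complex.add_re, Complex.re_mul_ofReal, Complex.sub_re, Complex.one_re]
  have hα_mem : ∀ z : ℂ, z.re ∈ Set.Icc 0 1 → (α z).re ∈ Set.Icc 0 1 := fun z hz => by
    have hinv : ∀ r : ℝ, 1 < r → 1 / r ∈ Set.Icc (0 : ℝ) 1 := fun r hr =>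
      ⟨by positivity, (div_le_one (by positivity)).2 hr.le⟩
    rw [hα_re]
    exact convex_Icc (0 : ℝ) 1 (hinv p₀ hp₀) (hinv p₁ hp₁) (sub_nonneg.2 hz.2) hz.1 (by ring)
  have hdiff : Differentiable ℂ fun z => interpolationPairing A X Y p f u (α z) := by
    simp only [interpolationPairing, phasePow, hα]
    fun_prop
  have three_lines := Complex.HadamardThreeLines.norm_le_interp_of_mem_verticalClosedStrip₀₁' _
    (z := (θ : ℂ)) (by simpa [Complex.HadamardThreeLines.verticalClosedStrip] using hθ)
    hdiff.diffContOnCl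
    ⟨_, Set.forall_mem_image.2 fun z hz =>
      norm_interpolationPairing_le_of_re_mem_Icc hp.le f u (hα_mem z hz)⟩
    (fun z hz => h₀.norm_interpolationPairing_le hp₀ hp f u (by
      rw [hα_re, show z.re = 0 from hz]; ring))
    (fun z hz => h₁.norm_interpolationPairing_le hp₁ hp f u (by
      rw [hα_re, show z.re = 1 from hz]; ring))
  have hαθ : α θ = (((1 - θ) / p₀ + θ / p₁ : ℝ) : ℂ) := by
    simp only [hα]
    push_cast
    ring
  simpa only [hαθ, Complex.ofReal_re] using three_lines

lemma rpow_interp_mul_rpow_interp {a b : ℝ} (ha : 0 < a) (hb : 0 < b) {B₀ B₁ : ℝ} (hB₀ : 0 ≤ B₀)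
    (hB₁ : 0 ≤ B₁) {s₀ s₁ s θ : ℝ} (hs : s = (1 - θ) * s₀ + θ * s₁) :
    (B₀ * a ^ s₀ * b ^ (1 - s₀)) ^ (1 - θ) * (B₁ * a ^ s₁ * b ^ (1 - s₁)) ^ θ =
      B₀ ^ (1 - θ) * B₁ ^ θ * a ^ s * b ^ (1 - s) := by
  have split_a : a ^ s = a ^ (s₀ * (1 - θ)) * a ^ (s₁ * θ) := by
    rw [← Real.rpow_add ha, hs]
    ring_nf
  have split_b : b ^ (1 - s) = b ^ ((1 - s₀) * (1 - θ)) * b ^ ((1 - s₁) * θ) := by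
    rw [← Real.rpow_add hb, hs]
    ring_nf
  rw [Real.mul_rpow (by positivity) (by positivity), Real.mul_rpow hB₀ (by positivity),
    Real.mul_rpow (by positivity) (by positivity), Real.mul_rpow hB₁ (by positivity),
    ← Real.rpow_mul ha.le, ← Real.rpow_mul ha.le, ← Real.rpow_mul hb.le, ← Real.rpow_mul hb.le,
    split_a, split_b]
  ring

lemma sum_mul_eq_zero_of_sum_norm_rpow_eq_zero {p : ℝ} (hp : 0 < p) {f : κ → ℂ}
    (hf : ∑ y ∈ X, ‖f y‖ ^ p = 0) (x : ι) : ∑ y ∈ X, A x y * f y = 0 := by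
  refine sum_eq_zero fun y hy => ?_
  have := (sum_eq_zero_iff_of_nonneg fun y _ => by positivity).1 hf y hy
  rw [Real.rpow_eq_zero (norm_nonneg _) hp.ne', norm_eq_zero] at this
  rw [this, mul_zero]

theorem MatrixLpBound.interp {p₀ p₁ p θ B₀ B₁ : ℝ} (h₀ : MatrixLpBound A X Y p₀ B₀)
    (h₁ : MatrixLpBound A X Y p₁ B₁) (hp₀ : 1 < p₀) (hp₁ : 1 < p₁) (hp : 0 < p)
    (hθ : θ ∈ Set.Icc 0 1) (hpθ : 1 / p = (1 - θ) / p₀ + θ / p₁) (hB₀ : 0 ≤ B₀) (hB₁ : 0 ≤ B₁) :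
    MatrixLpBound A X Y p (B₀ ^ (1 - θ) * B₁ ^ θ) := by
  intro f
  set a : ℝ := ∑ y ∈ X, ‖f y‖ ^ p
  set b : ℝ := ∑ x ∈ Y, ‖∑ y ∈ X, A x y * f y‖ ^ p with hb
  have ha0 : 0 ≤ a := by positivity
  have hb0 : 0 ≤ b := by positivity
  rcases hb0.eq_or_lt with hbz | hbpos
  · rw [← hbz, Real.zero_rpow (by positivity)]
    positivity
  rcases ha0.eq_or_lt with haz | hapos
  · refine absurd (hb.trans (sum_eq_zero fun x _ => ?_)) hbpos.ne'
    rw [sum_mul_eq_zero_of_sum_norm_rpow_eq_zero hp haz.symm, norm_zero, Real.zero_rpow hp.ne']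
  have hb_le : b ≤ B₀ ^ (1 - θ) * B₁ ^ θ * a ^ (1 / p) * b ^ (1 - 1 / p) := by
    have := h₀.norm_interpolationPairing_le_interp h₁ hp₀ hp₁ hp hθ f fun x => ∑ y ∈ X, A x y * f y
    rwa [← hpθ, interpolationPairing_one_div hp, Complex.norm_real, Real.norm_of_nonneg hb0,
      rpow_interp_mul_rpow_interp hapos hbpos hB₀ hB₁ (hpθ.trans (by ring))] at this
  have hb_split : b = b ^ (1 / p) * b ^ (1 - 1 / p) := by
    rw [← Real.rpow_add hbpos, add_sub_cancel, Real.rpow_one]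
  exact le_of_mul_le_mul_right (hb_split.symm.trans_le hb_le) (Real.rpow_pos_of_pos hbpos _)

end RieszThorin

section MaximalInterpolation

lemma sum_apply_single_mul {α : Type*} [DecidableEq α] (L : (α → ℂ) →ₗ[ℂ] (α → ℂ))
    (X : Finset α) (g : α → ℂ) (x : α) :
    ∑ y ∈ X, L (Pi.single y 1) x * g y = L (fun y => if y ∈ X then g y else 0) x := by
  have hg : (fun y => if y ∈ X then g y else 0) = ∑ y ∈ X, g y • (Pi.single y 1 : α → ℂ) := by
    ext z
    simp [Finset.sum_apply, Pi.single_apply]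
  simp only [hg, map_sum, map_smul, Finset.sum_apply, Pi.smul_apply, smul_eq_mul, mul_comm]

variable {α : Type*} [MeasurableSpace α] [MeasurableSingletonClass α]

lemma eLpNorm'_count {ε : Type*} [ENorm ε] (f : α → ε) (p : ℝ) :
    eLpNorm' f p .count = (∑' x, ‖f x‖ₑ ^ p) ^ (1 / p) := by
  rw [eLpNorm'_eq_lintegral_enorm, lintegral_count]

lemma eLpNorm'_count_le_iff {ε : Type*} [ENorm ε] {f : α → ε} {p : ℝ} (hp : 0 < p) {B : ℝ≥0∞} :
    eLpNorm' f p .count ≤ B ↔ ∀ Y : Finset α, (∑ x ∈ Y, ‖f x‖ₑ ^ p) ^ (1 / p) ≤ B := by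
  simp only [eLpNorm'_count, one_div, ENNReal.rpow_inv_le_iff hp, ENNReal.tsum_eq_iSup_sum,
    iSup_le_iff]

lemma sum_enorm_rpow_eq_ofReal {ι E : Type*} [SeminormedAddGroup E] (g : ι → E) {p : ℝ}
    (hp : 0 ≤ p) (Y : Finset ι) :
    (∑ x ∈ Y, ‖g x‖ₑ ^ p) ^ (1 / p) = ENNReal.ofReal ((∑ x ∈ Y, ‖g x‖ ^ p) ^ (1 / p)) := by
  rw [← ENNReal.ofReal_rpow_of_nonneg (by positivity) (by positivity),
    ENNReal.ofReal_sum_of_nonneg fun x _ => by positivity]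
  simp only [← ENNReal.ofReal_rpow_of_nonneg (norm_nonneg _) hp, ofReal_norm]

lemma eLpNorm'_count_eq_ofReal {E : Type*} [NormedAddGroup E] {g : α → E} {p : ℝ} (hp : 0 < p)
    {X : Finset α} (hX : ∀ x ∉ X, g x = 0) :
    eLpNorm' g p .count = ENNReal.ofReal ((∑ x ∈ X, ‖g x‖ ^ p) ^ (1 / p)) := by
  rw [eLpNorm'_count, ← sum_enorm_rpow_eq_ofReal g hp.le,
    tsum_eq_sum fun x hx => by simp [hX x hx, hp]]

lemma exists_finset_forall_notMem_eq_zero {β M : Type*} [Zero M] {f : β → M}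
    (hf : f.HasFiniteSupport) : ∃ S : Finset β, ∀ x ∉ S, f x = 0 :=
  ⟨Set.Finite.toFinset hf, fun _ hx =>
    Function.notMem_support.1 fun h => hx ((Set.Finite.mem_toFinset hf).2 h)⟩

/-- The maximal operator `f ↦ sup_{i ∈ s} |T i f|` has `ℓ^p` norm at most `B` on finitely
supported functions. -/
def MaximalBound {ι : Type*} (T : ι → (α → ℂ) →ₗ[ℂ] (α → ℂ)) (s : Finset ι) (p B : ℝ) : Prop :=
  ∀ f : α → ℂ, f.HasFiniteSupport →
    eLpNorm' (fun x => ⨆ i ∈ s, ‖T i f x‖ₑ) p .count ≤ ENNReal.ofReal B * eLpNorm' f p .count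

variable {ι : Type*} {T : ι → (α → ℂ) →ₗ[ℂ] (α → ℂ)} {s : Finset ι}

lemma MaximalBound.matrixLpBound [DecidableEq α] {p B : ℝ} (hT : MaximalBound T s p B) (hp : 0 < p)
    (hB : 0 ≤ B) {σ : α → ι} (hσ : ∀ x, σ x ∈ s) (X Y : Finset α) :
    MatrixLpBound (fun x y => T (σ x) (Pi.single y 1) x) X Y p B := by
  intro g
  set g' : α → ℂ := fun y => if y ∈ X then g y else 0 with hg'
  have hg'X : ∀ x ∉ X, g' x = 0 := fun x hx => if_neg hx
  have hmax := hT g' (X.finite_toSet.subset (Function.support_subset_iff'.2 hg'X))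
  rw [eLpNorm'_count_eq_ofReal hp hg'X, ← ENNReal.ofReal_mul hB] at hmax
  have hlin : (∑ x ∈ Y, ‖T (σ x) g' x‖ₑ ^ p) ^ (1 / p) ≤
      ENNReal.ofReal (B * (∑ x ∈ X, ‖g' x‖ ^ p) ^ (1 / p)) := by
    refine le_trans ?_ ((eLpNorm'_count_le_iff hp).1 hmax Y)
    gcongr with x
    exact le_iSup₂_of_le (f := fun i (_ : i ∈ s) => ‖T i g' x‖ₑ) (σ x) (hσ x) le_rfl
  rw [sum_enorm_rpow_eq_ofReal _ hp.le, ENNReal.ofReal_le_ofReal_iff (by positivity)] at hlin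
  have hsum : ∑ x ∈ X, ‖g' x‖ ^ p = ∑ x ∈ X, ‖g x‖ ^ p :=
    sum_congr rfl fun x hx => by simp only [hg', if_pos hx]
  simpa only [sum_apply_single_mul, ← hsum] using hlin

-- Choosing at each point an index attaining the maximum reduces to a single linear operator.
theorem MaximalBound.interp {p₀ p₁ p θ B₀ B₁ : ℝ} (h₀ : MaximalBound T s p₀ B₀)
    (h₁ : MaximalBound T s p₁ B₁) (hp₀ : 1 < p₀) (hp₁ : 1 < p₁) (hp : 0 < p)
    (hθ : θ ∈ Set.Icc 0 1) (hpθ : 1 / p = (1 - θ) / p₀ + θ / p₁) (hB₀ : 0 ≤ B₀) (hB₁ : 0 ≤ B₁) :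
    MaximalBound T s p (B₀ ^ (1 - θ) * B₁ ^ θ) := by
  classical
  intro f hf
  rcases s.eq_empty_or_nonempty with rfl | hs
  · simp [eLpNorm'_count, hp]
  choose σ hσ hσ_max using fun x => s.exists_max_image (fun i => ‖T i f x‖ₑ) hs
  have hsup : ∀ x, (⨆ i ∈ s, ‖T i f x‖ₑ) = ‖T (σ x) f x‖ₑ := fun x =>
    le_antisymm (iSup₂_le (hσ_max x)) (le_iSup₂_of_le (σ x) (hσ x) le_rfl)
  obtain ⟨X, hf_supp⟩ := exists_finset_forall_notMem_eq_zero hf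
  have hf_restrict : (fun y => if y ∈ X then f y else 0) = f := by
    ext y
    exact ite_eq_left_iff.2 fun hy => (hf_supp y hy).symm
  simp only [hsup]
  refine (eLpNorm'_count_le_iff hp).2 fun Y => ?_
  have hmatrix := (h₀.matrixLpBound (by linarith) hB₀ hσ X Y).interp
    (h₁.matrixLpBound (by linarith) hB₁ hσ X Y) hp₀ hp₁ hp hθ hpθ hB₀ hB₁ f
  simp only [sum_apply_single_mul, hf_restrict] at hmatrix
  simp only [enorm_eq_self]
  rw [sum_enorm_rpow_eq_ofReal _ hp.le, eLpNorm'_count_eq_ofReal hp hf_supp,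
    ← ENNReal.ofReal_mul (by positivity)]
  exact ENNReal.ofReal_le_ofReal hmatrix

end MaximalInterpolation

section Fourier

open AddCircle

/-- The trigonometric series `Σ_n a n e(n t)`; it is used for finitely supported `a`. -/
noncomputable def trigSum (a : ℤ → ℂ) (t : UnitAddCircle) : ℂ := ∑' n, a n * fourier n t

lemma summable_mul_fourier {a : ℤ → ℂ} (ha : a.HasFiniteSupport) (t : UnitAddCircle) :
    Summable fun n => a n * fourier n t :=
  summable_of_hasFiniteSupport (ha.subset (Function.support_mul_subset_left _ _))

lemma continuous_trigSum {a : ℤ → ℂ} (ha : a.HasFiniteSupport) : Continuous (trigSum a) := by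
  obtain ⟨S, hS⟩ := exists_finset_forall_notMem_eq_zero ha
  have : trigSum a = fun t => ∑ n ∈ S, a n * fourier n t :=
    funext fun t => tsum_eq_sum fun n hn => by rw [hS n hn, zero_mul]
  rw [this]
  fun_prop

lemma eLpNorm'_trigSum {a : ℤ → ℂ} (ha : a.HasFiniteSupport) :
    eLpNorm' (trigSum a) 2 haarAddCircle = eLpNorm' a 2 .count := by
  obtain ⟨S, ha_supp⟩ := exists_finset_forall_notMem_eq_zero ha
  have htrig : trigSum a = ⇑(∑ n ∈ S, a n • fourier n : C(UnitAddCircle, ℂ)) := by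
    ext t
    simp only [trigSum, ContinuousMap.coe_sum, Finset.sum_apply, ContinuousMap.coe_smul,
      Pi.smul_apply, smul_eq_mul]
    exact tsum_eq_sum fun n hn => by rw [ha_supp n hn, zero_mul]
  have hLp : eLpNorm (trigSum a) 2 haarAddCircle = ‖∑ n ∈ S, a n • fourierLp (T := 1) 2 n‖ₑ := by
    simp only [fourierLp, ← map_smul, ← map_sum]
    rw [Lp.enorm_def, htrig]
    exact eLpNorm_congr_ae (ContinuousMap.coeFn_toLp haarAddCircle _).symm
  have hortho : ‖∑ n ∈ S, a n • fourierLp (T := 1) 2 n‖ ^ 2 = ∑ n ∈ S, ‖a n‖ ^ 2 := by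
    rw [← inner_self_eq_norm_sq (𝕜 := ℂ), orthonormal_fourier.inner_sum]
    simp [RCLike.conj_mul, ← Complex.ofReal_pow, ← Complex.ofReal_sum]
  rw [eLpNorm'_count_eq_ofReal two_pos ha_supp, ← Real.sqrt_eq_rpow]
  simp only [Real.rpow_two]
  rw [← hortho, Real.sqrt_sq (norm_nonneg _), ofReal_norm, ← hLp]
  simp [eLpNorm_eq_eLpNorm']

lemma trigSum_comp_add {a : ℤ → ℂ} (v : ℤ) (t : UnitAddCircle) :
    trigSum (fun x => a (x + v)) t = fourier (-v) t * trigSum a t := by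
  rw [trigSum, trigSum, ← tsum_mul_left, ← (Equiv.addRight v).tsum_eq fun y => _ * (a y * _)]
  refine tsum_congr fun x => ?_
  rw [mul_left_comm, ← fourier_add, Equiv.coe_addRight, neg_add_eq_sub, add_sub_cancel_right]

theorem eLpNorm'_two_sum_mul_comp_add_le {ι : Type*} {I : Finset ι} {h : ι → ℂ} {v : ι → ℤ} {B : ℝ}
    (hB : ∀ t : UnitAddCircle, ‖∑ i ∈ I, h i * fourier (v i) t‖ ≤ B) {f : ℤ → ℂ}
    (hf : f.HasFiniteSupport) :
    eLpNorm' (fun x => ∑ i ∈ I, h i * f (x + v i)) 2 .count ≤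
      ENNReal.ofReal B * eLpNorm' f 2 .count := by
  have hshift : ∀ i, (fun x => f (x + v i)).HasFiniteSupport := fun i =>
    hf.comp_of_injective (add_left_injective (v i))
  have hsupp : (fun x => ∑ i ∈ I, h i * f (x + v i)).HasFiniteSupport :=
    .sum (fun i => (hshift i).subset (Function.support_mul_subset_right _ _)) I
  have hsymbol : ∀ t, trigSum (fun x => ∑ i ∈ I, h i * f (x + v i)) t =
      (∑ i ∈ I, h i * fourier (v i) (-t)) * trigSum f t := fun t => by
    simp only [trigSum, sum_mul, mul_assoc]
    rw [Summable.tsum_finsetSum fun i _ => (summable_mul_fourier (hshift i) t).mul_left (h i)]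
    refine sum_congr rfl fun i _ => ?_
    rw [tsum_mul_left]
    simpa [trigSum, fourier_apply] using congr(h i * $(trigSum_comp_add (a := f) (v i) t))
  rw [← eLpNorm'_trigSum hsupp, ← eLpNorm'_trigSum hf]
  refine eLpNorm'_le_mul_eLpNorm'_of_ae_le_mul
    (continuous_trigSum hf).aestronglyMeasurable (.of_forall fun t => ?_) two_pos
  rw [hsymbol, enorm_mul, ← ofReal_norm]
  gcongr
  exact hB (-t)

end Fourier

section ExponentialSums

open AddCircle

lemma exists_coe_eq_abs_eq_norm (t : UnitAddCircle) :
    ∃ x : ℝ, (x : UnitAddCircle) = t ∧ |x| = ‖t‖ := by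
  induction t using QuotientAddGroup.induction_on with
  | H y =>
    refine ⟨y - round y, ?_, UnitAddCircle.norm_eq.symm⟩
    rw [QuotientAddGroup.mk_sub, sub_eq_self]
    simp

lemma norm_fourier_apply (n : ℤ) (t : UnitAddCircle) : ‖fourier n t‖ = 1 := Circle.norm_coe _

lemma norm_toCircle_sub_one (t : UnitAddCircle) :
    ‖(toCircle t : ℂ) - 1‖ = 2 * |Real.sin (Real.pi * ‖t‖)| := by
  obtain ⟨x, rfl, hx⟩ := exists_coe_eq_abs_eq_norm t
  have hexp : (toCircle (x : UnitAddCircle) : ℂ) =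
      Complex.exp (Complex.I * ((2 * Real.pi * x : ℝ) : ℂ)) := by
    rw [← fourier_one, fourier_coe_apply]
    push_cast
    ring_nf
  have hsin : |Real.sin (Real.pi * |x|)| = |Real.sin (Real.pi * x)| := by
    rcases abs_choice x with h | h <;> simp [h]
  rw [hexp, Complex.norm_exp_I_mul_ofReal_sub_one, ← hx, hsin, norm_mul, Real.norm_eq_abs,
    Real.norm_eq_abs, abs_two]
  ring_nf

lemma norm_toCircle_sub_one_le (t : UnitAddCircle) : ‖(toCircle t : ℂ) - 1‖ ≤ 7 * ‖t‖ := by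
  have hsin := Real.abs_sin_le_abs (x := Real.pi * ‖t‖)
  rw [abs_mul, abs_of_pos Real.pi_pos, abs_norm] at hsin
  rw [norm_toCircle_sub_one]
  nlinarith [Real.pi_lt_d2, norm_nonneg t]

lemma le_norm_toCircle_sub_one (t : UnitAddCircle) : 4 * ‖t‖ ≤ ‖(toCircle t : ℂ) - 1‖ := by
  have hhalf : ‖t‖ ≤ 1 / 2 := by simpa using norm_le_half_period 1 one_ne_zero (x := t)
  have hsin := Real.mul_abs_le_abs_sin (x := Real.pi * ‖t‖) (by
    rw [abs_mul, abs_of_pos Real.pi_pos, abs_norm]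
    nlinarith [Real.pi_pos])
  rw [abs_mul, abs_of_pos Real.pi_pos, abs_norm] at hsin
  rw [norm_toCircle_sub_one]
  calc 4 * ‖t‖ = 2 * (2 / Real.pi * (Real.pi * ‖t‖)) := by
        have := Real.pi_ne_zero
        field_simp
        ring
    _ ≤ _ := by gcongr

lemma fourier_natCast (k : ℕ) (t : UnitAddCircle) : fourier k t = (toCircle t : ℂ) ^ k := by
  rw [fourier_apply, natCast_zsmul, toCircle_nsmul, Circle.coe_pow]

lemma sum_Icc_one_eq_sum_range {M : Type*} [AddCommMonoid M] (g : ℕ → M) (K : ℕ) :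
    ∑ k ∈ Icc 1 K, g k = ∑ k ∈ range K, g (k + 1) := by
  rw [range_eq_Ico, sum_Ico_add', zero_add]
  rfl

lemma norm_mul_norm_sum_fourier_le_one (t : UnitAddCircle) (K : ℕ) :
    ‖t‖ * ‖∑ k ∈ Icc 1 K, fourier (k : ℤ) t‖ ≤ 1 := by
  have hgeom : (∑ k ∈ Icc 1 K, fourier (k : ℤ) t) * (toCircle t - 1) =
      toCircle t * ((toCircle t : ℂ) ^ K - 1) := by
    rw [← geom_sum_mul, ← mul_assoc, mul_sum, sum_Icc_one_eq_sum_range]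
    simp only [fourier_natCast, pow_succ']
  have hnorm : ‖∑ k ∈ Icc 1 K, fourier (k : ℤ) t‖ * ‖(toCircle t : ℂ) - 1‖ ≤ 2 := by
    rw [← norm_mul, hgeom, norm_mul, Circle.norm_coe, one_mul]
    refine (norm_sub_le _ _).trans ?_
    rw [norm_pow, Circle.norm_coe, one_pow, norm_one, one_add_one_eq_two]
  nlinarith [le_norm_toCircle_sub_one t, norm_nonneg (∑ k ∈ Icc 1 K, fourier (k : ℤ) t)]

lemma sum_range_mul_eq_sum_sum {M : Type*} [AddCommMonoid M] (g : ℕ → M) (d K : ℕ) :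
    ∑ n ∈ range (K * d), g n = ∑ k ∈ range K, ∑ r ∈ range d, g (k * d + r) := by
  induction K with
  | zero => simp
  | succ K ih => rw [sum_range_succ, ← ih, add_mul, one_mul, sum_range_add]

lemma norm_fourier_add_sub_fourier_le (n : ℤ) (m : ℕ) (v : UnitAddCircle) :
    ‖fourier (n + m) v - fourier n v‖ ≤ 7 * (m * ‖v‖) := by
  rw [fourier_add, ← mul_sub_one, norm_mul, norm_fourier_apply, one_mul, fourier_apply,
    natCast_zsmul]
  refine (norm_toCircle_sub_one_le _).trans ?_
  gcongr
  exact norm_nsmul_le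

lemma norm_fourier_sub_fourier_le_of_lt (k : ℕ) {d r : ℕ} (hr : r < d) (v : UnitAddCircle) :
    ‖fourier (((k + 1) * d : ℕ) : ℤ) v - fourier ((k * d + r + 1 : ℕ) : ℤ) v‖ ≤ 7 * (d * ‖v‖) := by
  have hsplit : (((k + 1) * d : ℕ) : ℤ) = ((k * d + r + 1 : ℕ) : ℤ) + (d - (r + 1) : ℕ) := by
    rw [← Nat.cast_add]
    congr 1
    rw [add_mul]
    omega
  rw [hsplit]
  refine (norm_fourier_add_sub_fourier_le _ _ _).trans ?_
  gcongr
  omega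

-- Compare the progression of multiples of `d` with all integers, one block of length `d` at a time.
lemma norm_mul_sum_fourier_nsmul_sub_le (v : UnitAddCircle) (N : ℕ) {d : ℕ} (hd : 0 < d) :
    ‖(d : ℂ) * ∑ k ∈ Icc 1 (N / d), fourier (k : ℤ) (d • v) - ∑ n ∈ Icc 1 N, fourier (n : ℤ) v‖ ≤
      d + N * (7 * (d * ‖v‖)) := by
  have hrest : N - N / d * d ≤ d := by
    have := Nat.lt_div_mul_add (a := N) hd
    omega
  set K := N / d
  have hKN : K * d ≤ N := Nat.div_mul_le_self N d
  have hall : ∑ n ∈ Icc 1 N, fourier (n : ℤ) v =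
      ∑ k ∈ range K, ∑ r ∈ range d, fourier ((k * d + r + 1 : ℕ) : ℤ) v +
        ∑ r ∈ range (N - K * d), fourier ((K * d + r + 1 : ℕ) : ℤ) v := by
    rw [sum_Icc_one_eq_sum_range, ← sum_range_mul_eq_sum_sum fun n => fourier ((n + 1 : ℕ) : ℤ) v,
      ← sum_range_add fun n => fourier ((n + 1 : ℕ) : ℤ) v, Nat.add_sub_cancel' hKN]
  have hmult : (d : ℂ) * ∑ k ∈ Icc 1 K, fourier (k : ℤ) (d • v) =
      ∑ k ∈ range K, ∑ _r ∈ range d, fourier (((k + 1) * d : ℕ) : ℤ) v := by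
    rw [sum_Icc_one_eq_sum_range, mul_sum]
    simp only [sum_const, card_range, nsmul_eq_mul, fourier_apply, natCast_zsmul, mul_smul]
  have hblocks : ‖∑ k ∈ range K, ∑ r ∈ range d,
      (fourier (((k + 1) * d : ℕ) : ℤ) v - fourier ((k * d + r + 1 : ℕ) : ℤ) v)‖ ≤
        ∑ _k ∈ range K, ∑ _r ∈ range d, 7 * (d * ‖v‖) := by
    refine norm_sum_le_of_le _ fun k _ => norm_sum_le_of_le _ fun r hr => ?_
    exact norm_fourier_sub_fourier_le_of_lt k (mem_range.1 hr) v
  have htail : ‖∑ r ∈ range (N - K * d), fourier ((K * d + r + 1 : ℕ) : ℤ) v‖ ≤ d := by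
    refine (norm_sum_le _ _).trans ?_
    simpa only [norm_fourier_apply, sum_const, card_range, nsmul_eq_mul, mul_one, Nat.cast_le]
  have hblocks' : ∑ _k ∈ range K, ∑ _r ∈ range d, 7 * (d * ‖v‖) ≤ N * (7 * (d * ‖v‖)) := by
    simp only [sum_const, card_range, nsmul_eq_mul]
    rw [← mul_assoc]
    gcongr
    exact_mod_cast hKN
  simp only [sum_sub_distrib] at hblocks
  rw [hall, hmult, ← sub_sub]
  linarith [norm_sub_le (∑ k ∈ range K, ∑ _r ∈ range d, fourier (((k + 1) * d : ℕ) : ℤ) v -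
    ∑ k ∈ range K, ∑ r ∈ range d, fourier ((k * d + r + 1 : ℕ) : ℤ) v)
    (∑ r ∈ range (N - K * d), fourier ((K * d + r + 1 : ℕ) : ℤ) v)]

lemma sum_Icc_filter_dvd {M : Type*} [AddCommMonoid M] (g : ℕ → M) (d N : ℕ) :
    ∑ n ∈ Icc 1 N with d ∣ n, g n = ∑ k ∈ Icc 1 (N / d), g (k * d) := by
  rcases d.eq_zero_or_pos with rfl | hd
  · simp [sum_filter, sum_eq_zero]
  have himage : {n ∈ Icc 1 N | d ∣ n} = (Icc 1 (N / d)).image (· * d) := by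
    ext n
    simp only [mem_filter, mem_image, mem_Icc, Nat.le_div_iff_mul_le hd]
    constructor
    · rintro ⟨⟨hn1, hnN⟩, k, rfl⟩
      exact ⟨k, ⟨Nat.pos_of_mul_pos_left hn1, mul_comm d k ▸ hnN⟩, mul_comm k d⟩
    · rintro ⟨k, ⟨hk1, hkN⟩, rfl⟩
      exact ⟨⟨Nat.mul_pos hk1 hd, hkN⟩, Dvd.intro_left k rfl⟩
  rw [himage, sum_image fun a _ b _ h => Nat.eq_of_mul_eq_mul_right hd h]

lemma exists_torsion_add_of_norm_nsmul {d : ℕ} (hd : 0 < d) (t : UnitAddCircle) :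
    ∃ s v : UnitAddCircle, t = s + v ∧ d • s = 0 ∧ d * ‖v‖ ≤ ‖d • t‖ := by
  obtain ⟨x, hxt, hx⟩ := exists_coe_eq_abs_eq_norm (d • t)
  have hd0 : (d : ℝ) ≠ 0 := by positivity
  have hv : d • ((x / d : ℝ) : UnitAddCircle) = d • t := by
    rw [← hxt, ← QuotientAddGroup.mk_nsmul, nsmul_eq_mul, mul_div_cancel₀ _ hd0]
  refine ⟨t - (x / d : ℝ), (x / d : ℝ), by simp, by rw [nsmul_sub, hv, sub_self], ?_⟩
  calc d * ‖((x / d : ℝ) : UnitAddCircle)‖ ≤ d * |x / d| := by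
        gcongr
        exact QuotientAddGroup.norm_mk_le_norm
    _ = ‖d • t‖ := by rw [abs_div, Nat.abs_cast, mul_div_cancel₀ _ hd0, hx]

lemma one_le_mul_norm_of_nsmul_eq_zero {d : ℕ} (hd : 0 < d) {u : UnitAddCircle} (hu : d • u = 0)
    (hu0 : u ≠ 0) : 1 ≤ d * ‖u‖ := by
  have hord := le_add_order_smul_norm_of_isOfFinAddOrder
    (isOfFinAddOrder_iff_nsmul_eq_zero.2 ⟨d, hd, hu⟩) hu0
  rw [nsmul_eq_mul] at hord
  refine hord.trans ?_
  gcongr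
  exact addOrderOf_le_of_nsmul_eq_zero hd hu

end ExponentialSums

section DivisorSum

variable {ι : Type*} {s : Finset ι} {d : ι → ℕ} {c : ι → ℝ}

/-- The arithmetic function `n ↦ ∑ c A` over the indices `A ∈ s` with `d A ∣ n`; sieve weights are
of this shape. -/
def divisorSum (s : Finset ι) (d : ι → ℕ) (c : ι → ℝ) (n : ℕ) : ℝ := ∑ A ∈ s with d A ∣ n, c A

lemma sum_Icc_divisorSum_mul (s : Finset ι) (d : ι → ℕ) (c : ι → ℝ) (g : ℕ → ℂ) (N : ℕ) :
    ∑ n ∈ Icc 1 N, (divisorSum s d c n : ℂ) * g n =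
      ∑ A ∈ s, (c A : ℂ) * ∑ k ∈ Icc 1 (N / d A), g (k * d A) := by
  simp only [divisorSum, Complex.ofReal_sum, sum_mul, sum_filter, mul_sum, ← sum_Icc_filter_dvd]
  rw [sum_comm]
  refine sum_congr rfl fun n _ => sum_congr rfl fun A _ => ?_
  split_ifs <;> simp

lemma norm_sum_fourier_le_mul {t : UnitAddCircle} {N : ℕ} {ε : ℝ} (hε : 0 < ε)
    (hN : 1 ≤ N * ε ^ 2) (ht : ε ≤ ‖t‖) (K : ℕ) :
    ‖∑ k ∈ Icc 1 K, fourier (k : ℤ) t‖ ≤ N * ε := by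
  set z := ‖∑ k ∈ Icc 1 K, fourier (k : ℤ) t‖
  have hz : ε * z ≤ 1 :=
    (mul_le_mul_of_nonneg_right ht (norm_nonneg _)).trans (norm_mul_norm_sum_fourier_le_one t K)
  nlinarith

lemma norm_sum_fourier_nsmul_sub_le {v : UnitAddCircle} {N d : ℕ} {ε : ℝ} (hd : 0 < d)
    (hε : ε ≤ 1) (hN : 1 ≤ N * ε ^ 2) (hv : ‖v‖ ≤ ε) :
    ‖∑ k ∈ Icc 1 (N / d), fourier (k : ℤ) (d • v) - (∑ n ∈ Icc 1 N, fourier (n : ℤ) v) / d‖ ≤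
      8 * (N * ε) := by
  have hd0 : (0 : ℝ) < d := by exact_mod_cast hd
  have hcompare := norm_mul_sum_fourier_nsmul_sub_le v N hd
  set S := ∑ k ∈ Icc 1 (N / d), fourier (k : ℤ) (d • v)
  set Φ := ∑ n ∈ Icc 1 N, fourier (n : ℤ) v
  have hfactor : (d : ℂ) * S - Φ = d * (S - Φ / d) := by
    rw [mul_sub, mul_div_cancel₀ _ (by exact_mod_cast hd.ne')]
  rw [hfactor, norm_mul, Complex.norm_natCast] at hcompare
  have hε0 : 0 ≤ ε := (norm_nonneg v).trans hv
  have hNε : 1 ≤ N * ε := hN.trans (by gcongr; nlinarith)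
  have hNv : N * ‖v‖ ≤ N * ε := by gcongr
  refine le_of_mul_le_mul_left (hcompare.trans ?_) hd0
  nlinarith

-- With `t = s + v`, `d₀ • s = 0` and `v` tiny, `d • t` is either `d • v` or bounded away from `0`.
lemma norm_sum_fourier_nsmul_add_sub_ite_le {s v : UnitAddCircle} {N D d₀ d : ℕ} {ε : ℝ}
    (hε : 0 < ε) (hN : 1 ≤ N * ε ^ 2) (hD : 2 * D * ε ≤ 1) (hd₀ : 0 < d₀) (hd₀D : d₀ ≤ D)
    (hd : 0 < d) (hdD : d ≤ D) (hs : d₀ • s = 0) (hv : d₀ * ‖v‖ ≤ ε) :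
    ‖∑ k ∈ Icc 1 (N / d), fourier (k : ℤ) (d • (s + v)) -
      if d • s = 0 then (∑ n ∈ Icc 1 N, fourier (n : ℤ) v) / d else 0‖ ≤ 8 * (N * ε) := by
  have hd₀1 : (1 : ℝ) ≤ d₀ := by exact_mod_cast hd₀
  have hd₀D' : (d₀ : ℝ) ≤ D := by exact_mod_cast hd₀D
  have hdD' : (d : ℝ) ≤ D := by exact_mod_cast hdD
  split_ifs with hds
  · have hε1 : ε ≤ 1 := by nlinarith
    have hv' : ‖v‖ ≤ ε := by nlinarith [norm_nonneg v]
    rw [smul_add, hds, zero_add]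
    exact norm_sum_fourier_nsmul_sub_le hd hε1 hN hv'
  · have hfar : 1 ≤ d₀ * ‖d • s‖ :=
      one_le_mul_norm_of_nsmul_eq_zero hd₀ (by rw [smul_comm, hs, smul_zero]) hds
    have htri : ‖d • s‖ ≤ ‖d • (s + v)‖ + d * ‖v‖ := by
      calc ‖d • s‖ = ‖d • (s + v) - d • v‖ := by rw [smul_add, add_sub_cancel_right]
        _ ≤ _ := (norm_sub_le _ _).trans (by gcongr; exact norm_nsmul_le)
    have hdv : d * (d₀ * ‖v‖) ≤ D * ε := by gcongr
    have hnear : 1 ≤ D * ‖d • (s + v)‖ + D * ε := by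
      calc 1 ≤ d₀ * (‖d • (s + v)‖ + d * ‖v‖) := hfar.trans (by gcongr)
        _ = d₀ * ‖d • (s + v)‖ + d * (d₀ * ‖v‖) := by ring
        _ ≤ _ := by gcongr
    have hD0 : (0 : ℝ) < D := by linarith
    have hge : ε ≤ ‖d • (s + v)‖ := le_of_mul_le_mul_left (by linarith) hD0
    rw [sub_zero]
    refine (norm_sum_fourier_le_mul hε hN hge _).trans ?_
    have : 0 ≤ N * ε := by positivity
    linarith

lemma norm_sum_mul_ite_nsmul_le {N : ℕ} {W : ℝ} {Φ : ℂ} {u : UnitAddCircle} (hu : IsOfFinAddOrder u)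
    (hΦ : ‖Φ‖ ≤ N) (hW : ∀ q, 0 < q → |∑ A ∈ s with q ∣ d A, c A / d A| ≤ W) :
    ‖∑ A ∈ s, (c A : ℂ) * if d A • u = 0 then Φ / d A else 0‖ ≤ N * W := by
  have hfactor : ∑ A ∈ s, (c A : ℂ) * (if d A • u = 0 then Φ / d A else 0) =
      Φ * ((∑ A ∈ s with addOrderOf u ∣ d A, c A / d A : ℝ) : ℂ) := by
    simp only [sum_filter, mul_sum, addOrderOf_dvd_iff_nsmul_eq_zero, Complex.ofReal_sum]
    refine sum_congr rfl fun A _ => ?_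
    split_ifs
    · push_cast
      ring
    · simp
  rw [hfactor, norm_mul, Complex.norm_real]
  exact mul_le_mul hΦ (hW _ hu.addOrderOf_pos) (abs_nonneg _) (Nat.cast_nonneg _)

theorem norm_sum_divisorSum_mul_fourier_le {N D : ℕ} {ε W : ℝ} (hε : 0 < ε)
    (hN : 1 ≤ N * ε ^ 2) (hD : 2 * D * ε ≤ 1) (hd : ∀ A ∈ s, 0 < d A) (hdD : ∀ A ∈ s, d A ≤ D)
    (hW : ∀ q, 0 < q → |∑ A ∈ s with q ∣ d A, c A / d A| ≤ W) (t : UnitAddCircle) :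
    ‖∑ n ∈ Icc 1 N, (divisorSum s d c n : ℂ) * fourier (n : ℤ) t‖ ≤
      N * (W + 8 * ε * ∑ A ∈ s, |c A|) := by
  have hW0 : 0 ≤ W := (abs_nonneg _).trans (hW 1 one_pos)
  have hswap := sum_Icc_divisorSum_mul s d c (fun n => fourier (n : ℤ) t) N
  simp only [Nat.cast_mul, fourier_apply, mul_smul] at hswap
  simp only [fourier_apply, hswap]
  simp only [natCast_zsmul (_ : UnitAddCircle) (d _), ← fourier_apply]
  by_cases hfar : ∀ A ∈ s, ε ≤ ‖d A • t‖
  · calc _ ≤ ∑ A ∈ s, |c A| * (N * ε) := norm_sum_le_of_le _ fun A hA => by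
            rw [norm_mul, Complex.norm_real, Real.norm_eq_abs]
            gcongr
            exact norm_sum_fourier_le_mul hε hN (hfar A hA) _
      _ = N * (ε * ∑ A ∈ s, |c A|) := by rw [← sum_mul]; ring
      _ ≤ _ := by
            have : 0 ≤ ε * ∑ A ∈ s, |c A| := by positivity
            gcongr
            linarith
  push Not at hfar
  obtain ⟨A₀, hA₀, hnear⟩ := hfar
  obtain ⟨u, v, rfl, hu, hv⟩ := exists_torsion_add_of_norm_nsmul (hd A₀ hA₀) t
  set Φ := ∑ n ∈ Icc 1 N, fourier (n : ℤ) v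
  have hΦ : ‖Φ‖ ≤ N := by
    refine (norm_sum_le _ _).trans_eq ?_
    simp only [norm_fourier_apply, sum_const, Nat.card_Icc, add_tsub_cancel_right, nsmul_one]
  have hmain := norm_sum_mul_ite_nsmul_le
    (isOfFinAddOrder_iff_nsmul_eq_zero.2 ⟨_, hd A₀ hA₀, hu⟩) hΦ hW
  have herr : ‖∑ A ∈ s, (c A : ℂ) * (∑ k ∈ Icc 1 (N / d A), fourier (k : ℤ) (d A • (u + v)) -
      if d A • u = 0 then Φ / d A else 0)‖ ≤ ∑ A ∈ s, |c A| * (8 * (N * ε)) :=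
    norm_sum_le_of_le _ fun A hA => by
      rw [norm_mul, Complex.norm_real, Real.norm_eq_abs]
      gcongr
      exact norm_sum_fourier_nsmul_add_sub_ite_le hε hN hD (hd A₀ hA₀) (hdD A₀ hA₀) (hd A hA)
        (hdD A hA) hu (hv.trans hnear.le)
  simp only [mul_sub, sum_sub_distrib, ← sum_mul] at herr
  linarith [norm_le_norm_add_norm_sub' (∑ A ∈ s, (c A : ℂ) *
    ∑ k ∈ Icc 1 (N / d A), fourier (k : ℤ) (d A • (u + v)))
    (∑ A ∈ s, (c A : ℂ) * if d A • u = 0 then Φ / d A else 0)]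

end DivisorSum

section Primes

open Filter Asymptotics

lemma theta_eq_chebyshevTheta (n : ℕ) : theta n = Chebyshev.theta n := by
  rw [Chebyshev.theta_eq_sum_Icc, theta, primesUpTo, Nat.floor_natCast]
  congr 1
  ext p
  simp

lemma isLittleO_chebyshevTheta_error :
    (fun x : ℝ => Real.log (x + 1) + 2 * √x * Real.log x) =o[atTop] id := by
  refine IsLittleO.add ?_ ?_
  · refine (Real.isLittleO_log_id_atTop.comp_tendsto
      (tendsto_atTop_add_const_right _ 1 tendsto_id)).trans_isBigO ?_
    exact (isBigO_refl _ _).add (isLittleO_const_id_atTop 1).isBigO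
  · have hmul := (isBigO_refl (fun x : ℝ => 2 * √x) atTop).mul_isLittleO
      (isLittleO_log_rpow_atTop (r := 1 / 2) (by norm_num))
    refine hmul.trans_isBigO (IsBigO.of_bound 2 ?_)
    filter_upwards [eventually_ge_atTop 0] with x hx
    rw [← Real.sqrt_eq_rpow, mul_assoc, Real.mul_self_sqrt hx, norm_mul, Real.norm_ofNat, id]

lemma exists_mul_le_theta : ∃ c : ℝ, 0 < c ∧ ∀ N : ℕ, 2 ≤ N → c * N ≤ theta N := by
  have hlog2 : 0 < Real.log 2 := Real.log_pos one_lt_two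
  have hθ2 : 0 < Chebyshev.theta 2 := Chebyshev.theta_pos le_rfl
  have hlarge : ∀ᶠ N : ℕ in atTop, Real.log 2 / 2 * N ≤ theta N := by
    filter_upwards [tendsto_natCast_atTop_atTop.eventually
      (isLittleO_chebyshevTheta_error.def (half_pos hlog2))] with N hN
    rw [id, Real.norm_natCast] at hN
    rw [theta_eq_chebyshevTheta]
    linarith [Chebyshev.theta_ge N, Real.le_norm_self
      (Real.log ((N : ℝ) + 1) + 2 * √(N : ℝ) * Real.log N)]
  obtain ⟨N₀, hN₀⟩ := eventually_atTop.1 hlarge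
  refine ⟨min (Real.log 2 / 2) (Chebyshev.theta 2 / (N₀ + 1)), by positivity, fun N hN => ?_⟩
  rcases le_total N₀ N with h | h
  · exact (mul_le_mul_of_nonneg_right (min_le_left _ _) N.cast_nonneg).trans (hN₀ N h)
  · calc _ ≤ Chebyshev.theta 2 / (N₀ + 1) * (N₀ + 1) := by
          gcongr
          · exact min_le_right _ _
          · exact_mod_cast h.trans N₀.le_succ
      _ = Chebyshev.theta 2 := div_mul_cancel₀ _ (by positivity)
      _ ≤ theta N := by
          rw [theta_eq_chebyshevTheta]
          exact Chebyshev.theta_mono (by exact_mod_cast hN)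

/-- The primes in the half-open interval `(a, b]`. -/
def primesBetween (a b : ℕ) : Finset ℕ := {p ∈ Ioc a b | p.Prime}

lemma mem_primesBetween {a b p : ℕ} : p ∈ primesBetween a b ↔ (a < p ∧ p ≤ b) ∧ p.Prime := by
  simp [primesBetween]

lemma three_le_of_mem_primesBetween {a b p : ℕ} (ha : 2 ≤ a) (hp : p ∈ primesBetween a b) :
    3 ≤ p :=
  ha.trans_lt (mem_primesBetween.1 hp).1.1

lemma sum_primesBetween_succ {a n : ℕ} (h : a ≤ n) (f : ℕ → ℝ) :
    ∑ p ∈ primesBetween a (n + 1), f p =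
      (∑ p ∈ primesBetween a n, f p) + if (n + 1).Prime then f (n + 1) else 0 := by
  simp only [primesBetween, sum_filter, sum_Ioc_succ_top h]

lemma theta_succ (n : ℕ) :
    theta (n + 1) = theta n + if (n + 1).Prime then Real.log (n + 1 : ℕ) else 0 := by
  simp only [theta, primesUpTo, sum_filter, sum_range_succ _ (n + 1)]

lemma theta_le (n : ℕ) : theta n ≤ Real.log 4 * n :=
  theta_eq_chebyshevTheta n ▸ Chebyshev.theta_le_log4_mul_x n.cast_nonneg

lemma one_div_mul_log_succ_le {n : ℕ} (hn : 2 ≤ n) :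
    1 / ((n + 1 : ℕ) * Real.log (n + 1 : ℕ)) ≤
      Real.log (Real.log (n + 1 : ℕ)) - Real.log (Real.log n) := by
  have hn' : (2 : ℝ) ≤ n := by exact_mod_cast hn
  have hlog : 0 < Real.log n := Real.log_pos (by linarith)
  have hlog' : 0 < Real.log (n + 1 : ℕ) := Real.log_pos (by push_cast; linarith)
  have hincr : 1 / (n + 1 : ℕ) ≤ Real.log (n + 1 : ℕ) - Real.log n := by
    rw [← Real.log_div (by positivity) (by positivity)]
    refine le_trans (le_of_eq ?_) (Real.one_sub_inv_le_log_of_pos (by positivity))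
    field_simp
    push_cast
    ring
  calc 1 / ((n + 1 : ℕ) * Real.log (n + 1 : ℕ))
      = 1 / (n + 1 : ℕ) / Real.log (n + 1 : ℕ) := by rw [div_div]
    _ ≤ (Real.log (n + 1 : ℕ) - Real.log n) / Real.log (n + 1 : ℕ) := by gcongr
    _ = 1 - (Real.log (n + 1 : ℕ) / Real.log n)⁻¹ := by field_simp
    _ ≤ Real.log (Real.log (n + 1 : ℕ) / Real.log n) :=
        Real.one_sub_inv_le_log_of_pos (by positivity)
    _ = _ := Real.log_div hlog'.ne' hlog.ne'

-- Partial summation; the term with `theta` is what makes the induction close.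
lemma sum_inv_primesBetween_add_le {a n : ℕ} (ha : 2 ≤ a) (han : a ≤ n) :
    ∑ p ∈ primesBetween a n, (p : ℝ)⁻¹ + 1 / (n * Real.log n) * (Real.log 4 * n - theta n) ≤
      Real.log 4 * (Real.log (Real.log n) - Real.log (Real.log a)) + Real.log 4 / Real.log a := by
  have hlog4 : 0 ≤ Real.log 4 := Real.log_nonneg (by norm_num)
  induction n, han using Nat.le_induction with
  | base =>
    have ha' : (2 : ℝ) ≤ a := by exact_mod_cast ha
    have hlog : 0 < Real.log a := Real.log_pos (by linarith)
    have hθ : 0 ≤ theta a := theta_eq_chebyshevTheta a ▸ Chebyshev.theta_nonneg _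
    rw [primesBetween, Ioc_self, filter_empty, sum_empty, sub_self, mul_zero, zero_add, zero_add]
    calc _ ≤ 1 / (a * Real.log a) * (Real.log 4 * a) := by gcongr; linarith
      _ = _ := by field_simp
  | succ n han ih =>
    have hn : (2 : ℝ) ≤ n := by exact_mod_cast ha.trans han
    have hlog : 0 < Real.log n := Real.log_pos (by linarith)
    have hlog' : 0 < Real.log (n + 1 : ℕ) := Real.log_pos (by push_cast; linarith)
    have hanti : 1 / ((n + 1 : ℕ) * Real.log (n + 1 : ℕ)) ≤ 1 / (n * Real.log n) := by
      gcongr <;> exact n.le_succ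
    have hprime : (if (n + 1).Prime then ((n + 1 : ℕ) : ℝ)⁻¹ else 0) =
        1 / ((n + 1 : ℕ) * Real.log (n + 1 : ℕ)) *
          if (n + 1).Prime then Real.log (n + 1 : ℕ) else 0 := by
      split_ifs
      · field_simp
      · rw [mul_zero]
    rw [sum_primesBetween_succ han, theta_succ, hprime]
    have hstep := mul_le_mul_of_nonneg_left (one_div_mul_log_succ_le (ha.trans han)) hlog4
    have hneg := mul_le_mul_of_nonneg_right hanti (sub_nonneg.2 (theta_le n))
    push_cast at *
    nlinarith

theorem sum_inv_primesBetween_le {a b : ℕ} (ha : 2 ≤ a) (hab : a ≤ b) :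
    ∑ p ∈ primesBetween a b, (p : ℝ)⁻¹ ≤
      Real.log 4 * (Real.log (Real.log b) - Real.log (Real.log a)) + Real.log 4 / Real.log a := by
  have hweight : 0 ≤ 1 / (b * Real.log b) :=
    one_div_nonneg.2 (mul_nonneg b.cast_nonneg (Real.log_natCast_nonneg b))
  have := mul_nonneg hweight (sub_nonneg.2 (theta_le b))
  linarith [sum_inv_primesBetween_add_le ha hab]

lemma sum_primesBetween_inv_mul_sub_one_le_one (b : ℕ) :
    ∑ p ∈ primesBetween 2 b, ((p : ℝ) * (p - 1))⁻¹ ≤ 1 := by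
  have htelescope : ∀ b : ℕ, 2 ≤ b → ∑ n ∈ Ioc 2 b, ((n : ℝ) * (n - 1))⁻¹ ≤ 1 - (b : ℝ)⁻¹ := by
    intro b hb
    induction b, hb using Nat.le_induction with
    | base => norm_num
    | succ n hn ih =>
      have hn' : (0 : ℝ) < n := by positivity
      rw [sum_Ioc_succ_top hn]
      have : (((n + 1 : ℕ) : ℝ) * ((n + 1 : ℕ) - 1))⁻¹ = (n : ℝ)⁻¹ - ((n + 1 : ℕ) : ℝ)⁻¹ := by
        push_cast
        rw [add_sub_cancel_right, inv_sub_inv hn'.ne' (by positivity), add_sub_cancel_left,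
          one_div, mul_comm]
      linarith
  rcases le_total b 2 with hb | hb
  · simp [primesBetween, Ioc_eq_empty_of_le hb]
  · calc _ ≤ ∑ n ∈ Ioc 2 b, ((n : ℝ) * (n - 1))⁻¹ := by
          refine sum_le_sum_of_subset_of_nonneg (filter_subset _ _) fun n hn _ => ?_
          have hn2 : (2 : ℝ) < n := by exact_mod_cast (mem_Ioc.1 hn).1
          have : (0 : ℝ) < n - 1 := by linarith
          positivity
      _ ≤ 1 := (htelescope b hb).trans (sub_le_self _ (by positivity))

theorem log_le_prod_primesBelow (z : ℕ) :
    Real.log z ≤ ∏ p ∈ (z + 1).primesBelow, (1 - (p : ℝ)⁻¹)⁻¹ := by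
  have hsum := (EulerProduct.summable_and_hasSum_smoothNumbers_prod_primesBelow_geometric
    (f := invMonoidHom.comp (Nat.castRingHom ℝ : ℕ →* ℝ)) (fun {p} hp => by
      simpa using inv_lt_one_of_one_lt₀ (Nat.one_lt_cast.2 hp.one_lt)) (z + 1)).2
  have hsmooth : ∀ k ∈ Icc 1 z, k ∈ (z + 1).smoothNumbers := fun k hk =>
    Nat.mem_smoothNumbers_of_lt (mem_Icc.1 hk).1 (Nat.lt_succ_of_le (mem_Icc.1 hk).2)
  calc Real.log z ≤ (harmonic z : ℝ) := by
        simpa using log_le_harmonic_floor z z.cast_nonneg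
    _ = ∑ k ∈ (Icc 1 z).subtype (· ∈ (z + 1).smoothNumbers), ((k : ℕ) : ℝ)⁻¹ := by
        rw [sum_subtype_of_mem (fun k : ℕ => (k : ℝ)⁻¹) hsmooth, harmonic_eq_sum_Icc]
        push_cast
        rfl
    _ ≤ _ := sum_le_hasSum _ (fun k _ => by positivity) hsum

lemma exp_neg_two_mul_le {u : ℝ} (hu : 0 ≤ u) (hu2 : u ≤ 1 / 2) :
    Real.exp (-(2 * u)) ≤ 1 - u := by
  have hinv : (1 - u)⁻¹ ≤ 1 + 2 * u := by
    rw [inv_le_iff_one_le_mul₀ (by linarith)]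
    nlinarith
  rw [Real.exp_neg]
  exact inv_le_of_inv_le₀ (by linarith) (hinv.trans (by linarith [Real.add_one_le_exp (2 * u)]))

lemma inv_le_one_third {p : ℕ} (hp : 3 ≤ p) : (p : ℝ)⁻¹ ≤ 1 / 3 := by
  rw [one_div]
  gcongr
  exact_mod_cast hp

lemma exp_neg_two_mul_sum_le_prod {s : Finset ℕ} (hs : ∀ p ∈ s, 3 ≤ p) :
    Real.exp (-(2 * ∑ p ∈ s, (p : ℝ)⁻¹)) ≤ ∏ p ∈ s, (1 - (p : ℝ)⁻¹) := by
  rw [mul_sum, ← sum_neg_distrib, Real.exp_sum]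
  exact prod_le_prod (fun p _ => (Real.exp_pos _).le) fun p hp =>
    exp_neg_two_mul_le (by positivity) ((inv_le_one_third (hs p hp)).trans (by norm_num))

lemma prod_inv_one_sub_mul_one_add_le (z : ℕ) :
    ∏ p ∈ primesBetween 2 z, ((1 - (p : ℝ)⁻¹)⁻¹ * (1 + (p : ℝ)⁻¹)) ≤
      Real.exp (2 * ∑ p ∈ primesBetween 2 z, (p : ℝ)⁻¹ + 2) := by
  have hfactor : ∀ p ∈ primesBetween 2 z, (1 - (p : ℝ)⁻¹)⁻¹ * (1 + (p : ℝ)⁻¹) ≤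
      Real.exp (2 * (p : ℝ)⁻¹ + 2 * ((p : ℝ) * (p - 1))⁻¹) := by
    intro p hp
    have hp3 : (3 : ℝ) ≤ p := by exact_mod_cast three_le_of_mem_primesBetween le_rfl hp
    have hp1 : (p : ℝ) - 1 ≠ 0 := by linarith
    refine le_trans (le_of_eq ?_) (Real.add_one_le_exp _)
    field_simp
    ring
  calc _ ≤ ∏ p ∈ primesBetween 2 z, Real.exp (2 * (p : ℝ)⁻¹ + 2 * ((p : ℝ) * (p - 1))⁻¹) := by
        refine prod_le_prod (fun p hp => ?_) hfactor
        have := inv_le_one_third (three_le_of_mem_primesBetween le_rfl hp)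
        have : 0 < 1 - (p : ℝ)⁻¹ := by linarith
        positivity
    _ ≤ _ := by
        rw [← Real.exp_sum, sum_add_distrib, ← mul_sum, ← mul_sum, Real.exp_le_exp]
        linarith [sum_primesBetween_inv_mul_sub_one_le_one z]

end Primes

section Levels

/-- The logarithmic sizes `x_j = (3/2)^j` of the sieving levels. -/
noncomputable def scale (j : ℕ) : ℝ := (3 / 2) ^ j

/-- The sieving levels `y_j = ⌊exp x_j⌋`, starting from `y_0 = 2`. -/
noncomputable def level (j : ℕ) : ℕ := ⌊Real.exp (scale j)⌋₊

/-- The `i`-th block of primes, those in `(y_i, y_{i+1}]`. -/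
noncomputable def primeBlock (i : ℕ) : Finset ℕ := primesBetween (level i) (level (i + 1))

/-- The odd primes up to the `j`-th level, i.e. the union of the first `j` blocks. -/
noncomputable def sievingPrimes (j : ℕ) : Finset ℕ := primesBetween 2 (level j)

lemma one_le_scale (j : ℕ) : 1 ≤ scale j := one_le_pow₀ (by norm_num)

lemma scale_pos (j : ℕ) : 0 < scale j := one_pos.trans_le (one_le_scale j)

lemma scale_succ (j : ℕ) : scale (j + 1) = 3 / 2 * scale j := pow_succ' _ _

lemma scale_monotone : Monotone scale := pow_right_mono₀ (by norm_num)

lemma level_le_exp (j : ℕ) : (level j : ℝ) ≤ Real.exp (scale j) := Nat.floor_le (Real.exp_pos _).le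

lemma level_monotone : Monotone level := fun _ _ h =>
  Nat.floor_mono (Real.exp_le_exp.2 (scale_monotone h))

lemma level_zero : level 0 = 2 := by
  rw [level, scale, pow_zero, Nat.floor_eq_iff (Real.exp_pos 1).le]
  constructor
  · linarith [Real.exp_one_gt_d9, Nat.cast_ofNat (R := ℝ) (n := 2)]
  · norm_num
    linarith [Real.exp_one_lt_d9]

lemma two_le_level (j : ℕ) : 2 ≤ level j := level_zero ▸ level_monotone j.zero_le

lemma exp_scale_le_two_mul_level (j : ℕ) : Real.exp (scale j) ≤ 2 * level j := by
  have hfloor : Real.exp (scale j) < level j + 1 := Nat.lt_floor_add_one _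
  have htwo : (2 : ℝ) ≤ level j := by exact_mod_cast two_le_level j
  linarith

lemma log_level_le (j : ℕ) : Real.log (level j) ≤ scale j := by
  rw [Real.log_le_iff_le_exp (by exact_mod_cast two_pos.trans_le (two_le_level j))]
  exact level_le_exp j

lemma log_two_le_log_level (j : ℕ) : Real.log 2 ≤ Real.log (level j) :=
  Real.log_le_log two_pos (by exact_mod_cast two_le_level j)

lemma le_log_level (j : ℕ) : 0.3 * scale j ≤ Real.log (level j) := by
  have hlevel : (level j : ℝ) ≠ 0 := by exact_mod_cast (two_pos.trans_le (two_le_level j)).ne'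
  have hlog := Real.log_le_log (Real.exp_pos _) (exp_scale_le_two_mul_level j)
  rw [Real.log_exp, Real.log_mul two_ne_zero hlevel] at hlog
  linarith [Real.log_two_lt_d9, one_le_scale j]

lemma log_four_le : Real.log 4 ≤ 1.3863 := by
  rw [show (4 : ℝ) = 2 ^ 2 by norm_num, Real.log_pow]
  push_cast
  linarith [Real.log_two_lt_d9]

lemma log_four_div_log_level_le (j : ℕ) : Real.log 4 / Real.log (level j) ≤ 2 := by
  have hlog2 : 0 < Real.log 2 := Real.log_pos one_lt_two
  rw [div_le_iff₀ (hlog2.trans_le (log_two_le_log_level j)),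
    show (4 : ℝ) = 2 ^ 2 by norm_num, Real.log_pow]
  push_cast
  linarith [log_two_le_log_level j]

lemma sum_inv_primeBlock_le (i : ℕ) : ∑ p ∈ primeBlock i, (p : ℝ)⁻¹ ≤ 5 := by
  have hlog4 : 0 ≤ Real.log 4 := Real.log_nonneg (by norm_num)
  have hlog_pos (j : ℕ) : 0 < Real.log (level j) :=
    (Real.log_pos one_lt_two).trans_le (log_two_le_log_level j)
  have hratio : Real.log (Real.log (level (i + 1))) - Real.log (Real.log (level i)) ≤ 2 := by
    rw [← Real.log_div (hlog_pos _).ne' (hlog_pos _).ne',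
      Real.log_le_iff_le_exp (div_pos (hlog_pos _) (hlog_pos _))]
    have hexp : (5 : ℝ) ≤ Real.exp 2 := by
      rw [show (2 : ℝ) = 1 + 1 by norm_num, Real.exp_add]
      nlinarith [Real.exp_one_gt_d9]
    refine le_trans ?_ hexp
    rw [div_le_iff₀ (hlog_pos i)]
    linarith [log_level_le (i + 1), le_log_level i, scale_succ i]
  have hsum := sum_inv_primesBetween_le (two_le_level i) (level_monotone i.le_succ)
  rw [primeBlock]
  nlinarith [log_four_le, log_four_div_log_level_le i]

lemma three_le_of_mem_primeBlock {i p : ℕ} (hp : p ∈ primeBlock i) : 3 ≤ p :=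
  three_le_of_mem_primesBetween (two_le_level i) hp

lemma prime_of_mem_sievingPrimes {j p : ℕ} (hp : p ∈ sievingPrimes j) : p.Prime :=
  (mem_primesBetween.1 hp).2

lemma one_sub_inv_pos_of_three_le {p : ℕ} (hp : 3 ≤ p) : 0 < 1 - (p : ℝ)⁻¹ := by
  linarith [inv_le_one_third hp]

/-- The density `∏ (1 - 1/p)`, over the primes of the `i`-th block, of the integers that survive
sieving by that block. -/
noncomputable def blockDensity (i : ℕ) : ℝ := ∏ p ∈ primeBlock i, (1 - (p : ℝ)⁻¹)

lemma exp_neg_ten_le_blockDensity (i : ℕ) : Real.exp (-10) ≤ blockDensity i :=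
  (Real.exp_le_exp.2 (by linarith [sum_inv_primeBlock_le i])).trans
    (exp_neg_two_mul_sum_le_prod fun _ => three_le_of_mem_primeBlock)

lemma blockDensity_pos (i : ℕ) : 0 < blockDensity i :=
  (Real.exp_pos _).trans_le (exp_neg_ten_le_blockDensity i)

lemma sievingPrimes_succ (j : ℕ) : sievingPrimes (j + 1) = sievingPrimes j ∪ primeBlock j := by
  rw [sievingPrimes, sievingPrimes, primeBlock, primesBetween, primesBetween, primesBetween,
    ← filter_union, Ioc_union_Ioc_eq_Ioc (two_le_level j) (level_monotone j.le_succ)]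

lemma disjoint_sievingPrimes_primeBlock (j : ℕ) : Disjoint (sievingPrimes j) (primeBlock j) :=
  disjoint_filter_filter (Ioc_disjoint_Ioc_of_le le_rfl)

lemma sievingPrimes_zero : sievingPrimes 0 = ∅ := by
  rw [sievingPrimes, level_zero, primesBetween, Ioc_self, filter_empty]

lemma prod_blockDensity (j : ℕ) :
    ∏ i ∈ range j, blockDensity i = ∏ p ∈ sievingPrimes j, (1 - (p : ℝ)⁻¹) := by
  induction j with
  | zero => rw [sievingPrimes_zero, range_zero, prod_empty, prod_empty]
  | succ j ih =>
    rw [prod_range_succ, ih, sievingPrimes_succ, prod_union (disjoint_sievingPrimes_primeBlock j),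
      blockDensity]

-- The exponent is `2 log 4 < 3`.
theorem exists_prod_inv_one_sub_mul_one_add_le : ∃ C : ℝ, 0 < C ∧ ∀ j,
    ∏ p ∈ sievingPrimes j, ((1 - (p : ℝ)⁻¹)⁻¹ * (1 + (p : ℝ)⁻¹)) ≤ C * scale j ^ 3 := by
  refine ⟨Real.exp 10, Real.exp_pos _, fun j => ?_⟩
  refine (prod_inv_one_sub_mul_one_add_le (level j)).trans ?_
  have hlog2 : 0 < Real.log 2 := Real.log_pos one_lt_two
  have hlogscale : 0 ≤ Real.log (scale j) := Real.log_nonneg (one_le_scale j)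
  have hloglog : Real.log (Real.log (level j)) ≤ Real.log (scale j) :=
    Real.log_le_log (hlog2.trans_le (log_two_le_log_level j)) (log_level_le j)
  have hloglog2 : -Real.log (Real.log 2) ≤ 1 / 2 := by
    rw [← Real.log_inv, Real.log_le_iff_le_exp (by positivity)]
    refine le_trans ?_ (Real.add_one_le_exp _)
    rw [inv_le_iff_one_le_mul₀ hlog2]
    linarith [Real.log_two_gt_d9]
  have hsum := sum_inv_primesBetween_le le_rfl (two_le_level j)
  have htwo := log_four_div_log_level_le 0
  rw [level_zero] at htwo
  push_cast at htwo hsum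
  have hlog4 : 0 ≤ Real.log 4 := Real.log_nonneg (by norm_num)
  calc Real.exp (2 * ∑ p ∈ primesBetween 2 (level j), (p : ℝ)⁻¹ + 2)
      ≤ Real.exp (10 + 3 * Real.log (scale j)) := by
        rw [Real.exp_le_exp]
        nlinarith [log_four_le]
    _ = Real.exp 10 * scale j ^ 3 := by
        rw [Real.exp_add, mul_comm 3, Real.exp_mul, Real.exp_log (scale_pos j)]
        norm_cast

theorem le_prod_inv_one_sub_inv (j : ℕ) :
    0.15 * scale j ≤ ∏ p ∈ sievingPrimes j, (1 - (p : ℝ)⁻¹)⁻¹ := by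
  have hprimes : (level j + 1).primesBelow = insert 2 (sievingPrimes j) := by
    ext p
    have htwo := two_le_level j
    simp only [Nat.primesBelow, sievingPrimes, mem_filter, mem_range, mem_insert,
      mem_primesBetween]
    constructor
    · rintro ⟨hle, hp⟩
      have := hp.two_le
      by_cases hp2 : p = 2
      · exact .inl hp2
      · exact .inr ⟨⟨by omega, by omega⟩, hp⟩
    · rintro (rfl | ⟨hle, hp⟩)
      · exact ⟨by omega, Nat.prime_two⟩
      · exact ⟨by omega, hp⟩
  have hlog := log_le_prod_primesBelow (level j)
  rw [hprimes, prod_insert (by simp [sievingPrimes, mem_primesBetween])] at hlog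
  norm_num at hlog ⊢
  linarith [le_log_level j]

end Levels

section Bonferroni

variable {ι : Type*}

/-- The expansion of `∏ p ∈ P, (1 - x p)` truncated to the monomials of degree at most `b`. -/
noncomputable def truncatedProd (b : ℕ) (P : Finset ι) (x : ι → ℝ) : ℝ :=
  ∑ B ∈ P.powerset with #B ≤ b, ∏ p ∈ B, (-x p)

lemma truncatedProd_zero (P : Finset ι) (x : ι → ℝ) : truncatedProd 0 P x = 1 := by
  classical
  have hempty : {B ∈ P.powerset | #B ≤ 0} = {∅} := by
    ext B
    simp only [mem_filter, mem_powerset, mem_singleton, Nat.le_zero, card_eq_zero]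
    exact ⟨And.right, fun h => ⟨h ▸ empty_subset P, h⟩⟩
  rw [truncatedProd, hempty, sum_singleton, prod_empty]

lemma truncatedProd_insert [DecidableEq ι] (b : ℕ) {P : Finset ι} {p : ι} (hp : p ∉ P) (x : ι → ℝ) :
    truncatedProd (b + 1) (insert p P) x =
      truncatedProd (b + 1) P x - x p * truncatedProd b P x := by
  rw [truncatedProd, truncatedProd, truncatedProd, sum_filter, sum_powerset_insert hp,
    ← sum_filter, mul_sum, sub_eq_add_neg, ← sum_neg_distrib,
    sum_filter (s := P.powerset) (p := fun B => #B ≤ b)]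
  congr 1
  refine sum_congr rfl fun B hB => ?_
  have hpB : p ∉ B := notMem_mono (mem_powerset.1 hB) hp
  rw [card_insert_of_notMem hpB, prod_insert hpB]
  simp only [add_le_add_iff_right]
  split_ifs <;> ring

lemma truncatedProd_eq_prod {b : ℕ} {P : Finset ι} (h : #P ≤ b) (x : ι → ℝ) :
    truncatedProd b P x = ∏ p ∈ P, (1 - x p) := by
  classical
  rw [truncatedProd, filter_true_of_mem fun B hB => (card_le_card (mem_powerset.1 hB)).trans h]
  simp only [sub_eq_add_neg, prod_one_add]

lemma pow_succ_add_mul_pow_le {K u : ℝ} (hK : 0 ≤ K) (hu : 0 ≤ u) (n : ℕ) :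
    K ^ (n + 1) + (n + 1) * u * K ^ n ≤ (u + K) ^ (n + 1) := by
  induction n with
  | zero => simp [add_comm]
  | succ n ih =>
    have hrest : 0 ≤ (n + 1) * u * K ^ n * u := by positivity
    calc K ^ (n + 1 + 1) + ((n + 1 : ℕ) + 1) * u * K ^ (n + 1)
        ≤ (K ^ (n + 1) + (n + 1) * u * K ^ n) * (u + K) := by
          push_cast
          linear_combination hrest
      _ ≤ (u + K) ^ (n + 1 + 1) := by
          rw [pow_succ (u + K)]
          gcongr

lemma pow_div_factorial_add_mul_le {K u : ℝ} (hK : 0 ≤ K) (hu : 0 ≤ u) (n : ℕ) :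
    K ^ (n + 1) / (n + 1).factorial + u * (K ^ n / n.factorial) ≤
      (u + K) ^ (n + 1) / (n + 1).factorial := by
  have hfactorial : (n.factorial : ℝ) ≠ 0 := by exact_mod_cast n.factorial_ne_zero
  calc _ = (K ^ (n + 1) + (n + 1) * u * K ^ n) / (n + 1).factorial := by
        rw [Nat.factorial_succ]
        push_cast
        field_simp
    _ ≤ _ := by
        gcongr
        exact pow_succ_add_mul_pow_le hK hu n

theorem neg_one_pow_mul_truncatedProd_sub_mem_Icc {P : Finset ι} {x : ι → ℝ}
    (hx0 : ∀ p ∈ P, 0 ≤ x p) (hx1 : ∀ p ∈ P, x p ≤ 1) (b : ℕ) :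
    (-1) ^ b * (truncatedProd b P x - ∏ p ∈ P, (1 - x p)) ∈
      Set.Icc 0 ((∑ p ∈ P, x p) ^ (b + 1) / (b + 1).factorial) := by
  classical
  induction P using Finset.induction_on generalizing b with
  | empty =>
    rw [truncatedProd_eq_prod (Nat.zero_le b), sub_self, mul_zero]
    simp
  | insert p P hp ih =>
    obtain ⟨hp0, hx0⟩ := forall_mem_insert _ _ _ |>.1 hx0
    obtain ⟨_, hx1⟩ := forall_mem_insert _ _ _ |>.1 hx1
    have hsum : 0 ≤ ∑ q ∈ P, x q := sum_nonneg hx0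
    have hprod : ∏ q ∈ P, (1 - x q) ∈ Set.Icc 0 1 :=
      ⟨prod_nonneg fun q hq => sub_nonneg.2 (hx1 q hq), prod_le_one
        (fun q hq => sub_nonneg.2 (hx1 q hq)) fun q hq => sub_le_self _ (hx0 q hq)⟩
    rw [prod_insert hp, sum_insert hp]
    cases b with
    | zero =>
      obtain ⟨hlower, hupper⟩ := ih hx0 hx1 0
      rw [truncatedProd_zero] at hlower hupper ⊢
      simp only [pow_zero, one_mul, zero_add, pow_one, Nat.factorial_one, Nat.cast_one,
        div_one] at hlower hupper ⊢
      constructor <;> nlinarith [hprod.1, hprod.2]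
    | succ b =>
      obtain ⟨hlower, hupper⟩ := ih hx0 hx1 b
      obtain ⟨hlower', hupper'⟩ := ih hx0 hx1 (b + 1)
      have hrec : (-1 : ℝ) ^ (b + 1) * (truncatedProd (b + 1) P x - x p * truncatedProd b P x -
          (1 - x p) * ∏ q ∈ P, (1 - x q)) =
          (-1) ^ (b + 1) * (truncatedProd (b + 1) P x - ∏ q ∈ P, (1 - x q)) +
            x p * ((-1) ^ b * (truncatedProd b P x - ∏ q ∈ P, (1 - x q))) := by
        rw [pow_succ]
        ring
      rw [truncatedProd_insert _ hp, hrec]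
      exact ⟨by positivity, (add_le_add hupper' (mul_le_mul_of_nonneg_left hupper hp0)).trans
        (pow_div_factorial_add_mul_le hsum hp0 (b + 1))⟩

lemma prod_one_sub_le_truncatedProd {P : Finset ι} {x : ι → ℝ} (hx0 : ∀ p ∈ P, 0 ≤ x p)
    (hx1 : ∀ p ∈ P, x p ≤ 1) {b : ℕ} (hb : Even b) :
    ∏ p ∈ P, (1 - x p) ≤ truncatedProd b P x := by
  have := (neg_one_pow_mul_truncatedProd_sub_mem_Icc hx0 hx1 b).1
  rw [hb.neg_one_pow] at this
  linarith

end Bonferroni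

section Sieve

/-- The product of the elements of a finite set, in practice a square-free modulus given by the
set of its prime factors. -/
def setProd (A : Finset ℕ) : ℕ := ∏ p ∈ A, p

lemma setProd_union {A B : Finset ℕ} (h : Disjoint A B) :
    setProd (A ∪ B) = setProd A * setProd B := prod_union h

lemma setProd_dvd_setProd {A B : Finset ℕ} (h : A ⊆ B) : setProd A ∣ setProd B :=
  prod_dvd_prod_of_subset A B _ h

lemma setProd_dvd_iff {A : Finset ℕ} (hA : ∀ p ∈ A, p.Prime) {n : ℕ} :
    setProd A ∣ n ↔ ∀ p ∈ A, p ∣ n :=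
  ⟨fun h _ hp => (dvd_prod_of_mem id hp).trans h,
    fun h => prod_primes_dvd n (fun p hp => (hA p hp).prime) h⟩

lemma setProd_pos {A : Finset ℕ} (hA : ∀ p ∈ A, p.Prime) : 0 < setProd A :=
  prod_pos fun p hp => (hA p hp).pos

/-- The sets of at most `b i` primes of the `i`-th block. -/
noncomputable def blockSubsets (b : ℕ → ℕ) (i : ℕ) : Finset (Finset ℕ) :=
  {B ∈ (primeBlock i).powerset | #B ≤ b i}

/-- The moduli of the Brun sieve up to the `j`-th level: the sets of sieving primes with at most
`b i` elements in the `i`-th block, for each `i < j`. -/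
noncomputable def sieveSupport (b : ℕ → ℕ) (j : ℕ) : Finset (Finset ℕ) :=
  {A ∈ (sievingPrimes j).powerset | ∀ i < j, #(A ∩ primeBlock i) ≤ b i}

variable {b : ℕ → ℕ} {i j : ℕ} {A B : Finset ℕ}

lemma mem_blockSubsets : B ∈ blockSubsets b i ↔ B ⊆ primeBlock i ∧ #B ≤ b i := by
  rw [blockSubsets, mem_filter, mem_powerset]

lemma mem_sieveSupport :
    A ∈ sieveSupport b j ↔ A ⊆ sievingPrimes j ∧ ∀ i < j, #(A ∩ primeBlock i) ≤ b i := by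
  rw [sieveSupport, mem_filter, mem_powerset]

lemma sieveSupport_zero : sieveSupport b 0 = {∅} := by
  ext A
  rw [mem_sieveSupport, sievingPrimes_zero, subset_empty, mem_singleton]
  exact and_iff_left fun i hi => absurd hi i.not_lt_zero

lemma primeBlock_subset_sievingPrimes (h : i < j) : primeBlock i ⊆ sievingPrimes j :=
  filter_subset_filter _ (Ioc_subset_Ioc (two_le_level i) (level_monotone h))

lemma prime_of_mem_sieveSupport (hA : A ∈ sieveSupport b j) : ∀ p ∈ A, p.Prime :=
  fun _ hp => prime_of_mem_sievingPrimes ((mem_sieveSupport.1 hA).1 hp)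

lemma disjoint_of_mem_sieveSupport (hA : A ∈ sieveSupport b j) (hB : B ∈ blockSubsets b j) :
    Disjoint A B :=
  (disjoint_sievingPrimes_primeBlock j).mono (mem_sieveSupport.1 hA).1 (mem_blockSubsets.1 hB).1

lemma union_mem_sieveSupport (hA : A ∈ sieveSupport b j) (hB : B ∈ blockSubsets b j) :
    A ∪ B ∈ sieveSupport b (j + 1) := by
  obtain ⟨hAj, hAb⟩ := mem_sieveSupport.1 hA
  obtain ⟨hBj, hBb⟩ := mem_blockSubsets.1 hB
  have hdisj := disjoint_sievingPrimes_primeBlock j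
  rw [mem_sieveSupport, sievingPrimes_succ]
  refine ⟨union_subset_union hAj hBj, fun i hi => ?_⟩
  rw [union_inter_distrib_right]
  obtain hij | rfl := Nat.lt_succ_iff_lt_or_eq.1 hi
  · rw [disjoint_iff_inter_eq_empty.1 (hdisj.symm.mono hBj (primeBlock_subset_sievingPrimes hij)),
      union_empty]
    exact hAb i hij
  · rw [disjoint_iff_inter_eq_empty.1 (hdisj.mono_left hAj), empty_union, inter_eq_left.2 hBj]
    exact hBb

lemma inter_mem_sieveSupport (hA : A ∈ sieveSupport b (j + 1)) :
    A ∩ sievingPrimes j ∈ sieveSupport b j :=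
  mem_sieveSupport.2 ⟨inter_subset_right, fun i hi =>
    (card_le_card (inter_subset_inter_right inter_subset_left)).trans
      ((mem_sieveSupport.1 hA).2 i (hi.trans j.lt_succ_self))⟩

lemma inter_mem_blockSubsets (hA : A ∈ sieveSupport b (j + 1)) :
    A ∩ primeBlock j ∈ blockSubsets b j :=
  mem_blockSubsets.2 ⟨inter_subset_right, (mem_sieveSupport.1 hA).2 j j.lt_succ_self⟩

lemma sum_sieveSupport_succ {M : Type*} [AddCommMonoid M] (b : ℕ → ℕ) (j : ℕ)
    (Φ : Finset ℕ → M) :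
    ∑ C ∈ sieveSupport b (j + 1), Φ C =
      ∑ A ∈ sieveSupport b j, ∑ B ∈ blockSubsets b j, Φ (A ∪ B) := by
  rw [← sum_product']
  refine sum_nbij' (fun C => (C ∩ sievingPrimes j, C ∩ primeBlock j)) (fun q => q.1 ∪ q.2)
    (fun C hC => mem_product.2 ⟨inter_mem_sieveSupport hC, inter_mem_blockSubsets hC⟩)
    (fun q hq => ?_) (fun C hC => ?_) (fun q hq => ?_) fun C hC => ?_
  · exact union_mem_sieveSupport (mem_product.1 hq).1 (mem_product.1 hq).2
  · rw [← inter_union_distrib_left, ← sievingPrimes_succ,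
      inter_eq_left.2 (mem_sieveSupport.1 hC).1]
  · have hq₁ := (mem_sieveSupport.1 (mem_product.1 hq).1).1
    have hq₂ := (mem_blockSubsets.1 (mem_product.1 hq).2).1
    have hdisj := disjoint_sievingPrimes_primeBlock j
    rw [union_inter_distrib_right, union_inter_distrib_right, inter_eq_left.2 hq₁,
      inter_eq_left.2 hq₂, disjoint_iff_inter_eq_empty.1 (hdisj.symm.mono_left hq₂),
      disjoint_iff_inter_eq_empty.1 (hdisj.mono_left hq₁), union_empty, empty_union]
  · rw [← inter_union_distrib_left, ← sievingPrimes_succ,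
      inter_eq_left.2 (mem_sieveSupport.1 hC).1]

lemma sum_sieveSupport_prod_neg (b : ℕ → ℕ) (j : ℕ) (x : ℕ → ℝ) :
    ∑ A ∈ sieveSupport b j, ∏ p ∈ A, (-x p) =
      ∏ i ∈ range j, truncatedProd (b i) (primeBlock i) x := by
  induction j with
  | zero => rw [sieveSupport_zero, sum_singleton, prod_empty, range_zero, prod_empty]
  | succ j ih =>
    rw [sum_sieveSupport_succ, prod_range_succ, ← ih, sum_mul]
    refine sum_congr rfl fun A hA => ?_
    rw [truncatedProd, mul_sum]
    exact sum_congr rfl fun B hB => prod_union (disjoint_of_mem_sieveSupport hA hB)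

/-- The truncation to monomials of degree at most `b i` of the density of the integers that
survive sieving by the `i`-th block. -/
noncomputable def blockMass (b : ℕ → ℕ) (i : ℕ) : ℝ :=
  truncatedProd (b i) (primeBlock i) fun p => (p : ℝ)⁻¹

/-- The Brun sieve weights up to the `j`-th level, normalized to have mean one. -/
noncomputable def sieveWeight (b : ℕ → ℕ) (j : ℕ) (A : Finset ℕ) : ℝ :=
  if A ∈ sieveSupport b j then (-1) ^ #A / ∏ i ∈ range j, blockMass b i else 0

/-- The Brun sieve up to the `j`-th level: a nonnegative model, of mean one, for the indicator
function of the integers without prime factors among the sieving primes. -/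
noncomputable def brunSieve (b : ℕ → ℕ) (j : ℕ) : ℕ → ℝ :=
  divisorSum (sieveSupport b j) setProd (sieveWeight b j)

lemma brunSieve_eq_prod (b : ℕ → ℕ) (j n : ℕ) :
    brunSieve b j n = ∏ i ∈ range j,
      (truncatedProd (b i) (primeBlock i) (fun p => if p ∣ n then 1 else 0) / blockMass b i) := by
  rw [prod_div_distrib, ← sum_sieveSupport_prod_neg, brunSieve, divisorSum, sum_filter, sum_div]
  refine sum_congr rfl fun A hA => ?_
  have hdvd := setProd_dvd_iff (n := n) (prime_of_mem_sieveSupport hA)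
  split_ifs with h
  · have hprod : ∏ p ∈ A, (-if p ∣ n then 1 else 0 : ℝ) = (-1) ^ #A :=
      prod_eq_pow_card fun p hp => by rw [if_pos (hdvd.1 h p hp)]
    rw [sieveWeight, if_pos hA, hprod]
  · obtain ⟨p, hp, hpn⟩ : ∃ p ∈ A, ¬p ∣ n := by
      by_contra! hall
      exact h (hdvd.2 hall)
    rw [prod_eq_zero hp (by rw [if_neg hpn, neg_zero]), zero_div]

lemma inv_le_one_of_mem_primeBlock {p : ℕ} (hp : p ∈ primeBlock i) : (p : ℝ)⁻¹ ≤ 1 := by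
  linarith [inv_le_one_third (three_le_of_mem_primeBlock hp)]

lemma blockDensity_le_blockMass (hb : Even (b i)) : blockDensity i ≤ blockMass b i :=
  prod_one_sub_le_truncatedProd (fun _ _ => by positivity)
    (fun _ => inv_le_one_of_mem_primeBlock) hb

lemma blockMass_pos (hb : Even (b i)) : 0 < blockMass b i :=
  (blockDensity_pos i).trans_le (blockDensity_le_blockMass hb)

lemma brunSieve_nonneg (hb : ∀ i, Even (b i)) (j n : ℕ) : 0 ≤ brunSieve b j n := by
  have hindicator (p : ℕ) : (if p ∣ n then 1 else 0 : ℝ) ∈ Set.Icc 0 1 := by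
    split_ifs <;> simp
  rw [brunSieve_eq_prod]
  refine prod_nonneg fun i _ => div_nonneg ?_ (blockMass_pos (hb i)).le
  exact (prod_nonneg fun p _ => sub_nonneg.2 (hindicator p).2).trans
    (prod_one_sub_le_truncatedProd (fun p _ => (hindicator p).1) (fun p _ => (hindicator p).2)
      (hb i))

lemma brunSieve_zero (b : ℕ → ℕ) (n : ℕ) : brunSieve b 0 n = 1 := by
  rw [brunSieve_eq_prod, range_zero, prod_empty]

lemma brunSieve_prime {q : ℕ} (hq : q.Prime) (hqj : level j < q) (b : ℕ → ℕ) :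
    brunSieve b j q = ∏ i ∈ range j, (blockMass b i)⁻¹ := by
  rw [brunSieve_eq_prod]
  refine prod_congr rfl fun i hi => ?_
  have hnot_dvd : ∀ p ∈ primeBlock i, ¬p ∣ q := by
    intro p hp hpq
    obtain ⟨⟨_, hple⟩, hp⟩ := mem_primesBetween.1 hp
    have : level (i + 1) ≤ level j := level_monotone (mem_range.1 hi)
    have := (Nat.prime_dvd_prime_iff_eq hp hq).1 hpq
    omega
  have hone : truncatedProd (b i) (primeBlock i) (fun p => if p ∣ q then 1 else 0) = 1 := by
    rw [truncatedProd, sum_eq_single_of_mem ∅ (by simp), prod_empty]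
    intro B hB hne
    obtain ⟨p, hp⟩ := nonempty_iff_ne_empty.2 hne
    refine prod_eq_zero hp ?_
    rw [if_neg (hnot_dvd p (mem_powerset.1 (mem_filter.1 hB).1 hp)), neg_zero]
  rw [hone, one_div]

/-- The truncation orders of the sieve up to level `J`: the full sieve on the small blocks, and
progressively fewer prime factors on the large ones. -/
noncomputable def sieveOrder (J i : ℕ) : ℕ :=
  if (level (i + 1) : ℝ) ≤ scale J then 2 * level (i + 1) else 2 * (J - i)

lemma even_sieveOrder (J i : ℕ) : Even (sieveOrder J i) := by
  rw [sieveOrder]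
  split_ifs <;> exact even_two_mul _

lemma blockMass_of_two_mul_level (hb : b i = 2 * level (i + 1)) :
    blockMass b i = blockDensity i := by
  have hcard : #(primeBlock i) ≤ level (i + 1) - level i :=
    (card_filter_le _ _).trans_eq (Nat.card_Ioc _ _)
  exact truncatedProd_eq_prod (by omega) _

lemma blockMass_sieveOrder_le (J i : ℕ) :
    blockMass (sieveOrder J) i ≤ blockDensity i *
      (1 + Real.exp 10 * (5 ^ (2 * (J - i) + 1) / (2 * (J - i) + 1).factorial)) := by
  have hV := blockDensity_pos i
  by_cases h : (level (i + 1) : ℝ) ≤ scale J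
  · have hfull : sieveOrder J i = 2 * level (i + 1) := if_pos h
    rw [blockMass_of_two_mul_level hfull]
    exact le_mul_of_one_le_right hV.le (le_add_of_nonneg_right (by positivity))
  have hb : sieveOrder J i = 2 * (J - i) := if_neg h
  set u : ℝ := 5 ^ (2 * (J - i) + 1) / (2 * (J - i) + 1).factorial
  have hu : 0 ≤ u := by positivity
  have herror : blockMass (sieveOrder J) i - blockDensity i ≤ u := by
    have := (neg_one_pow_mul_truncatedProd_sub_mem_Icc (P := primeBlock i)
      (x := fun p => (p : ℝ)⁻¹) (fun p _ => by positivity)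
      (fun p hp => inv_le_one_of_mem_primeBlock hp) (sieveOrder J i)).2
    rw [(even_sieveOrder J i).neg_one_pow, one_mul] at this
    refine this.trans ?_
    rw [hb]
    unfold u
    gcongr
    exact sum_inv_primeBlock_le i
  have hone : 1 ≤ blockDensity i * Real.exp 10 := by
    calc (1 : ℝ) = Real.exp (-10) * Real.exp 10 := by rw [← Real.exp_add]; simp
      _ ≤ _ := by gcongr; exact exp_neg_ten_le_blockDensity i
  linarith [le_mul_of_one_le_left hu hone]

lemma exists_prod_blockMass_le : ∃ C : ℝ, 0 < C ∧ ∀ J,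
    ∏ i ∈ range J, blockMass (sieveOrder J) i ≤ C * ∏ i ∈ range J, blockDensity i := by
  refine ⟨Real.exp (Real.exp 10 * Real.exp 5), Real.exp_pos _, fun J => ?_⟩
  set u : ℕ → ℝ := fun n => 5 ^ n / n.factorial
  have hsum : ∑ i ∈ range J, u (2 * (J - i) + 1) ≤ Real.exp 5 := by
    have hinj : Set.InjOn (fun i => 2 * (J - i) + 1) (range J) := by
      intro a ha b hb hab
      rw [coe_range, Set.mem_Iio] at ha hb
      simp only at hab
      omega
    rw [← sum_image (f := u) hinj]
    refine le_trans (sum_le_sum_of_subset_of_nonneg (t := range (2 * J + 2)) ?_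
      fun n _ _ => by positivity) (Real.sum_le_exp_of_nonneg (by norm_num) _)
    intro n hn
    obtain ⟨i, _, rfl⟩ := mem_image.1 hn
    rw [mem_range]
    omega
  calc ∏ i ∈ range J, blockMass (sieveOrder J) i
      ≤ ∏ i ∈ range J, blockDensity i * Real.exp (Real.exp 10 * u (2 * (J - i) + 1)) := by
        refine prod_le_prod (fun i _ => (blockMass_pos (even_sieveOrder J i)).le) fun i _ => ?_
        refine (blockMass_sieveOrder_le J i).trans ?_
        have := blockDensity_pos i
        gcongr
        rw [add_comm]
        exact Real.add_one_le_exp _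
    _ = Real.exp (Real.exp 10 * ∑ i ∈ range J, u (2 * (J - i) + 1)) *
          ∏ i ∈ range J, blockDensity i := by
        rw [prod_mul_distrib, mul_comm, ← Real.exp_sum, ← mul_sum]
    _ ≤ Real.exp (Real.exp 10 * Real.exp 5) * ∏ i ∈ range J, blockDensity i := by
        have := prod_nonneg fun i (_ : i ∈ range J) => (blockDensity_pos i).le
        gcongr

theorem exists_mul_scale_le_brunSieve : ∃ c : ℝ, 0 < c ∧ ∀ J q : ℕ, q.Prime → level J < q →
    c * scale J ≤ brunSieve (sieveOrder J) J q := by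
  obtain ⟨C, hC, hmass⟩ := exists_prod_blockMass_le
  refine ⟨0.15 / C, by positivity, fun J q hq hJ => ?_⟩
  have hdensity := le_prod_inv_one_sub_inv J
  rw [prod_inv_distrib, ← prod_blockDensity] at hdensity
  have hm : 0 < ∏ i ∈ range J, blockMass (sieveOrder J) i :=
    prod_pos fun i _ => blockMass_pos (even_sieveOrder J i)
  rw [brunSieve_prime hq hJ, prod_inv_distrib]
  calc 0.15 / C * scale J = C⁻¹ * (0.15 * scale J) := by field_simp
    _ ≤ C⁻¹ * (∏ i ∈ range J, blockDensity i)⁻¹ := by gcongr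
    _ = (C * ∏ i ∈ range J, blockDensity i)⁻¹ := by rw [mul_inv]
    _ ≤ (∏ i ∈ range J, blockMass (sieveOrder J) i)⁻¹ := inv_anti₀ hm (hmass J)

end Sieve

section SieveIncrements

variable {b : ℕ → ℕ} {i j J q r : ℕ} {A B P : Finset ℕ}

/-- The change of the sieve weights caused by sieving by the `j`-th block. -/
noncomputable def sieveIncrement (b : ℕ → ℕ) (j : ℕ) (A : Finset ℕ) : ℝ :=
  sieveWeight b (j + 1) A - sieveWeight b j A

/-- The change of the sieve caused by sieving by the `j`-th block. -/
noncomputable def brunSieveIncrement (b : ℕ → ℕ) (j : ℕ) : ℕ → ℝ :=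
  divisorSum (sieveSupport b (j + 1)) setProd (sieveIncrement b j)

lemma empty_mem_blockSubsets : ∅ ∈ blockSubsets b i :=
  mem_blockSubsets.2 ⟨empty_subset _, Nat.zero_le _⟩

lemma sieveSupport_subset_succ : sieveSupport b j ⊆ sieveSupport b (j + 1) := fun A hA => by
  simpa only [union_empty] using union_mem_sieveSupport hA empty_mem_blockSubsets

lemma sum_sieveIncrement_mul (b : ℕ → ℕ) (j : ℕ) (w : Finset ℕ → ℝ) (p : Finset ℕ → Prop)
    [DecidablePred p] :
    ∑ A ∈ sieveSupport b (j + 1) with p A, sieveIncrement b j A * w A =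
      ∑ A ∈ sieveSupport b (j + 1) with p A, sieveWeight b (j + 1) A * w A -
        ∑ A ∈ sieveSupport b j with p A, sieveWeight b j A * w A := by
  rw [sum_subset (filter_subset_filter _ sieveSupport_subset_succ) (f := fun A =>
    sieveWeight b j A * w A), ← sum_sub_distrib]
  · exact sum_congr rfl fun A _ => sub_mul _ _ _
  · intro A hA hAj
    rw [sieveWeight, if_neg fun h => hAj (mem_filter.2 ⟨h, (mem_filter.1 hA).2⟩), zero_mul]

lemma brunSieveIncrement_eq_sub (b : ℕ → ℕ) (j n : ℕ) :
    brunSieveIncrement b j n = brunSieve b (j + 1) n - brunSieve b j n := by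
  simpa only [mul_one, brunSieveIncrement, brunSieve, divisorSum] using
    sum_sieveIncrement_mul b j (fun _ => 1) fun A => setProd A ∣ n

lemma brunSieve_eq_one_add_sum (b : ℕ → ℕ) (J n : ℕ) :
    brunSieve b J n = 1 + ∑ j ∈ range J, brunSieveIncrement b j n := by
  simp_rw [brunSieveIncrement_eq_sub]
  rw [sum_range_sub (brunSieve b · n), brunSieve_zero, add_sub_cancel]

lemma abs_sieveWeight_le (hb : ∀ i, Even (b i)) (j : ℕ) (A : Finset ℕ) :
    |sieveWeight b j A| ≤ (∏ i ∈ range j, blockDensity i)⁻¹ := by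
  have hdensity : 0 < ∏ i ∈ range j, blockDensity i := prod_pos fun i _ => blockDensity_pos i
  have hmass : 0 < ∏ i ∈ range j, blockMass b i := prod_pos fun i _ => blockMass_pos (hb i)
  rw [sieveWeight]
  split_ifs
  · rw [abs_div, abs_pow, abs_neg, abs_one, one_pow, abs_of_pos hmass, one_div]
    exact inv_anti₀ hdensity (prod_le_prod (fun i _ => (blockDensity_pos i).le)
      fun i _ => blockDensity_le_blockMass (hb i))
  · rw [abs_zero]
    positivity

lemma blockDensity_le_one (i : ℕ) : blockDensity i ≤ 1 :=
  prod_le_one (fun _ hp => (one_sub_inv_pos_of_three_le (three_le_of_mem_primeBlock hp)).le)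
    fun _ _ => sub_le_self _ (by positivity)

lemma abs_sieveIncrement_le (hb : ∀ i, Even (b i)) (j : ℕ) (A : Finset ℕ) :
    |sieveIncrement b j A| ≤ 2 * (∏ i ∈ range (j + 1), blockDensity i)⁻¹ := by
  have hmono : (∏ i ∈ range j, blockDensity i)⁻¹ ≤ (∏ i ∈ range (j + 1), blockDensity i)⁻¹ := by
    refine inv_anti₀ (prod_pos fun i _ => blockDensity_pos i) ?_
    rw [prod_range_succ]
    exact mul_le_of_le_one_right (prod_nonneg fun i _ => (blockDensity_pos i).le)
      (blockDensity_le_one j)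
  refine (abs_sub _ _).trans ?_
  linarith [abs_sieveWeight_le hb (j + 1) A, abs_sieveWeight_le hb j A]

/-- The product `∏ (1 + 1/p) / (1 - 1/p)` over the sieving primes of the `j`-th level, which bounds
the mean of the absolute values of the sieve weights. -/
noncomputable def sieveNorm (j : ℕ) : ℝ :=
  ∏ p ∈ sievingPrimes j, ((1 - (p : ℝ)⁻¹)⁻¹ * (1 + (p : ℝ)⁻¹))

lemma exists_sieveNorm_succ_le : ∃ C : ℝ, 0 < C ∧ ∀ j, sieveNorm (j + 1) ≤ C * scale j ^ 3 := by
  obtain ⟨C, hC, h⟩ := exists_prod_inv_one_sub_mul_one_add_le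
  refine ⟨C * (3 / 2) ^ 3, by positivity, fun j => (h (j + 1)).trans_eq ?_⟩
  rw [scale_succ, mul_pow, mul_assoc]

lemma sieveNorm_eq (j : ℕ) : sieveNorm j =
    (∏ i ∈ range j, blockDensity i)⁻¹ * ∏ p ∈ sievingPrimes j, (1 + (p : ℝ)⁻¹) := by
  rw [sieveNorm, prod_mul_distrib, prod_inv_distrib, prod_blockDensity]

lemma sieveNorm_nonneg (j : ℕ) : 0 ≤ sieveNorm j := by
  rw [sieveNorm_eq]
  have := prod_nonneg fun i (_ : i ∈ range j) => (blockDensity_pos i).le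
  positivity

lemma inv_setProd (A : Finset ℕ) : (setProd A : ℝ)⁻¹ = ∏ p ∈ A, (p : ℝ)⁻¹ := by
  rw [setProd, Nat.cast_prod, prod_inv_distrib]

lemma sum_powerset_inv_setProd (P : Finset ℕ) :
    ∑ A ∈ P.powerset, (setProd A : ℝ)⁻¹ = ∏ p ∈ P, (1 + (p : ℝ)⁻¹) := by
  simp only [prod_one_add, inv_setProd]

lemma sum_powerset_mem_inv_setProd_le (hr : r ∈ P) :
    ∑ A ∈ P.powerset with r ∈ A, (setProd A : ℝ)⁻¹ ≤ (r : ℝ)⁻¹ * ∏ p ∈ P, (1 + (p : ℝ)⁻¹) := by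
  obtain ⟨Q, hQ, rfl⟩ : ∃ Q, r ∉ Q ∧ P = insert r Q :=
    ⟨P.erase r, notMem_erase r P, (insert_erase hr).symm⟩
  have hnotMem : ∀ A ∈ Q.powerset, r ∉ A := fun A hA h => hQ (mem_powerset.1 hA h)
  rw [sum_filter, sum_powerset_insert hQ, sum_eq_zero fun A hA => if_neg (hnotMem A hA), zero_add,
    prod_insert hQ, ← sum_powerset_inv_setProd Q]
  calc ∑ A ∈ Q.powerset, (if r ∈ insert r A then (setProd (insert r A) : ℝ)⁻¹ else 0)
      = (r : ℝ)⁻¹ * ∑ A ∈ Q.powerset, (setProd A : ℝ)⁻¹ := by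
        rw [mul_sum]
        refine sum_congr rfl fun A hA => ?_
        rw [if_pos (mem_insert_self r A), inv_setProd, prod_insert (hnotMem A hA), inv_setProd]
    _ ≤ (r : ℝ)⁻¹ * ((1 + (r : ℝ)⁻¹) * ∑ A ∈ Q.powerset, (setProd A : ℝ)⁻¹) := by
        have : 0 ≤ ∑ A ∈ Q.powerset, (setProd A : ℝ)⁻¹ := sum_nonneg fun _ _ => by positivity
        gcongr
        exact le_mul_of_one_le_left this (le_add_of_nonneg_right (by positivity))

lemma sum_abs_sieveIncrement_div_le (hb : ∀ i, Even (b i)) (j : ℕ) :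
    ∑ A ∈ sieveSupport b (j + 1), |sieveIncrement b j A| / setProd A ≤ 2 * sieveNorm (j + 1) := by
  set V := ∏ i ∈ range (j + 1), blockDensity i with hV_def
  have hV : 0 ≤ V := prod_nonneg fun i _ => (blockDensity_pos i).le
  calc ∑ A ∈ sieveSupport b (j + 1), |sieveIncrement b j A| / setProd A
      ≤ ∑ A ∈ sieveSupport b (j + 1), 2 * V⁻¹ * (setProd A : ℝ)⁻¹ :=
        sum_le_sum fun A _ => by
          rw [div_eq_mul_inv]
          exact mul_le_mul_of_nonneg_right (abs_sieveIncrement_le hb j A) (by positivity)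
    _ ≤ ∑ A ∈ (sievingPrimes (j + 1)).powerset, 2 * V⁻¹ * (setProd A : ℝ)⁻¹ :=
        sum_le_sum_of_subset_of_nonneg (filter_subset _ _) fun _ _ _ => by positivity
    _ = 2 * sieveNorm (j + 1) := by
        rw [← mul_sum, sum_powerset_inv_setProd, sieveNorm_eq, hV_def, mul_assoc]

lemma sum_blockSubsets_div_setProd (hb : Even (b j)) :
    ∑ B ∈ blockSubsets b j, (-1) ^ #B / blockMass b j * (setProd B : ℝ)⁻¹ = 1 := by
  have hsum : ∑ B ∈ blockSubsets b j, (-1) ^ #B * (setProd B : ℝ)⁻¹ = blockMass b j :=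
    sum_congr rfl fun B _ => by rw [inv_setProd, prod_neg]
  simp_rw [div_mul_eq_mul_div]
  rw [← sum_div, hsum, div_self (blockMass_pos hb).ne']

lemma sieveWeight_union (hA : A ∈ sieveSupport b j) (hB : B ∈ blockSubsets b j) :
    sieveWeight b (j + 1) (A ∪ B) = sieveWeight b j A * ((-1) ^ #B / blockMass b j) := by
  rw [sieveWeight, sieveWeight, if_pos (union_mem_sieveSupport hA hB), if_pos hA,
    card_union_of_disjoint (disjoint_of_mem_sieveSupport hA hB), pow_add, prod_range_succ,
    mul_div_mul_comm]

lemma sum_sieveWeight_succ_div_setProd (hb : Even (b j))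
    (hq : q.Coprime (setProd (primeBlock j))) :
    ∑ A ∈ sieveSupport b (j + 1) with q ∣ setProd A, sieveWeight b (j + 1) A * (setProd A : ℝ)⁻¹ =
      ∑ A ∈ sieveSupport b j with q ∣ setProd A, sieveWeight b j A * (setProd A : ℝ)⁻¹ := by
  rw [sum_filter, sum_sieveSupport_succ, sum_filter]
  refine sum_congr rfl fun A hA => ?_
  have hterm : ∀ B ∈ blockSubsets b j,
      (if q ∣ setProd (A ∪ B) then sieveWeight b (j + 1) (A ∪ B) * (setProd (A ∪ B) : ℝ)⁻¹ else 0) =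
        (if q ∣ setProd A then sieveWeight b j A * (setProd A : ℝ)⁻¹ else 0) *
          ((-1) ^ #B / blockMass b j * (setProd B : ℝ)⁻¹) := by
    intro B hB
    have hcoprime : q.Coprime (setProd B) :=
      hq.coprime_dvd_right (setProd_dvd_setProd (mem_blockSubsets.1 hB).1)
    rw [setProd_union (disjoint_of_mem_sieveSupport hA hB), sieveWeight_union hA hB]
    simp only [hcoprime.dvd_mul_right]
    split_ifs
    · push_cast
      ring
    · rw [zero_mul]
  rw [sum_congr rfl hterm, ← mul_sum, sum_blockSubsets_div_setProd hb, mul_one]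

lemma dvd_setProd_iff_mem (hr : r.Prime) (hA : ∀ p ∈ A, p.Prime) : r ∣ setProd A ↔ r ∈ A := by
  rw [setProd, hr.prime.dvd_finsetProd_iff]
  constructor
  · rintro ⟨p, hp, hrp⟩
    rwa [(Nat.prime_dvd_prime_iff_eq hr (hA p hp)).1 hrp]
  · exact fun h => ⟨r, h, dvd_rfl⟩

lemma abs_sum_sieveWeight_div_setProd_le (hb : ∀ i, Even (b i)) (hr : r ∈ sievingPrimes j)
    (hrq : r ∣ q) :
    |∑ A ∈ sieveSupport b j with q ∣ setProd A, sieveWeight b j A * (setProd A : ℝ)⁻¹| ≤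
      sieveNorm j / r := by
  set V := ∏ i ∈ range j, blockDensity i
  have hV : 0 ≤ V := prod_nonneg fun i _ => (blockDensity_pos i).le
  calc |∑ A ∈ sieveSupport b j with q ∣ setProd A, sieveWeight b j A * (setProd A : ℝ)⁻¹|
      ≤ ∑ A ∈ sieveSupport b j with q ∣ setProd A, V⁻¹ * (setProd A : ℝ)⁻¹ := by
        refine (abs_sum_le_sum_abs _ _).trans (sum_le_sum fun A _ => ?_)
        rw [abs_mul, abs_of_nonneg (by positivity : (0 : ℝ) ≤ (setProd A : ℝ)⁻¹)]
        exact mul_le_mul_of_nonneg_right (abs_sieveWeight_le hb j A) (by positivity)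
    _ ≤ ∑ A ∈ (sievingPrimes j).powerset with r ∈ A, V⁻¹ * (setProd A : ℝ)⁻¹ := by
        refine sum_le_sum_of_subset_of_nonneg (fun A hA => ?_) fun _ _ _ => by positivity
        obtain ⟨hA, hqA⟩ := mem_filter.1 hA
        exact mem_filter.2 ⟨mem_powerset.2 (mem_sieveSupport.1 hA).1,
          (dvd_setProd_iff_mem (prime_of_mem_sievingPrimes hr) (prime_of_mem_sieveSupport hA)).1
            (hrq.trans hqA)⟩
    _ ≤ V⁻¹ * ((r : ℝ)⁻¹ * ∏ p ∈ sievingPrimes j, (1 + (p : ℝ)⁻¹)) := by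
        rw [← mul_sum]
        exact mul_le_mul_of_nonneg_left (sum_powerset_mem_inv_setProd_le hr) (by positivity)
    _ = sieveNorm j / r := by
        rw [sieveNorm_eq]
        ring

/-- The sum is the Fourier coefficient of the increment at the rationals of denominator `q`; it
vanishes unless `q` has a prime factor in the block. -/
theorem abs_sum_sieveIncrement_div_setProd_le (hb : ∀ i, Even (b i)) (j q : ℕ) :
    |∑ A ∈ sieveSupport b (j + 1) with q ∣ setProd A, sieveIncrement b j A / setProd A| ≤
      sieveNorm (j + 1) / level j := by
  have hlevel : (0 : ℝ) < level j := by exact_mod_cast two_pos.trans_le (two_le_level j)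
  simp_rw [div_eq_mul_inv (_ : ℝ) (setProd _ : ℝ)]
  rw [sum_sieveIncrement_mul]
  by_cases hq : ∃ r ∈ primeBlock j, r ∣ q
  · obtain ⟨r, hr, hrq⟩ := hq
    obtain ⟨⟨hlt, _⟩, hprime⟩ := mem_primesBetween.1 hr
    have hempty : {A ∈ sieveSupport b j | q ∣ setProd A} = ∅ := by
      refine filter_eq_empty_iff.2 fun A hA hqA => ?_
      have hrA := (dvd_setProd_iff_mem hprime (prime_of_mem_sieveSupport hA)).1 (hrq.trans hqA)
      exact disjoint_left.1 (disjoint_sievingPrimes_primeBlock j)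
        ((mem_sieveSupport.1 hA).1 hrA) hr
    rw [hempty, sum_empty, sub_zero]
    refine (abs_sum_sieveWeight_div_setProd_le hb
      (primeBlock_subset_sievingPrimes j.lt_succ_self hr) hrq).trans ?_
    have := sieveNorm_nonneg (j + 1)
    gcongr
  · push Not at hq
    have hcoprime : q.Coprime (setProd (primeBlock j)) :=
      Nat.Coprime.prod_right fun r hr =>
        ((mem_primesBetween.1 hr).2.coprime_iff_not_dvd.2 (hq r hr)).symm
    rw [sum_sieveWeight_succ_div_setProd (hb j) hcoprime, sub_self, abs_zero]
    exact div_nonneg (sieveNorm_nonneg _) hlevel.le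

lemma sum_scale_succ_le (J : ℕ) : ∑ i ∈ range J, scale (i + 1) ≤ 3 * scale J := by
  induction J with
  | zero =>
    rw [range_zero, sum_empty]
    linarith [scale_pos 0]
  | succ J ih =>
    rw [sum_range_succ, scale_succ]
    linarith

lemma sum_two_mul_sub_mul_scale_succ_le (J : ℕ) :
    ∑ i ∈ range J, 2 * ((J : ℝ) - i) * scale (i + 1) ≤ 18 * scale J := by
  induction J with
  | zero =>
    rw [range_zero, sum_empty]
    linarith [scale_pos 0]
  | succ J ih =>
    have hstep : ∑ i ∈ range (J + 1), 2 * (((J + 1 : ℕ) : ℝ) - i) * scale (i + 1) =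
        ∑ i ∈ range (J + 1), 2 * ((J : ℝ) - i) * scale (i + 1) +
          2 * ∑ i ∈ range (J + 1), scale (i + 1) := by
      rw [mul_sum, ← sum_add_distrib]
      refine sum_congr rfl fun i _ => ?_
      push_cast
      ring
    rw [hstep, sum_range_succ, sub_self]
    linarith [sum_scale_succ_le (J + 1), scale_succ J]

lemma setProd_sievingPrimes_dvd_primorial (j : ℕ) :
    setProd (sievingPrimes j) ∣ primorial (level j) := by
  refine prod_dvd_prod_of_subset _ _ _ fun p hp => ?_
  obtain ⟨⟨_, hle⟩, hprime⟩ := mem_primesBetween.1 hp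
  exact mem_filter.2 ⟨mem_range.2 (Nat.lt_succ_of_le hle), hprime⟩

lemma setProd_dvd_setProd_sievingPrimes (hA : A ∈ sieveSupport b j) :
    setProd A ∣ setProd (sievingPrimes j) :=
  setProd_dvd_setProd (mem_sieveSupport.1 hA).1

lemma setProd_le_exp_of_mem_blockSubsets (hiJ : i ≤ J) (hb : b i = 2 * (J - i))
    (hB : B ∈ blockSubsets b i) :
    (setProd B : ℝ) ≤ Real.exp (2 * ((J : ℝ) - i) * scale (i + 1)) := by
  obtain ⟨hBi, hcard⟩ := mem_blockSubsets.1 hB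
  have hpow : setProd B ≤ level (i + 1) ^ (2 * (J - i)) :=
    (prod_le_pow_card _ _ _ fun p hp => (mem_primesBetween.1 (hBi hp)).1.2).trans
      (Nat.pow_le_pow_right (two_pos.trans_le (two_le_level _)) (hcard.trans_eq hb))
  calc (setProd B : ℝ) ≤ (level (i + 1) : ℝ) ^ (2 * (J - i)) := by exact_mod_cast hpow
    _ ≤ Real.exp (scale (i + 1)) ^ (2 * (J - i)) := by
      gcongr
      exact level_le_exp _
    _ = _ := by
      rw [← Real.exp_nat_mul, Nat.cast_mul, Nat.cast_sub hiJ, Nat.cast_two]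

lemma setProd_le_primorial_mul_exp (hjJ : j ≤ J) (hA : A ∈ sieveSupport (sieveOrder J) j) :
    (setProd A : ℝ) ≤ primorial ⌊scale J⌋₊ *
      Real.exp (∑ i ∈ range j, 2 * ((J : ℝ) - i) * scale (i + 1)) := by
  have hterm : ∀ i ∈ range j, 0 ≤ 2 * ((J : ℝ) - i) * scale (i + 1) := by
    intro i hi
    have : (i : ℝ) ≤ J := by exact_mod_cast (mem_range.1 hi).le.trans hjJ
    exact mul_nonneg (by linarith) (scale_pos _).le
  induction j generalizing A with
  | zero =>
    obtain rfl : A = ∅ := by simpa only [sieveSupport_zero, mem_singleton] using hA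
    rw [range_zero, sum_empty, Real.exp_zero, mul_one, setProd, prod_empty]
    exact_mod_cast primorial_pos _
  | succ j ih =>
    by_cases hsmall : (level (j + 1) : ℝ) ≤ scale J
    · have hle : setProd A ≤ primorial ⌊scale J⌋₊ :=
        (Nat.le_of_dvd (primorial_pos _) ((setProd_dvd_setProd_sievingPrimes hA).trans
          (setProd_sievingPrimes_dvd_primorial _))).trans (primorial_mono (Nat.le_floor hsmall))
      calc (setProd A : ℝ) ≤ primorial ⌊scale J⌋₊ := by exact_mod_cast hle
        _ ≤ _ := le_mul_of_one_le_right (by positivity) (Real.one_le_exp (sum_nonneg hterm))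
    · have hsplit : A = A ∩ sievingPrimes j ∪ A ∩ primeBlock j := by
        rw [← inter_union_distrib_left, ← sievingPrimes_succ,
          inter_eq_left.2 (mem_sieveSupport.1 hA).1]
      have hA₁ := inter_mem_sieveSupport hA
      have hA₂ := inter_mem_blockSubsets hA
      have hle₁ := ih (by omega) hA₁ fun i hi => hterm i (mem_range.2 (by grind))
      have hle₂ := setProd_le_exp_of_mem_blockSubsets (by omega : j ≤ J) (if_neg hsmall) hA₂
      rw [hsplit, setProd_union (disjoint_of_mem_sieveSupport hA₁ hA₂), sum_range_succ,
        Real.exp_add, Nat.cast_mul, ← mul_assoc]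
      gcongr

lemma primorial_floor_le_exp {x : ℝ} (hx : 0 ≤ x) :
    (primorial ⌊x⌋₊ : ℝ) ≤ Real.exp (2 * x) := by
  calc (primorial ⌊x⌋₊ : ℝ) ≤ 4 ^ ⌊x⌋₊ := by exact_mod_cast primorial_le_four_pow _
    _ = Real.exp (⌊x⌋₊ * Real.log 4) := by rw [Real.exp_nat_mul, Real.exp_log (by norm_num)]
    _ ≤ Real.exp (2 * x) := by
      have hfloor := Nat.floor_le hx
      rw [Real.exp_le_exp, mul_comm 2]
      gcongr
      linarith [log_four_le]

lemma setProd_le_exp (hjJ : j ≤ J) (hA : A ∈ sieveSupport (sieveOrder J) j) :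
    (setProd A : ℝ) ≤ Real.exp (20 * scale J) := by
  have hsum : ∑ i ∈ range j, 2 * ((J : ℝ) - i) * scale (i + 1) ≤ 18 * scale J := by
    refine (sum_le_sum_of_subset_of_nonneg (range_subset_range.2 hjJ) fun i hi _ => ?_).trans
      (sum_two_mul_sub_mul_scale_succ_le J)
    have : (i : ℝ) ≤ J := by exact_mod_cast (mem_range.1 hi).le
    exact mul_nonneg (by linarith) (scale_pos _).le
  calc (setProd A : ℝ) ≤ _ := setProd_le_primorial_mul_exp hjJ hA
    _ ≤ Real.exp (2 * scale J) * Real.exp (18 * scale J) := by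
      gcongr
      exact primorial_floor_le_exp (scale_pos J).le
    _ = Real.exp (20 * scale J) := by
      rw [← Real.exp_add]
      ring_nf

lemma sieveSupport_congr {b' : ℕ → ℕ} (h : ∀ i < j, b i = b' i) :
    sieveSupport b j = sieveSupport b' j := by
  ext A
  simp +contextual only [mem_sieveSupport, h]

lemma sieveWeight_congr {b' : ℕ → ℕ} (h : ∀ i < j, b i = b' i) :
    sieveWeight b j = sieveWeight b' j := by
  funext A
  rw [sieveWeight, sieveWeight, sieveSupport_congr h]
  congr 2
  exact prod_congr rfl fun i hi => by rw [blockMass, blockMass, h i (mem_range.1 hi)]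

lemma brunSieveIncrement_congr {b' : ℕ → ℕ} (h : ∀ i ≤ j, b i = b' i) :
    brunSieveIncrement b j = brunSieveIncrement b' j := by
  have hsucc : ∀ i < j + 1, b i = b' i := fun i hi => h i (Nat.le_of_lt_succ hi)
  have hweight : sieveIncrement b j = sieveIncrement b' j := by
    funext A
    rw [sieveIncrement, sieveIncrement, sieveWeight_congr hsucc,
      sieveWeight_congr fun i hi => h i hi.le]
  rw [brunSieveIncrement, brunSieveIncrement, sieveSupport_congr hsucc, hweight]

/-- Truncation orders for which the sieve is the full sieve of Eratosthenes. -/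
noncomputable def fullSieveOrder (i : ℕ) : ℕ := 2 * level (i + 1)

lemma brunSieveIncrement_sieveOrder (h : (level (j + 1) : ℝ) ≤ scale J) :
    brunSieveIncrement (sieveOrder J) j = brunSieveIncrement fullSieveOrder j :=
  brunSieveIncrement_congr fun _ hi => if_pos <|
    le_trans (by exact_mod_cast level_monotone (Nat.succ_le_succ hi)) h

lemma brunSieveIncrement_periodic (b : ℕ → ℕ) {L : ℕ} (hL : setProd (sievingPrimes (j + 1)) ∣ L) :
    Function.Periodic (brunSieveIncrement b j) L := by
  intro n
  rw [brunSieveIncrement, divisorSum, divisorSum]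
  congr 1
  refine filter_congr fun A hA => ?_
  exact (Nat.dvd_add_iff_left ((setProd_dvd_setProd_sievingPrimes hA).trans hL)).symm

end SieveIncrements

section WeightedAverages

/-- The averages `f ↦ N⁻¹ ∑_{1 ≤ n ≤ N} h(n) f(· + n)`, as linear operators on functions on `ℤ`. -/
noncomputable def weightedAverage (h : ℕ → ℝ) (N : ℕ) : (ℤ → ℂ) →ₗ[ℂ] (ℤ → ℂ) where
  toFun f x := (N : ℂ)⁻¹ * ∑ n ∈ Icc 1 N, (h n : ℂ) * f (x + n)
  map_add' f g := by
    ext x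
    simp only [Pi.add_apply, mul_add, sum_add_distrib]
  map_smul' c f := by
    ext x
    simp only [Pi.smul_apply, smul_eq_mul, RingHom.id_apply, mul_sum, mul_left_comm c]

lemma weightedAverage_apply (h : ℕ → ℝ) (N : ℕ) (f : ℤ → ℂ) (x : ℤ) :
    weightedAverage h N f x = (N : ℂ)⁻¹ * ∑ n ∈ Icc 1 N, (h n : ℂ) * f (x + n) := rfl

lemma birkhoffSum_add_right {M : Type*} [AddCommMonoid M] (F : ℤ → M) (d x : ℤ) (n : ℕ) :
    birkhoffSum (· + d) F n x = ∑ k ∈ range n, F (x + k * d) := by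
  simp only [birkhoffSum, add_right_iterate, nsmul_eq_mul]

lemma birkhoffSum_div_le_ergodicMaximal {α : Type*} (T : α → α) (F : α → ℝ≥0∞) (x : α) {K : ℕ}
    (hK : 0 < K) : birkhoffSum T F K x / K ≤ ergodicMaximal T F x := by
  obtain ⟨n, rfl⟩ := Nat.exists_eq_add_one.2 hK
  exact le_iSup (fun n : ℕ => birkhoffSum T F (n + 1) x / (n + 1 : ℕ)) n

lemma inv_mul_sum_Icc_div_le (F : ℤ → ℝ≥0∞) (d N : ℕ) (x : ℤ) :
    (N : ℝ≥0∞)⁻¹ * ∑ k ∈ Icc 1 (N / d), F (x + (k * d : ℕ)) ≤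
      (d : ℝ≥0∞)⁻¹ * ergodicMaximal (· + (d : ℤ)) F (x + d) := by
  rcases Nat.eq_zero_or_pos (N / d) with h0 | hpos
  · simp [h0]
  have hsum : ∑ k ∈ Icc 1 (N / d), F (x + (k * d : ℕ)) =
      birkhoffSum (· + (d : ℤ)) F (N / d) (x + d) := by
    rw [birkhoffSum_add_right, ← Ico_add_one_right_eq_Icc, sum_Ico_eq_sum_range]
    refine sum_congr rfl fun k _ => congrArg F ?_
    push_cast
    ring
  calc (N : ℝ≥0∞)⁻¹ * ∑ k ∈ Icc 1 (N / d), F (x + (k * d : ℕ))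
      ≤ ((N / d * d : ℕ) : ℝ≥0∞)⁻¹ * birkhoffSum (· + (d : ℤ)) F (N / d) (x + d) := by
        rw [hsum]
        gcongr
        exact Nat.div_mul_le_self N d
    _ = (d : ℝ≥0∞)⁻¹ * (birkhoffSum (· + (d : ℤ)) F (N / d) (x + d) / (N / d : ℕ)) := by
        rw [Nat.cast_mul, ENNReal.mul_inv (Or.inr (ENNReal.natCast_ne_top d))
          (Or.inl (ENNReal.natCast_ne_top _)), div_eq_mul_inv]
        ring
    _ ≤ _ := by
        gcongr
        exact birkhoffSum_div_le_ergodicMaximal _ F _ hpos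

lemma enorm_weightedAverage_divisorSum_le {ι : Type*} (s : Finset ι) {d : ι → ℕ} (c : ι → ℝ)
    (hd : ∀ A ∈ s, 0 < d A) (N : ℕ) (f : ℤ → ℂ) (x : ℤ) :
    ‖weightedAverage (divisorSum s d c) N f x‖ₑ ≤
      ∑ A ∈ s, ENNReal.ofReal (|c A| / d A) *
        ergodicMaximal (· + (d A : ℤ)) (fun y => ‖f y‖ₑ) (x + d A) := by
  rw [weightedAverage_apply, sum_Icc_divisorSum_mul s d c fun n => f (x + n), mul_sum]
  refine (enorm_sum_le _ _).trans (sum_le_sum fun A hA => ?_)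
  have hN : ‖(N : ℂ)⁻¹‖ₑ ≤ (N : ℝ≥0∞)⁻¹ := by
    rcases Nat.eq_zero_or_pos N with rfl | hN
    · simp
    · rw [enorm_inv (Nat.cast_ne_zero.2 hN.ne'), ← ofReal_norm, Complex.norm_natCast,
        ENNReal.ofReal_natCast]
  calc ‖(N : ℂ)⁻¹ * ((c A : ℂ) * ∑ k ∈ Icc 1 (N / d A), f (x + (k * d A : ℕ)))‖ₑ
      ≤ (N : ℝ≥0∞)⁻¹ * (ENNReal.ofReal |c A| *
          ∑ k ∈ Icc 1 (N / d A), ‖f (x + (k * d A : ℕ))‖ₑ) := by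
        rw [enorm_mul, enorm_mul, ← ofReal_norm (c A : ℂ), Complex.norm_real, Real.norm_eq_abs]
        gcongr
        exact enorm_sum_le _ _
    _ = ENNReal.ofReal |c A| *
          ((N : ℝ≥0∞)⁻¹ * ∑ k ∈ Icc 1 (N / d A), ‖f (x + (k * d A : ℕ))‖ₑ) := mul_left_comm _ _ _
    _ ≤ ENNReal.ofReal |c A| * ((d A : ℝ≥0∞)⁻¹ *
          ergodicMaximal (· + (d A : ℤ)) (fun y => ‖f y‖ₑ) (x + d A)) :=
        mul_le_mul_right (inv_mul_sum_Icc_div_le (fun y => ‖f y‖ₑ) (d A) N x) _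
    _ = _ := by
        rw [ENNReal.ofReal_div_of_pos (Nat.cast_pos.2 (hd A hA)), ENNReal.ofReal_natCast,
          div_eq_mul_inv, mul_assoc]

lemma eLpNorm'_comp_add_right {ε : Type*} [ENorm ε] (F : ℤ → ε) (p : ℝ) (a : ℤ) :
    eLpNorm' (fun x => F (x + a)) p .count = eLpNorm' F p .count := by
  rw [eLpNorm'_count, eLpNorm'_count, ← (Equiv.addRight a).tsum_eq fun x => ‖F x‖ₑ ^ p]
  rfl

lemma maximalBound_weightedAverage_divisorSum {ι κ : Type*} {p : ℝ} (hp : 1 < p) {S : Finset ι}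
    {s : κ → Finset ι} {d : ι → ℕ} {c : κ → ι → ℝ} {a : ι → ℝ} (hsS : ∀ m, s m ⊆ S)
    (hd : ∀ A ∈ S, 0 < d A) (ha : ∀ A, 0 ≤ a A) (hca : ∀ m A, |c m A| ≤ a A) (N : κ → ℕ)
    (M : Finset κ) :
    MaximalBound (fun m => weightedAverage (divisorSum (s m) d (c m)) (N m)) M p
      (∑ A ∈ S, a A / d A * (2 * p / (p - 1))) := by
  intro f _
  set F : ι → ℤ → ℝ≥0∞ := fun A x =>
    ergodicMaximal (· + (d A : ℤ)) (fun y => ‖f y‖ₑ) (x + d A) with hF_def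
  have hpointwise : ∀ x, ⨆ m ∈ M, ‖weightedAverage (divisorSum (s m) d (c m)) (N m) f x‖ₑ ≤
      ∑ A ∈ S, ENNReal.ofReal (a A / d A) * F A x := fun x => iSup₂_le fun m _ =>
    calc _ ≤ _ := enorm_weightedAverage_divisorSum_le _ _ (fun A hA => hd A (hsS m hA)) _ _ _
      _ ≤ ∑ A ∈ S, ENNReal.ofReal (|c m A| / d A) * F A x := sum_le_sum_of_subset (hsS m)
      _ ≤ _ := by gcongr; exact hca m _
  have hF : ∀ A, eLpNorm' (F A) p .count ≤
      ENNReal.ofReal (2 * p / (p - 1)) * eLpNorm' f p .count := fun A => by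
    rw [hF_def, eLpNorm'_comp_add_right (ergodicMaximal _ _), ← eLpNorm'_enorm (f := f)]
    exact eLpNorm'_ergodicMaximal_le hp (measurePreserving_add_right _ _) .of_discrete
  have : 0 ≤ 2 * p / (p - 1) := div_nonneg (by linarith) (by linarith)
  calc eLpNorm' (fun x => ⨆ m ∈ M, ‖weightedAverage (divisorSum (s m) d (c m)) (N m) f x‖ₑ) p .count
      ≤ eLpNorm' (∑ A ∈ S, fun x => ENNReal.ofReal (a A / d A) * F A x) p .count := by
        refine eLpNorm'_mono_enorm_ae (by linarith) (.of_forall fun x => ?_)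
        simpa only [enorm_eq_self, Finset.sum_apply] using hpointwise x
    _ ≤ ∑ A ∈ S, eLpNorm' (fun x => ENNReal.ofReal (a A / d A) * F A x) p .count :=
        eLpNorm'_sum_le (fun _ _ => Measurable.of_discrete.aestronglyMeasurable) hp.le
    _ ≤ ∑ A ∈ S, ENNReal.ofReal (a A / d A) *
          (ENNReal.ofReal (2 * p / (p - 1)) * eLpNorm' f p .count) := by
        refine sum_le_sum fun A _ => (eLpNorm'_le_mul_eLpNorm'_of_ae_le_mul
          (Measurable.of_discrete.aestronglyMeasurable) (.of_forall fun x => ?_)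
          (by linarith)).trans (mul_le_mul_right (hF A) _)
        simp only [enorm_eq_self, le_refl]
    _ = _ := by
        rw [ENNReal.ofReal_sum_of_nonneg fun A _ => by have := ha A; positivity, sum_mul]
        refine sum_congr rfl fun A _ => ?_
        rw [ENNReal.ofReal_mul (div_nonneg (ha A) (Nat.cast_nonneg _)), mul_assoc]

lemma eLpNorm'_two_weightedAverage_le {h : ℕ → ℝ} {N : ℕ} (hN : 0 < N) {B : ℝ}
    (hB : ∀ t : UnitAddCircle, ‖∑ n ∈ Icc 1 N, (h n : ℂ) * fourier (n : ℤ) t‖ ≤ N * B) {f : ℤ → ℂ}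
    (hf : f.HasFiniteSupport) :
    eLpNorm' (weightedAverage h N f) 2 .count ≤ ENNReal.ofReal B * eLpNorm' f 2 .count := by
  have hN' : (0 : ℝ) < N := Nat.cast_pos.2 hN
  calc eLpNorm' (weightedAverage h N f) 2 .count
      ≤ ‖(N : ℂ)⁻¹‖ₑ * eLpNorm' (fun x => ∑ n ∈ Icc 1 N, (h n : ℂ) * f (x + n)) 2 .count :=
        eLpNorm'_le_mul_eLpNorm'_of_ae_le_mul (Measurable.of_discrete.aestronglyMeasurable)
          (.of_forall fun x => by rw [weightedAverage_apply, enorm_mul]) two_pos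
    _ ≤ ‖(N : ℂ)⁻¹‖ₑ * (ENNReal.ofReal (N * B) * eLpNorm' f 2 .count) := by
        gcongr
        exact eLpNorm'_two_sum_mul_comp_add_le hB hf
    _ = ENNReal.ofReal B * eLpNorm' f 2 .count := by
        rw [← mul_assoc, ← ofReal_norm, norm_inv, Complex.norm_natCast,
          ← ENNReal.ofReal_mul (by positivity), inv_mul_cancel_left₀ hN'.ne']

lemma weightedAverage_mul_of_periodic {h : ℕ → ℝ} {L : ℕ} (hper : Function.Periodic h L) (K : ℕ)
    (f : ℤ → ℂ) (x : ℤ) :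
    weightedAverage h (K * L) f x =
      (K : ℂ)⁻¹ * birkhoffSum (· + (L : ℤ)) (weightedAverage h L f) K x := by
  simp only [birkhoffSum_add_right, weightedAverage_apply, ← mul_sum, sum_Icc_one_eq_sum_range,
    sum_range_mul_eq_sum_sum, ← mul_assoc, Nat.cast_mul, mul_inv]
  congr 1
  refine sum_congr rfl fun k _ => sum_congr rfl fun r _ => ?_
  have hshift : h (k * L + r + 1) = h (r + 1) := by
    rw [add_assoc, add_comm]
    exact hper.nat_mul k (r + 1)
  rw [hshift]
  push_cast
  ring_nf

lemma enorm_weightedAverage_mul_le_ergodicMaximal {h : ℕ → ℝ} {L : ℕ}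
    (hper : Function.Periodic h L) {K : ℕ} (hK : 0 < K) (f : ℤ → ℂ) (x : ℤ) :
    ‖weightedAverage h (K * L) f x‖ₑ ≤
      ergodicMaximal (· + (L : ℤ)) (fun y => ‖weightedAverage h L f y‖ₑ) x := by
  refine le_trans ?_ (birkhoffSum_div_le_ergodicMaximal _ _ x hK)
  rw [weightedAverage_mul_of_periodic hper, enorm_mul, enorm_inv (Nat.cast_ne_zero.2 hK.ne'),
    ← ofReal_norm, Complex.norm_natCast, ENNReal.ofReal_natCast, mul_comm, div_eq_mul_inv]
  gcongr
  exact enorm_sum_le _ _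

end WeightedAverages

section SieveLength

variable {b : ℕ → ℕ} {j m : ℕ}

/-- The number `J` of blocks used in the sieve at the length `2 ^ m`, chosen so that `scale J` is
comparable to `m / 200`. -/
noncomputable def sieveDepth (m : ℕ) : ℕ := ⌊Real.logb (3 / 2) (m / 200)⌋₊

lemma scale_sieveDepth_le (hm : 200 ≤ m) : 200 * scale (sieveDepth m) ≤ m := by
  have hm' : (1 : ℝ) ≤ m / 200 := (one_le_div (by norm_num)).2 (by exact_mod_cast hm)
  have h := Nat.floor_le (Real.logb_nonneg (by norm_num : (1 : ℝ) < 3 / 2) hm')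
  rw [Real.le_logb_iff_rpow_le (by norm_num) (by positivity), Real.rpow_natCast] at h
  exact (le_div_iff₀' (by norm_num)).1 h

lemma lt_scale_sieveDepth (hm : 200 ≤ m) : (m : ℝ) < 300 * scale (sieveDepth m) := by
  have h := Nat.lt_floor_add_one (Real.logb (3 / 2) (m / 200))
  have hm' : (0 : ℝ) < m / 200 := div_pos (by exact_mod_cast (by omega : 0 < m)) (by norm_num)
  rw [Real.logb_lt_iff_lt_rpow (by norm_num) hm', ← Nat.cast_add_one, Real.rpow_natCast] at h
  have hscale : (m : ℝ) / 200 < scale (sieveDepth m + 1) := h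
  rw [scale_succ] at hscale
  linarith

/-- A common period of the sieve increments of levels up to `scale J`, in which no subset of the
sieving primes is discarded. The tenth power leaves room for the `ℓ²` bound over one period. -/
noncomputable def sieveModulus (J : ℕ) : ℕ := primorial ⌊scale J⌋₊ ^ 10

lemma sieveModulus_pos (J : ℕ) : 0 < sieveModulus J := pow_pos (primorial_pos _) _

lemma sieveModulus_sieveDepth_le (hm : 200 ≤ m) : sieveModulus (sieveDepth m) ≤ 2 ^ m := by
  have hfloor : 20 * ⌊scale (sieveDepth m)⌋₊ ≤ m := by
    have : (20 * ⌊scale (sieveDepth m)⌋₊ : ℝ) ≤ m := by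
      linarith [scale_sieveDepth_le hm, Nat.floor_le (scale_pos (sieveDepth m)).le,
        scale_pos (sieveDepth m)]
    exact_mod_cast this
  calc sieveModulus (sieveDepth m)
      ≤ (4 ^ ⌊scale (sieveDepth m)⌋₊) ^ 10 := Nat.pow_le_pow_left (primorial_le_four_pow _) _
    _ = 2 ^ (20 * ⌊scale (sieveDepth m)⌋₊) := by
        rw [show (4 : ℕ) = 2 ^ 2 from rfl, ← pow_mul, ← pow_mul]
        congr 1
        ring
    _ ≤ 2 ^ m := Nat.pow_le_pow_right two_pos hfloor

/-- The least multiple of the sieve modulus exceeding `2 ^ m`; the averages over `[1, 2 ^ m]` are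
dominated by averages of this length, which consist of whole periods. -/
noncomputable def sieveLength (m : ℕ) : ℕ :=
  sieveModulus (sieveDepth m) * (2 ^ m / sieveModulus (sieveDepth m) + 1)

lemma two_pow_lt_sieveLength (m : ℕ) : 2 ^ m < sieveLength m :=
  Nat.lt_mul_div_succ _ (sieveModulus_pos _)

lemma sieveLength_pos (m : ℕ) : 0 < sieveLength m :=
  (Nat.zero_le _).trans_lt (two_pow_lt_sieveLength m)

lemma sieveLength_le (hm : 200 ≤ m) : sieveLength m ≤ 2 * 2 ^ m := by
  have := Nat.mul_div_le (2 ^ m) (sieveModulus (sieveDepth m))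
  have := sieveModulus_sieveDepth_le hm
  rw [sieveLength, mul_add_one]
  omega

lemma exp_mul_scale_le_sieveLength (hm : 200 ≤ m) :
    Real.exp (120 * scale (sieveDepth m)) ≤ sieveLength m := by
  have hpow : (2 : ℝ) ^ m ≤ sieveLength m := by exact_mod_cast (two_pow_lt_sieveLength m).le
  refine le_trans ?_ hpow
  rw [← Real.exp_log (show (0 : ℝ) < 2 ^ m by positivity), Real.log_pow, Real.exp_le_exp]
  nlinarith [scale_sieveDepth_le hm, Real.log_two_gt_d9, scale_pos (sieveDepth m)]

lemma norm_sum_brunSieveIncrement_mul_fourier_le (hb : ∀ i, Even (b i)) {D N : ℕ} (hD : 0 < D)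
    (hsupp : ∀ A ∈ sieveSupport b (j + 1), setProd A ≤ D) (hN : (level j * D) ^ 2 ≤ N)
    (t : UnitAddCircle) :
    ‖∑ n ∈ Icc 1 N, (brunSieveIncrement b j n : ℂ) * fourier (n : ℤ) t‖ ≤
      N * (17 * (sieveNorm (j + 1) / level j)) := by
  have hlevel : (2 : ℝ) ≤ level j := by exact_mod_cast two_le_level j
  have hD' : (0 : ℝ) < D := Nat.cast_pos.2 hD
  have hlevel_pos : (0 : ℝ) < level j := by linarith
  have hpos : ∀ A ∈ sieveSupport b (j + 1), 0 < setProd A := fun A hA =>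
    setProd_pos (prime_of_mem_sieveSupport hA)
  have hcoeff : ∑ A ∈ sieveSupport b (j + 1), |sieveIncrement b j A| ≤
      D * (2 * sieveNorm (j + 1)) := by
    refine le_trans ?_ (mul_le_mul_of_nonneg_left (sum_abs_sieveIncrement_div_le hb j) hD'.le)
    rw [mul_sum]
    refine sum_le_sum fun A hA => ?_
    have : (setProd A : ℝ) ≤ D := by exact_mod_cast hsupp A hA
    rw [mul_div_left_comm]
    exact le_mul_of_one_le_right (abs_nonneg _)
      ((one_le_div (Nat.cast_pos.2 (hpos A hA))).2 this)
  have hε : (1 : ℝ) ≤ N * ((level j * D : ℝ)⁻¹) ^ 2 := by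
    rw [inv_pow, ← div_eq_mul_inv, one_le_div (by positivity)]
    exact_mod_cast hN
  have hDε : 2 * D * (level j * D : ℝ)⁻¹ ≤ 1 := by
    rw [← div_eq_mul_inv, mul_div_mul_right _ _ hD'.ne']
    exact div_le_one_of_le₀ hlevel hlevel_pos.le
  refine (norm_sum_divisorSum_mul_fourier_le (by positivity) hε hDε hpos hsupp
    (fun q _ => abs_sum_sieveIncrement_div_setProd_le hb j q) t).trans ?_
  refine mul_le_mul_of_nonneg_left ?_ (Nat.cast_nonneg N)
  calc sieveNorm (j + 1) / level j + 8 * (level j * D : ℝ)⁻¹ *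
        ∑ A ∈ sieveSupport b (j + 1), |sieveIncrement b j A|
      ≤ sieveNorm (j + 1) / level j + 8 * (level j * D : ℝ)⁻¹ * (D * (2 * sieveNorm (j + 1))) := by
        gcongr
    _ = 17 * (sieveNorm (j + 1) / level j) := by
        field_simp
        ring

lemma eLpNorm'_two_weightedAverage_sieveOrder_le (hm : 200 ≤ m) (hj : j < sieveDepth m)
    {f : ℤ → ℂ} (hf : f.HasFiniteSupport) :
    eLpNorm' (weightedAverage (brunSieveIncrement (sieveOrder (sieveDepth m)) j) (sieveLength m) f)
      2 .count ≤ ENNReal.ofReal (17 * (sieveNorm (j + 1) / level j)) * eLpNorm' f 2 .count := by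
  set E := Real.exp (20 * scale (sieveDepth m)) with hE
  have hE_one : 1 ≤ E := Real.one_le_exp (by have := scale_pos (sieveDepth m); positivity)
  have hlevel : (level j : ℝ) ≤ E := (level_le_exp j).trans <| Real.exp_le_exp.2 <| by
    linarith [scale_monotone hj.le, scale_pos (sieveDepth m)]
  have hN : (level j * ⌊E⌋₊) ^ 2 ≤ sieveLength m := by
    suffices ((level j : ℝ) * ⌊E⌋₊) ^ 2 ≤ sieveLength m by exact_mod_cast this
    calc ((level j : ℝ) * ⌊E⌋₊) ^ 2 ≤ (E * E) ^ 2 := by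
          gcongr
          exact Nat.floor_le (by positivity)
      _ = E ^ 4 := by ring
      _ ≤ E ^ 6 := pow_le_pow_right₀ hE_one (by norm_num)
      _ = Real.exp (120 * scale (sieveDepth m)) := by
          rw [hE, ← Real.exp_nat_mul]
          push_cast
          ring_nf
      _ ≤ sieveLength m := exp_mul_scale_le_sieveLength hm
  exact eLpNorm'_two_weightedAverage_le (sieveLength_pos m)
    (norm_sum_brunSieveIncrement_mul_fourier_le (even_sieveOrder _) (Nat.floor_pos.2 hE_one)
      (fun A hA => Nat.le_floor (setProd_le_exp hj hA)) hN) hf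

lemma even_fullSieveOrder (i : ℕ) : Even (fullSieveOrder i) := even_two_mul _

lemma le_primorial_sq {n : ℕ} (hn : 2 ≤ n) : n ≤ primorial n ^ 2 := by
  have le_of_prime : ∀ q, q.Prime → q ≤ n → q ≤ primorial n := fun q hq hqn =>
    Nat.le_of_dvd (primorial_pos n)
      (dvd_prod_of_mem _ (mem_filter.2 ⟨mem_range.2 (Nat.lt_succ_of_le hqn), hq⟩))
  obtain ⟨q, hq, hlt, hle⟩ := Nat.exists_prime_lt_and_le_two_mul (n / 2) (by omega)
  calc n ≤ 2 * q := by omega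
    _ ≤ primorial n * primorial n :=
        Nat.mul_le_mul (le_of_prime 2 Nat.prime_two hn) (le_of_prime q hq (by omega))
    _ = primorial n ^ 2 := (sq _).symm

lemma primorial_dvd_primorial {a c : ℕ} (h : a ≤ c) : primorial a ∣ primorial c :=
  prod_dvd_prod_of_subset _ _ _ (filter_subset_filter _ (range_subset_range.2 (by omega)))

lemma eLpNorm'_two_weightedAverage_fullSieveOrder_le (j : ℕ) {f : ℤ → ℂ} (hf : f.HasFiniteSupport) :
    eLpNorm' (weightedAverage (brunSieveIncrement fullSieveOrder j) (primorial (level (j + 1)) ^ 10)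
      f) 2 .count ≤
      ENNReal.ofReal (17 * (sieveNorm (j + 1) / level j)) * eLpNorm' f 2 .count := by
  set P := primorial (level (j + 1))
  have hP : 0 < P := primorial_pos _
  have hlevel : level j ≤ P ^ 2 :=
    (level_monotone j.le_succ).trans (le_primorial_sq (two_le_level (j + 1)))
  have hN : (level j * P) ^ 2 ≤ P ^ 10 :=
    calc (level j * P) ^ 2 ≤ (P ^ 2 * P) ^ 2 := by gcongr
      _ = P ^ 6 := by ring
      _ ≤ P ^ 10 := Nat.pow_le_pow_right hP (by norm_num)
  refine eLpNorm'_two_weightedAverage_le (pow_pos hP _)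
    (norm_sum_brunSieveIncrement_mul_fourier_le even_fullSieveOrder hP (fun A hA => ?_) hN) hf
  exact Nat.le_of_dvd hP
    ((setProd_dvd_setProd_sievingPrimes hA).trans (setProd_sievingPrimes_dvd_primorial _))

end SieveLength

section MaximalIncrements

variable {j : ℕ} {s : Finset ℕ}

lemma eLpNorm'_iSup_finset_le {ι X : Type*} [MeasurableSpace X] {μ : Measure X} {p : ℝ} (hp : 0 < p)
    {s : Finset ι} {F : ι → X → ℝ≥0∞} (hF : ∀ m ∈ s, AEMeasurable (F m) μ) {B : ℝ≥0∞}
    (hB : ∀ m ∈ s, eLpNorm' (F m) p μ ≤ B) :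
    eLpNorm' (fun x => ⨆ m ∈ s, F m x) p μ ≤ (#s : ℝ≥0∞) ^ (1 / p) * B := by
  have hpointwise : ∀ x, (⨆ m ∈ s, F m x) ^ p ≤ ∑ m ∈ s, F m x ^ p := fun x => by
    rw [← ENNReal.le_rpow_inv_iff hp]
    refine iSup₂_le fun m hm => ?_
    rw [ENNReal.le_rpow_inv_iff hp]
    exact single_le_sum (f := fun m => F m x ^ p) (fun _ _ => zero_le) hm
  have h_lintegral : ∀ m ∈ s, ∫⁻ x, F m x ^ p ∂μ ≤ B ^ p := fun m hm => by
    simpa only [eLpNorm'_eq_lintegral_enorm, enorm_eq_self, one_div, ENNReal.rpow_inv_le_iff hp]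
      using hB m hm
  simp only [eLpNorm'_eq_lintegral_enorm, enorm_eq_self]
  calc (∫⁻ x, (⨆ m ∈ s, F m x) ^ p ∂μ) ^ (1 / p)
      ≤ (∫⁻ x, ∑ m ∈ s, F m x ^ p ∂μ) ^ (1 / p) := by
        gcongr
        exact hpointwise _
    _ ≤ (#s * B ^ p) ^ (1 / p) := by
        rw [lintegral_finsetSum' _ fun m hm => (hF m hm).pow_const p, ← nsmul_eq_mul]
        gcongr
        exact sum_le_card_nsmul _ _ _ h_lintegral
    _ = (#s : ℝ≥0∞) ^ (1 / p) * B := by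
        rw [ENNReal.mul_rpow_of_nonneg _ _ (by positivity), one_div, ENNReal.rpow_rpow_inv hp.ne']

lemma MaximalBound.mono {ι α : Type*} [MeasurableSpace α]
    {T : ι → (α → ℂ) →ₗ[ℂ] (α → ℂ)} {s : Finset ι} {p B B' : ℝ} (h : MaximalBound T s p B)
    (hB : B ≤ B') : MaximalBound T s p B' := fun f hf =>
  (h f hf).trans (mul_le_mul_left (ENNReal.ofReal_le_ofReal hB) _)

lemma MaximalBound.union {ι α : Type*} [DecidableEq ι] [MeasurableSpace α]
    [DiscreteMeasurableSpace α]
    {T : ι → (α → ℂ) →ₗ[ℂ] (α → ℂ)} {s t : Finset ι} {p B B' : ℝ} (hp : 1 ≤ p) (hB : 0 ≤ B)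
    (hB' : 0 ≤ B') (hs : MaximalBound T s p B) (ht : MaximalBound T t p B') :
    MaximalBound T (s ∪ t) p (B + B') := fun f hf => by
  rw [ENNReal.ofReal_add hB hB', add_mul]
  refine le_trans (eLpNorm'_mono_enorm_ae (by linarith) (.of_forall fun x => ?_))
    ((eLpNorm'_add_le Measurable.of_discrete.aestronglyMeasurable
      Measurable.of_discrete.aestronglyMeasurable hp).trans (add_le_add (hs f hf) (ht f hf)))
  simp only [enorm_eq_self, Pi.add_apply, Finset.iSup_union]
  exact sup_le le_self_add le_add_self

lemma maximalBound_brunSieveIncrement {p : ℝ} (hp : 1 < p) {b : ℕ → ℕ → ℕ}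
    (hb : ∀ m i, Even (b m i)) (j : ℕ) (N : ℕ → ℕ) (s : Finset ℕ) :
    MaximalBound (fun m => weightedAverage (brunSieveIncrement (b m) j) (N m)) s p
      (4 * p / (p - 1) * sieveNorm (j + 1)) := by
  have hdensity : 0 ≤ ∏ i ∈ range (j + 1), blockDensity i :=
    prod_nonneg fun i _ => (blockDensity_pos i).le
  have hsum : ∑ A ∈ (sievingPrimes (j + 1)).powerset,
      2 * (∏ i ∈ range (j + 1), blockDensity i)⁻¹ / (setProd A : ℝ) * (2 * p / (p - 1)) =
        4 * p / (p - 1) * sieveNorm (j + 1) := by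
    simp only [div_eq_mul_inv _ (setProd _ : ℝ)]
    rw [← sum_mul, ← mul_sum, sum_powerset_inv_setProd, sieveNorm_eq]
    ring
  rw [← hsum]
  exact maximalBound_weightedAverage_divisorSum hp (S := (sievingPrimes (j + 1)).powerset)
    (s := fun m => sieveSupport (b m) (j + 1)) (d := setProd)
    (c := fun m => sieveIncrement (b m) j)
    (a := fun _ => 2 * (∏ i ∈ range (j + 1), blockDensity i)⁻¹) (fun _ => filter_subset _ _)
    (fun A hA => setProd_pos fun q hq => prime_of_mem_sievingPrimes (mem_powerset.1 hA hq))
    (fun _ => by positivity) (fun m => abs_sieveIncrement_le (hb m) j) N s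

lemma inv_level_le (j : ℕ) : (level j : ℝ)⁻¹ ≤ 2 * Real.exp (-scale j) := by
  have hlevel : (0 : ℝ) < level j := by exact_mod_cast two_pos.trans_le (two_le_level j)
  rw [Real.exp_neg, ← div_eq_mul_inv, inv_eq_one_div, div_le_div_iff₀ hlevel (Real.exp_pos _),
    one_mul]
  exact exp_scale_le_two_mul_level j

lemma sqrt_card_le (hs : ∀ m ∈ s, 200 ≤ m ∧ scale (sieveDepth m) < level (j + 1)) :
    √(#s) ≤ 18 * Real.exp (3 / 4 * scale j) := by
  have hsub : s ⊆ range (300 * level (j + 1)) := fun m hm => by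
    have : (m : ℝ) < (300 * level (j + 1) : ℕ) := by
      push_cast
      linarith [lt_scale_sieveDepth (hs m hm).1, (hs m hm).2]
    exact mem_range.2 (by exact_mod_cast this)
  have hcard : (#s : ℝ) ≤ 300 * level (j + 1) := by
    have := card_le_card hsub
    rw [card_range] at this
    exact_mod_cast this
  have hlevel := level_le_exp (j + 1)
  rw [scale_succ] at hlevel
  refine Real.sqrt_le_iff.2 ⟨by positivity, hcard.trans ?_⟩
  rw [mul_pow, ← Real.exp_nat_mul,
    show ((2 : ℕ) : ℝ) * (3 / 4 * scale j) = 3 / 2 * scale j by push_cast; ring]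
  linarith [Real.exp_pos (3 / 2 * scale j)]

lemma maximalBound_two_of_scale_lt_level
    (hs : ∀ m ∈ s, 200 ≤ m ∧ j < sieveDepth m ∧ scale (sieveDepth m) < level (j + 1)) :
    MaximalBound (fun m => weightedAverage (brunSieveIncrement (sieveOrder (sieveDepth m)) j)
      (sieveLength m)) s 2 (612 * (sieveNorm (j + 1) * Real.exp (-scale j / 4))) := by
  intro f hf
  have hnorm := sieveNorm_nonneg (j + 1)
  refine (eLpNorm'_iSup_finset_le two_pos (fun _ _ => Measurable.of_discrete.aemeasurable)
    fun m hm => ?_).trans (?_ : _ * (ENNReal.ofReal (17 * (sieveNorm (j + 1) / level j)) *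
      eLpNorm' f 2 .count) ≤ _)
  · rw [eLpNorm'_enorm]
    exact eLpNorm'_two_weightedAverage_sieveOrder_le (hs m hm).1 (hs m hm).2.1 hf
  rw [← mul_assoc, ← ENNReal.ofReal_natCast, ENNReal.ofReal_rpow_of_nonneg (by positivity)
    (by norm_num), ← ENNReal.ofReal_mul (by positivity), ← Real.sqrt_eq_rpow]
  refine mul_le_mul_left (ENNReal.ofReal_le_ofReal ?_) _
  calc √(#s) * (17 * (sieveNorm (j + 1) / level j))
      = 17 * sieveNorm (j + 1) * (√(#s) * (level j : ℝ)⁻¹) := by ring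
    _ ≤ 17 * sieveNorm (j + 1) *
          ((18 * Real.exp (3 / 4 * scale j)) * (2 * Real.exp (-scale j))) := by
        gcongr
        · exact sqrt_card_le fun m hm => ⟨(hs m hm).1, (hs m hm).2.2⟩
        · exact inv_level_le j
    _ = 612 * (sieveNorm (j + 1) * (Real.exp (3 / 4 * scale j) * Real.exp (-scale j))) := by ring
    _ = 612 * (sieveNorm (j + 1) * Real.exp (-scale j / 4)) := by
        rw [← Real.exp_add]
        ring_nf

lemma enorm_weightedAverage_sieveOrder_le_ergodicMaximal {m : ℕ}
    (h : (level (j + 1) : ℝ) ≤ scale (sieveDepth m)) (f : ℤ → ℂ) (x : ℤ) :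
    ‖weightedAverage (brunSieveIncrement (sieveOrder (sieveDepth m)) j) (sieveLength m) f x‖ₑ ≤
      ergodicMaximal (· + ((primorial (level (j + 1)) ^ 10 : ℕ) : ℤ)) (fun y =>
        ‖weightedAverage (brunSieveIncrement fullSieveOrder j) (primorial (level (j + 1)) ^ 10)
          f y‖ₑ) x := by
  have hdvd : primorial (level (j + 1)) ^ 10 ∣ sieveLength m :=
    (pow_dvd_pow_of_dvd (primorial_dvd_primorial (Nat.le_floor h)) 10).trans (dvd_mul_right _ _)
  obtain ⟨K, hK⟩ := exists_eq_mul_left_of_dvd hdvd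
  have hperiod := brunSieveIncrement_periodic fullSieveOrder (j := j)
    ((setProd_sievingPrimes_dvd_primorial (j + 1)).trans (dvd_pow_self _ (by norm_num : 10 ≠ 0)))
  rw [brunSieveIncrement_sieveOrder h, hK]
  exact enorm_weightedAverage_mul_le_ergodicMaximal hperiod
    (Nat.pos_of_mul_pos_right (hK ▸ sieveLength_pos m)) f x

lemma maximalBound_two_of_level_le_scale
    (hs : ∀ m ∈ s, (level (j + 1) : ℝ) ≤ scale (sieveDepth m)) :
    MaximalBound (fun m => weightedAverage (brunSieveIncrement (sieveOrder (sieveDepth m)) j)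
      (sieveLength m)) s 2 (136 * (sieveNorm (j + 1) * Real.exp (-scale j / 4))) := by
  intro f hf
  have hnorm := sieveNorm_nonneg (j + 1)
  have hmax := eLpNorm'_ergodicMaximal_le one_lt_two
    (measurePreserving_add_right .count ((primorial (level (j + 1)) ^ 10 : ℕ) : ℤ))
    (F := fun y => ‖weightedAverage (brunSieveIncrement fullSieveOrder j)
      (primorial (level (j + 1)) ^ 10) f y‖ₑ) .of_discrete
  refine (eLpNorm'_mono_enorm_ae two_pos.le (.of_forall fun x => ?_)).trans (hmax.trans ?_)
  · simp only [enorm_eq_self]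
    exact iSup₂_le fun m hm => enorm_weightedAverage_sieveOrder_le_ergodicMaximal (hs m hm) f x
  rw [eLpNorm'_enorm]
  refine (mul_le_mul_right (eLpNorm'_two_weightedAverage_fullSieveOrder_le j hf) _).trans ?_
  rw [← mul_assoc, ← ENNReal.ofReal_mul (by norm_num)]
  refine mul_le_mul_left (ENNReal.ofReal_le_ofReal ?_) _
  calc 2 * 2 / (2 - 1) * (17 * (sieveNorm (j + 1) / level j))
      = 68 * (sieveNorm (j + 1) * (level j : ℝ)⁻¹) := by ring
    _ ≤ 68 * (sieveNorm (j + 1) * (2 * Real.exp (-scale j / 4))) := by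
        gcongr
        refine (inv_level_le j).trans ?_
        gcongr
        linarith [scale_pos j]
    _ = _ := by ring

lemma maximalBound_two_brunSieveIncrement (hs : ∀ m ∈ s, 200 ≤ m ∧ j < sieveDepth m) :
    MaximalBound (fun m => weightedAverage (brunSieveIncrement (sieveOrder (sieveDepth m)) j)
      (sieveLength m)) s 2 (748 * (sieveNorm (j + 1) * Real.exp (-scale j / 4))) := by
  classical
  have hnorm := sieveNorm_nonneg (j + 1)
  have hshort := maximalBound_two_of_scale_lt_level (j := j)
    (s := {m ∈ s | ¬ (level (j + 1) : ℝ) ≤ scale (sieveDepth m)}) fun m hm =>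
      have hms := hs m (mem_filter.1 hm).1
      ⟨hms.1, hms.2, not_le.1 (mem_filter.1 hm).2⟩
  have hlong := maximalBound_two_of_level_le_scale (j := j)
    (s := {m ∈ s | (level (j + 1) : ℝ) ≤ scale (sieveDepth m)}) fun m hm => (mem_filter.1 hm).2
  have h := hlong.union one_le_two (by positivity) (by positivity) hshort
  rw [filter_union_filter_not_eq] at h
  exact h.mono (by linarith)

end MaximalIncrements

section SummingIncrements

lemma rpow_one_sub_mul_rpow_le {A B G x θ θ' : ℝ} (hA : 0 ≤ A) (hB : 0 ≤ B) (hx : 0 ≤ x)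
    (hθ : θ ∈ Set.Icc 0 1) (hθ' : θ' ≤ θ) (hAG : A ≤ G) (hBG : B ≤ G * Real.exp (-x)) :
    A ^ (1 - θ) * B ^ θ ≤ G * Real.exp (-(θ' * x)) := by
  have hG : 0 ≤ G := hA.trans hAG
  have hθ₁ : 0 ≤ 1 - θ := sub_nonneg.2 hθ.2
  have hθ₀ : 0 ≤ θ := hθ.1
  calc A ^ (1 - θ) * B ^ θ
      ≤ G ^ (1 - θ) * (G * Real.exp (-x)) ^ θ := by gcongr
    _ = G * Real.exp (-(θ * x)) := by
        rw [Real.mul_rpow hG (Real.exp_pos _).le, ← Real.exp_mul, ← mul_assoc,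
          ← Real.rpow_add_of_nonneg hG hθ₁ hθ₀, sub_add_cancel, Real.rpow_one]
        ring_nf
    _ ≤ G * Real.exp (-(θ' * x)) := by gcongr

lemma MaximalBound.interp_two {ι α : Type*} [MeasurableSpace α] [MeasurableSingletonClass α]
    {T : ι → (α → ℂ) →ₗ[ℂ] (α → ℂ)} {s : Finset ι} {p B₀ B₁ G x : ℝ}
    (h₀ : MaximalBound T s ((1 + p) / 2) B₀) (h₁ : MaximalBound T s 2 B₁) (hp : 1 < p) (hp2 : p ≤ 2)
    (hB₀ : 0 ≤ B₀) (hB₁ : 0 ≤ B₁) (hx : 0 ≤ x) (hB₀G : B₀ ≤ G) (hB₁G : B₁ ≤ G * Real.exp (-x)) :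
    MaximalBound T s p (G * Real.exp (-((p - 1) / 2 * x))) := by
  have : 0 < p - 1 := sub_pos.2 hp
  have hp3 : 0 < 3 - p := by linarith
  have hden : 0 < p * (3 - p) := by positivity
  have hθ : 2 * (p - 1) / (p * (3 - p)) ∈ Set.Icc 0 1 :=
    ⟨by positivity, (div_le_one hden).2 (by nlinarith)⟩
  have hpθ : 1 / p = (1 - 2 * (p - 1) / (p * (3 - p))) / ((1 + p) / 2) +
      2 * (p - 1) / (p * (3 - p)) / 2 := by
    field_simp
    ring
  have hθ' : (p - 1) / 2 ≤ 2 * (p - 1) / (p * (3 - p)) := by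
    rw [le_div_iff₀ hden]
    nlinarith [sq_nonneg (p - 2)]
  exact (h₀.interp h₁ (by linarith) one_lt_two (by linarith) hθ hpθ hB₀ hB₁).mono
    (rpow_one_sub_mul_rpow_le hB₀ hB₁ hx hθ hθ' hB₀G hB₁G)

theorem exists_maximalBound_brunSieveIncrement : ∃ C : ℝ, 0 < C ∧ ∀ p : ℝ, 1 < p → p ≤ 2 →
    ∀ (j : ℕ) (s : Finset ℕ), (∀ m ∈ s, 200 ≤ m ∧ j < sieveDepth m) →
      MaximalBound (fun m => weightedAverage (brunSieveIncrement (sieveOrder (sieveDepth m)) j)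
        (sieveLength m)) s p
        (C / (p - 1) * (scale j ^ 3 * Real.exp (-((p - 1) / 8 * scale j)))) := by
  obtain ⟨C, hC, hnorm⟩ := exists_sieveNorm_succ_le
  refine ⟨748 * C, by positivity, fun p hp hp2 j s hs => ?_⟩
  have hp1 : 0 < p - 1 := sub_pos.2 hp
  have hscale := scale_pos j
  have hsieveNorm := sieveNorm_nonneg (j + 1)
  have hone := maximalBound_brunSieveIncrement (show 1 < (1 + p) / 2 by linarith)
    (fun m => even_sieveOrder (sieveDepth m)) j sieveLength s
  rw [show 4 * ((1 + p) / 2) / ((1 + p) / 2 - 1) = 4 * (1 + p) / (p - 1) by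
    rw [show (1 + p) / 2 - 1 = (p - 1) / 2 by ring]
    field_simp] at hone
  have htwo_le : 748 * (sieveNorm (j + 1) * Real.exp (-scale j / 4)) ≤
      748 / (p - 1) * sieveNorm (j + 1) * Real.exp (-(scale j / 4)) := by
    rw [← mul_assoc, neg_div]
    gcongr
    exact (le_div_iff₀ hp1).2 (by linarith)
  refine (hone.interp_two (G := 748 / (p - 1) * sieveNorm (j + 1))
    (maximalBound_two_brunSieveIncrement hs) hp hp2 (by positivity) (by positivity) (by positivity)
    ?_ htwo_le).mono ?_
  · gcongr
    linarith
  · calc 748 / (p - 1) * sieveNorm (j + 1) * Real.exp (-((p - 1) / 2 * (scale j / 4)))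
        ≤ 748 / (p - 1) * (C * scale j ^ 3) * Real.exp (-((p - 1) / 2 * (scale j / 4))) := by
          gcongr
          exact hnorm j
      _ = _ := by ring_nf

-- The right-hand side telescopes along `u = δ * scale j`, as `scale (j + 1) = 3 / 2 * scale j`.
lemma pow_three_mul_exp_neg_le {u : ℝ} (hu : 0 < u) :
    u ^ 3 * Real.exp (-u) ≤ 106 * ((3 / 2 * u) / (1 + 3 / 2 * u) - u / (1 + u)) := by
  have hdiff : (3 / 2 * u) / (1 + 3 / 2 * u) - u / (1 + u) =
      (1 / 2 * u) / ((1 + 3 / 2 * u) * (1 + u)) := by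
    field_simp
    ring
  have hpoly : u ^ 2 + 5 / 2 * u ^ 3 + 3 / 2 * u ^ 4 ≤ 53 * Real.exp u := by
    have h2 := Real.pow_div_factorial_le_exp u hu.le 2
    have h3 := Real.pow_div_factorial_le_exp u hu.le 3
    have h4 := Real.pow_div_factorial_le_exp u hu.le 4
    norm_num [Nat.factorial] at h2 h3 h4
    linarith
  rw [hdiff, mul_div_assoc', le_div_iff₀ (by positivity), Real.exp_neg, mul_assoc, inv_mul_eq_div,
    mul_div_assoc', div_le_iff₀ (Real.exp_pos u)]
  nlinarith

lemma sum_scale_pow_three_mul_exp_le {δ : ℝ} (hδ : 0 < δ) (J : ℕ) :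
    ∑ j ∈ range J, scale j ^ 3 * Real.exp (-(δ * scale j)) ≤ 106 / δ ^ 3 := by
  have hscale : ∀ j, 0 < δ * scale j := fun j => mul_pos hδ (scale_pos j)
  have hterm : ∀ j, scale j ^ 3 * Real.exp (-(δ * scale j)) ≤ 106 / δ ^ 3 *
      (δ * scale (j + 1) / (1 + δ * scale (j + 1)) - δ * scale j / (1 + δ * scale j)) := by
    intro j
    rw [scale_succ, mul_left_comm δ, div_mul_eq_mul_div, le_div_iff₀ (by positivity)]
    calc scale j ^ 3 * Real.exp (-(δ * scale j)) * δ ^ 3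
        = (δ * scale j) ^ 3 * Real.exp (-(δ * scale j)) := by ring
      _ ≤ _ := pow_three_mul_exp_neg_le (hscale j)
  refine (sum_le_sum fun j _ => hterm j).trans ?_
  rw [← mul_sum, sum_range_sub fun j => δ * scale j / (1 + δ * scale j)]
  refine mul_le_of_le_one_right (by positivity) ?_
  have hlast : δ * scale J / (1 + δ * scale J) ≤ 1 :=
    (div_le_one (by linarith [hscale J])).2 (by linarith)
  have hfirst : 0 ≤ δ * scale 0 / (1 + δ * scale 0) :=
    div_nonneg (hscale 0).le (by linarith [hscale 0])
  linarith

end SummingIncrements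

section PrimeAverages

lemma mem_primesUpTo {N p : ℕ} : p ∈ primesUpTo N ↔ p ≤ N ∧ p.Prime := by
  simp [primesUpTo]

lemma theta_nonneg (N : ℕ) : 0 ≤ theta N := sum_nonneg fun p _ => Real.log_natCast_nonneg p

lemma norm_weightedPrimeAvg_le (f : ℤ → ℂ) (N : ℕ) (x : ℤ) :
    ‖weightedPrimeAvg f N x‖ ≤ (theta N)⁻¹ * ∑ p ∈ primesUpTo N, Real.log p * ‖f (x + p)‖ := by
  rw [weightedPrimeAvg, norm_mul, norm_inv, Complex.norm_real, Real.norm_of_nonneg (theta_nonneg N)]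
  refine mul_le_mul_of_nonneg_left ((norm_sum_le _ _).trans_eq (sum_congr rfl fun p _ => ?_))
    (inv_nonneg.2 (theta_nonneg N))
  rw [norm_mul, Complex.norm_real, Real.norm_of_nonneg (Real.log_natCast_nonneg p), mul_comm]

lemma norm_weightedPrimeAvg_le_sum (f : ℤ → ℂ) (N : ℕ) (x : ℤ) :
    ‖weightedPrimeAvg f N x‖ ≤ ∑ n ∈ Icc 1 N, ‖f (x + n)‖ := by
  refine (norm_weightedPrimeAvg_le f N x).trans
    (inv_mul_le_of_le_mul₀ (theta_nonneg N) (by positivity) ?_)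
  rw [mul_sum]
  calc ∑ p ∈ primesUpTo N, Real.log p * ‖f (x + p)‖
      ≤ ∑ p ∈ primesUpTo N, theta N * ‖f (x + p)‖ := by
        gcongr with p hp
        exact single_le_sum (f := fun p : ℕ => Real.log p) (fun q _ => Real.log_natCast_nonneg q) hp
    _ ≤ ∑ n ∈ Icc 1 N, theta N * ‖f (x + n)‖ :=
        sum_le_sum_of_subset_of_nonneg
          (fun p hp => mem_Icc.2 ⟨(mem_primesUpTo.1 hp).2.one_le, (mem_primesUpTo.1 hp).1⟩)
          fun n _ _ => mul_nonneg (theta_nonneg N) (norm_nonneg _)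

lemma log_le_of_le_two_pow {m q : ℕ} (hq : 0 < q) (hqm : q ≤ 2 ^ m) : Real.log q ≤ m := by
  have h := Real.log_le_log (Nat.cast_pos.2 hq) (show (q : ℝ) ≤ 2 ^ m by exact_mod_cast hqm)
  rw [Real.log_pow] at h
  nlinarith [Real.log_two_lt_d9, Nat.cast_nonneg (α := ℝ) m]

lemma exists_log_le_mul_brunSieve : ∃ C : ℝ, 0 < C ∧ ∀ m q : ℕ, 200 ≤ m → q.Prime → q ≤ 2 ^ m →
    level (sieveDepth m) < q →
      Real.log q ≤ C * brunSieve (sieveOrder (sieveDepth m)) (sieveDepth m) q := by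
  obtain ⟨c, hc, hsieve⟩ := exists_mul_scale_le_brunSieve
  refine ⟨300 / c, by positivity, fun m q hm hq hqm hlevel => ?_⟩
  rw [div_mul_eq_mul_div, le_div_iff₀ hc]
  nlinarith [hsieve _ q hq hlevel, log_le_of_le_two_pow hq.pos hqm, lt_scale_sieveDepth hm]

lemma exists_sum_primesUpTo_log_mul_le : ∃ C : ℝ, 0 < C ∧ ∀ m N : ℕ, 200 ≤ m → N ≤ 2 ^ m →
    ∀ F : ℕ → ℝ, (∀ n, 0 ≤ F n) → ∑ p ∈ primesUpTo N, Real.log p * F p ≤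
      m * ∑ n ∈ Icc 1 (level (sieveDepth m)), F n + C * ∑ n ∈ Icc 1 (sieveLength m),
        brunSieve (sieveOrder (sieveDepth m)) (sieveDepth m) n * F n := by
  obtain ⟨C, hC, hlog⟩ := exists_log_le_mul_brunSieve
  refine ⟨C, hC, fun m N hm hN F hF => ?_⟩
  have hsieve : ∀ n, 0 ≤ C * (brunSieve (sieveOrder (sieveDepth m)) (sieveDepth m) n * F n) :=
    fun n => mul_nonneg hC.le (mul_nonneg (brunSieve_nonneg (even_sieveOrder _) _ n) (hF n))
  rw [← sum_filter_add_sum_filter_not (primesUpTo N) (· ≤ level (sieveDepth m)), mul_sum, mul_sum]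
  refine add_le_add ((sum_le_sum fun p hp => ?_).trans (sum_le_sum_of_subset_of_nonneg ?_
    fun n _ _ => mul_nonneg m.cast_nonneg (hF n))) ((sum_le_sum fun p hp => ?_).trans
      (sum_le_sum_of_subset_of_nonneg ?_ fun n _ _ => hsieve n))
  · have hp' := mem_primesUpTo.1 (mem_filter.1 hp).1
    exact mul_le_mul_of_nonneg_right (log_le_of_le_two_pow hp'.2.pos (hp'.1.trans hN)) (hF p)
  · intro p hp
    rw [mem_filter, mem_primesUpTo] at hp
    exact mem_Icc.2 ⟨hp.1.2.one_le, hp.2⟩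
  · rw [mem_filter, mem_primesUpTo, not_le] at hp
    rw [← mul_assoc]
    exact mul_le_mul_of_nonneg_right (hlog m p hm hp.1.2 (hp.1.1.trans hN) hp.2) (hF p)
  · intro p hp
    rw [mem_filter, mem_primesUpTo] at hp
    exact mem_Icc.2 ⟨hp.1.2.one_le, (hp.1.1.trans hN).trans (two_pow_lt_sieveLength m).le⟩

lemma mul_level_sieveDepth_le {m : ℕ} (hm : 200 ≤ m) :
    (m : ℝ) * level (sieveDepth m) ≤ 2 * 2 ^ m := by
  calc (m : ℝ) * level (sieveDepth m)
      ≤ (2 * Real.exp (m / 2)) * Real.exp (scale (sieveDepth m)) := by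
        gcongr
        · linarith [Real.add_one_le_exp ((m : ℝ) / 2)]
        · exact level_le_exp _
    _ = 2 * Real.exp (m / 2 + scale (sieveDepth m)) := by rw [Real.exp_add, mul_assoc]
    _ ≤ 2 * Real.exp (m * Real.log 2) := by
        gcongr
        nlinarith [scale_sieveDepth_le hm, Real.log_two_gt_d9, Nat.cast_nonneg (α := ℝ) m]
    _ = 2 * 2 ^ m := by rw [mul_comm (m : ℝ), Real.exp_mul, Real.exp_log two_pos, Real.rpow_natCast]

lemma inv_two_pow_mul_le {m : ℕ} (hm : 200 ≤ m) :
    ((2 : ℝ) ^ m)⁻¹ * m ≤ 2 * (level (sieveDepth m) : ℝ)⁻¹ := by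
  have hlevel : (0 : ℝ) < level (sieveDepth m) := by
    exact_mod_cast two_pos.trans_le (two_le_level _)
  rw [← div_eq_mul_inv, le_div_iff₀ hlevel, mul_assoc, inv_mul_le_iff₀ (by positivity)]
  linarith [mul_level_sieveDepth_le hm]

lemma inv_two_pow_le_inv_sieveLength {m : ℕ} (hm : 200 ≤ m) :
    ((2 : ℝ) ^ m)⁻¹ ≤ 2 * (sieveLength m : ℝ)⁻¹ := by
  have hlength : (0 : ℝ) < sieveLength m := by exact_mod_cast sieveLength_pos m
  rw [← div_eq_mul_inv, le_div_iff₀ hlength, inv_mul_le_iff₀ (by positivity), mul_comm]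
  exact_mod_cast sieveLength_le hm

lemma exists_inv_theta_le : ∃ C : ℝ, 0 < C ∧ ∀ m N : ℕ, 2 ≤ N → 2 ^ m ≤ 2 * N →
    (theta N)⁻¹ ≤ C * (2 ^ m)⁻¹ := by
  obtain ⟨c, hc, htheta⟩ := exists_mul_le_theta
  refine ⟨2 / c, by positivity, fun m N hN hmN => ?_⟩
  have hmN' : (2 : ℝ) ^ m ≤ 2 * N := by exact_mod_cast hmN
  rw [← inv_div, ← mul_inv]
  refine inv_anti₀ (by positivity) (le_trans ?_ (htheta N hN))
  nlinarith

lemma exists_norm_weightedPrimeAvg_le : ∃ C : ℝ, 0 < C ∧ ∀ m N : ℕ, 200 ≤ m → N ≤ 2 ^ m →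
    2 ^ m ≤ 2 * N → ∀ (f : ℤ → ℂ) (x : ℤ), ‖weightedPrimeAvg f N x‖ ≤ C *
      ((level (sieveDepth m) : ℝ)⁻¹ * ∑ n ∈ Icc 1 (level (sieveDepth m)), ‖f (x + n)‖ +
        (sieveLength m : ℝ)⁻¹ * ∑ n ∈ Icc 1 (sieveLength m),
          brunSieve (sieveOrder (sieveDepth m)) (sieveDepth m) n * ‖f (x + n)‖) := by
  obtain ⟨c, hc, htheta⟩ := exists_inv_theta_le
  obtain ⟨C, hC, hsum⟩ := exists_sum_primesUpTo_log_mul_le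
  refine ⟨2 * c * (1 + C), by positivity, fun m N hm hN hmN f x => ?_⟩
  have hS : 0 ≤ ∑ n ∈ Icc 1 (level (sieveDepth m)), ‖f (x + n)‖ := by positivity
  have hT : 0 ≤ ∑ n ∈ Icc 1 (sieveLength m),
      brunSieve (sieveOrder (sieveDepth m)) (sieveDepth m) n * ‖f (x + n)‖ :=
    sum_nonneg fun n _ => mul_nonneg (brunSieve_nonneg (even_sieveOrder _) _ n) (norm_nonneg _)
  have hprimes := hsum m N hm hN (fun n => ‖f (x + n)‖) fun _ => norm_nonneg _
  generalize ∑ n ∈ Icc 1 (level (sieveDepth m)), ‖f (x + n)‖ = S at *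
  generalize ∑ n ∈ Icc 1 (sieveLength m),
    brunSieve (sieveOrder (sieveDepth m)) (sieveDepth m) n * ‖f (x + n)‖ = T at *
  have hNge : 2 ≤ N := by linarith [Nat.pow_le_pow_right two_pos (show 2 ≤ m by lia)]
  calc ‖weightedPrimeAvg f N x‖
      ≤ (theta N)⁻¹ * ∑ p ∈ primesUpTo N, Real.log p * ‖f (x + p)‖ :=
        norm_weightedPrimeAvg_le f N x
    _ ≤ c * (2 ^ m)⁻¹ * (m * S + C * T) :=
        mul_le_mul (htheta m N hNge hmN) hprimes
          (sum_nonneg fun p _ => mul_nonneg (Real.log_natCast_nonneg p) (norm_nonneg _))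
          (by positivity)
    _ = c * ((2 ^ m)⁻¹ * m * S + C * ((2 ^ m)⁻¹ * T)) := by ring
    _ ≤ c * (2 * (level (sieveDepth m) : ℝ)⁻¹ * S + C * (2 * (sieveLength m : ℝ)⁻¹ * T)) := by
        gcongr ?_ * (?_ * _ + ?_ * (?_ * _))
        · exact inv_two_pow_mul_le hm
        · exact inv_two_pow_le_inv_sieveLength hm
    _ = 2 * c * ((level (sieveDepth m) : ℝ)⁻¹ * S + C * ((sieveLength m : ℝ)⁻¹ * T)) := by ring
    _ ≤ 2 * c * (1 + C) * ((level (sieveDepth m) : ℝ)⁻¹ * S + (sieveLength m : ℝ)⁻¹ * T) := by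
        rw [mul_assoc _ (1 + C)]
        refine mul_le_mul_of_nonneg_left ?_ (by positivity)
        have : 0 ≤ (level (sieveDepth m) : ℝ)⁻¹ * S := by positivity
        have : 0 ≤ (sieveLength m : ℝ)⁻¹ * T := by positivity
        nlinarith

lemma inv_mul_sum_brunSieve_mul_le (b : ℕ → ℕ) (J N : ℕ) (f : ℤ → ℂ) (x : ℤ) :
    (N : ℝ)⁻¹ * ∑ n ∈ Icc 1 N, brunSieve b J n * ‖f (x + n)‖ ≤
      (N : ℝ)⁻¹ * ∑ n ∈ Icc 1 N, ‖f (x + n)‖ +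
        ∑ j ∈ range J, ‖weightedAverage (brunSieveIncrement b j) N (fun y => (‖f y‖ : ℂ)) x‖ := by
  simp_rw [brunSieve_eq_one_add_sum, add_mul, one_mul, sum_mul]
  rw [sum_add_distrib, mul_add, sum_comm, mul_sum (range J)]
  refine add_le_add_right (sum_le_sum fun j _ => (le_abs_self _).trans_eq ?_) _
  rw [← Real.norm_eq_abs, ← Complex.norm_real, weightedAverage_apply]
  push_cast
  rfl

end PrimeAverages

section PointwiseDomination

lemma ofReal_inv_mul_sum_norm_le_ergodicMaximal (f : ℤ → ℂ) {N : ℕ} (hN : 0 < N) (x : ℤ) :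
    ENNReal.ofReal ((N : ℝ)⁻¹ * ∑ n ∈ Icc 1 N, ‖f (x + n)‖) ≤
      ergodicMaximal (· + (1 : ℤ)) (fun y => ‖f y‖ₑ) (x + 1) := by
  have h := inv_mul_sum_Icc_div_le (fun y => ‖f y‖ₑ) 1 N x
  simp only [Nat.div_one, mul_one, Nat.cast_one, inv_one, one_mul] at h
  refine le_trans (le_of_eq ?_) h
  rw [ENNReal.ofReal_mul (by positivity), ENNReal.ofReal_inv_of_pos (Nat.cast_pos.2 hN),
    ENNReal.ofReal_natCast, ENNReal.ofReal_sum_of_nonneg fun _ _ => norm_nonneg _]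
  simp only [ofReal_norm]

lemma enorm_weightedPrimeAvg_le_mul_ergodicMaximal (f : ℤ → ℂ) {N : ℕ} (hN : 0 < N) (x : ℤ) :
    ‖weightedPrimeAvg f N x‖ₑ ≤ N * ergodicMaximal (· + (1 : ℤ)) (fun y => ‖f y‖ₑ) (x + 1) := by
  have hN' : (N : ℝ) ≠ 0 := Nat.cast_ne_zero.2 hN.ne'
  calc ‖weightedPrimeAvg f N x‖ₑ
      ≤ ENNReal.ofReal (N * ((N : ℝ)⁻¹ * ∑ n ∈ Icc 1 N, ‖f (x + n)‖)) := by
        rw [← ofReal_norm, mul_inv_cancel_left₀ hN']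
        exact ENNReal.ofReal_le_ofReal (norm_weightedPrimeAvg_le_sum f N x)
    _ ≤ _ := by
        rw [ENNReal.ofReal_mul N.cast_nonneg, ENNReal.ofReal_natCast]
        gcongr
        exact ofReal_inv_mul_sum_norm_le_ergodicMaximal f hN x

lemma exists_enorm_weightedPrimeAvg_le_sum : ∃ C : ℝ, 0 < C ∧ ∀ m N : ℕ, 200 ≤ m → N ≤ 2 ^ m →
    2 ^ m ≤ 2 * N → ∀ (f : ℤ → ℂ) (x : ℤ), ‖weightedPrimeAvg f N x‖ₑ ≤ ENNReal.ofReal C *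
      (ergodicMaximal (· + (1 : ℤ)) (fun y => ‖f y‖ₑ) (x + 1) + ∑ j ∈ range (sieveDepth m),
        ‖weightedAverage (brunSieveIncrement (sieveOrder (sieveDepth m)) j) (sieveLength m)
          (fun y => (‖f y‖ : ℂ)) x‖ₑ) := by
  obtain ⟨C, hC, havg⟩ := exists_norm_weightedPrimeAvg_le
  refine ⟨2 * C, by positivity, fun m N hm hN hmN f x => ?_⟩
  set T := ∑ j ∈ range (sieveDepth m), ‖weightedAverage
    (brunSieveIncrement (sieveOrder (sieveDepth m)) j) (sieveLength m)
      (fun y => (‖f y‖ : ℂ)) x‖ with hT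
  set H := ergodicMaximal (· + (1 : ℤ)) (fun y => ‖f y‖ₑ) (x + 1)
  have hlevel := ofReal_inv_mul_sum_norm_le_ergodicMaximal f
    (two_pos.trans_le (two_le_level (sieveDepth m))) x
  have hlength := ofReal_inv_mul_sum_norm_le_ergodicMaximal f (sieveLength_pos m) x
  have hsieve := inv_mul_sum_brunSieve_mul_le (sieveOrder (sieveDepth m)) (sieveDepth m)
    (sieveLength m) f x
  have hT_nonneg : 0 ≤ T := sum_nonneg fun _ _ => norm_nonneg _
  rw [← hT] at hsieve
  have hofReal : ENNReal.ofReal T = ∑ j ∈ range (sieveDepth m), ‖weightedAverage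
      (brunSieveIncrement (sieveOrder (sieveDepth m)) j) (sieveLength m)
        (fun y => (‖f y‖ : ℂ)) x‖ₑ := by
    rw [hT, ENNReal.ofReal_sum_of_nonneg fun _ _ => norm_nonneg _]
    simp only [ofReal_norm]
  rw [← ofReal_norm, ← hofReal]
  calc ENNReal.ofReal ‖weightedPrimeAvg f N x‖
      ≤ ENNReal.ofReal (C * (_ + (_ + T))) :=
        ENNReal.ofReal_le_ofReal ((havg m N hm hN hmN f x).trans (by gcongr))
    _ ≤ ENNReal.ofReal C * (H + (H + ENNReal.ofReal T)) := by
        rw [ENNReal.ofReal_mul hC.le, ENNReal.ofReal_add (by positivity) (by positivity),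
          ENNReal.ofReal_add (by positivity) hT_nonneg]
        gcongr
    _ ≤ ENNReal.ofReal C * (2 * (H + ENNReal.ofReal T)) := by
        rw [two_mul]
        gcongr ENNReal.ofReal C * (?_ + _)
        exact le_self_add
    _ = _ := by
        rw [← mul_assoc, mul_comm (ENNReal.ofReal C), ENNReal.ofReal_mul two_pos.le,
          ENNReal.ofReal_ofNat]

lemma exists_two_pow_le_two_mul {N : ℕ} (hN : 0 < N) : ∃ m, N ≤ 2 ^ m ∧ 2 ^ m ≤ 2 * N := by
  refine ⟨Nat.log 2 N + 1, (Nat.lt_pow_succ_log_self one_lt_two N).le, ?_⟩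
  rw [pow_succ']
  exact Nat.mul_le_mul_left 2 (Nat.pow_log_le_self 2 hN.ne')

/-- The dyadic scales `m ≤ M` at which the sieve has more than `j` levels. Scales `m < 200` are left
out: averages of length at most `2 ^ 200` need no sieve. -/
noncomputable def sieveScales (M j : ℕ) : Finset ℕ := {m ∈ Icc 200 M | j < sieveDepth m}

lemma mem_sieveScales {M j m : ℕ} : m ∈ sieveScales M j ↔ (200 ≤ m ∧ m ≤ M) ∧ j < sieveDepth m := by
  rw [sieveScales, mem_filter, mem_Icc]

/-- The maximal function, over the scales `m ≤ M`, of the averages of `|f|` weighted by the `j`-th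
increment of the sieve. -/
noncomputable def incrementMaximal (M j : ℕ) (f : ℤ → ℂ) (x : ℤ) : ℝ≥0∞ :=
  ⨆ m ∈ sieveScales M j,
    ‖weightedAverage (brunSieveIncrement (sieveOrder (sieveDepth m)) j) (sieveLength m)
      (fun y => (‖f y‖ : ℂ)) x‖ₑ

lemma sum_enorm_weightedAverage_le_sum_incrementMaximal {m M : ℕ} (hm : 200 ≤ m) (hmM : m ≤ M)
    (f : ℤ → ℂ) (x : ℤ) :
    ∑ j ∈ range (sieveDepth m), ‖weightedAverage
        (brunSieveIncrement (sieveOrder (sieveDepth m)) j) (sieveLength m)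
          (fun y => (‖f y‖ : ℂ)) x‖ₑ ≤
      ∑ j ∈ range ((Icc 200 M).sup sieveDepth), incrementMaximal M j f x := by
  refine (sum_le_sum fun j hj => ?_).trans (sum_le_sum_of_subset
    (range_subset_range.2 (le_sup (f := sieveDepth) (mem_Icc.2 ⟨hm, hmM⟩))))
  exact le_iSup₂_of_le (f := fun m (_ : m ∈ sieveScales M j) => ‖weightedAverage _ _ _ x‖ₑ) m
    (mem_sieveScales.2 ⟨⟨hm, hmM⟩, mem_range.1 hj⟩) le_rfl

lemma exists_enorm_weightedPrimeAvg_le : ∃ C : ℝ, 0 < C ∧ ∀ (M : ℕ) (f : ℤ → ℂ) (x : ℤ),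
    ∀ N ∈ Icc 2 (2 ^ M), ‖weightedPrimeAvg f N x‖ₑ ≤ ENNReal.ofReal C *
      (ergodicMaximal (· + (1 : ℤ)) (fun y => ‖f y‖ₑ) (x + 1) +
        ∑ j ∈ range ((Icc 200 (M + 1)).sup sieveDepth), incrementMaximal (M + 1) j f x) := by
  obtain ⟨C, hC, hlarge⟩ := exists_enorm_weightedPrimeAvg_le_sum
  refine ⟨2 ^ 200 + C, by positivity, fun M f x N hN => ?_⟩
  obtain ⟨hN_two, hNM⟩ := mem_Icc.1 hN
  obtain ⟨m, hNm, hmN⟩ := exists_two_pow_le_two_mul (two_pos.trans_le hN_two)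
  rcases lt_or_ge m 200 with hm | hm
  · have hN_small : (N : ℝ≥0∞) ≤ ENNReal.ofReal (2 ^ 200 + C) := by
      rw [← ENNReal.ofReal_natCast]
      refine ENNReal.ofReal_le_ofReal (le_add_of_le_of_nonneg ?_ hC.le)
      exact_mod_cast hNm.trans (Nat.pow_le_pow_right two_pos hm.le)
    exact (enorm_weightedPrimeAvg_le_mul_ergodicMaximal f (two_pos.trans_le hN_two) x).trans
      (mul_le_mul' hN_small le_self_add)
  · have hmM : m ≤ M + 1 := by
      refine (Nat.pow_le_pow_iff_right one_lt_two).1 (hmN.trans ?_)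
      rw [pow_succ']
      exact Nat.mul_le_mul_left 2 hNM
    refine (hlarge m N hm hNm hmN f x).trans
      (mul_le_mul' (ENNReal.ofReal_le_ofReal (le_add_of_nonneg_left (by positivity))) ?_)
    gcongr
    exact sum_enorm_weightedAverage_le_sum_incrementMaximal hm hmM f x

end PointwiseDomination

section MaximalInequality

lemma exists_eLpNorm'_sum_incrementMaximal_le : ∃ C : ℝ, 0 < C ∧ ∀ p : ℝ, 1 < p → p ≤ 2 →
    ∀ (M J : ℕ) (f : ℤ → ℂ), f.HasFiniteSupport →
      eLpNorm' (∑ j ∈ range J, incrementMaximal M j f) p .count ≤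
        ENNReal.ofReal (C * (p - 1)⁻¹ ^ 4) * eLpNorm' f p .count := by
  obtain ⟨C, hC, hincrement⟩ := exists_maximalBound_brunSieveIncrement
  refine ⟨C * (106 * 8 ^ 3), by positivity, fun p hp hp2 M J f hf => ?_⟩
  have hp1 : 0 < p - 1 := sub_pos.2 hp
  have hf' : (fun y => (‖f y‖ : ℂ)).HasFiniteSupport :=
    Set.Finite.subset hf fun x hx h0 => hx (by simp [h0])
  have hnorm : eLpNorm' (fun y => (‖f y‖ : ℂ)) p .count = eLpNorm' f p .count := by
    simp [eLpNorm'_count, ← ofReal_norm]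
  calc eLpNorm' (∑ j ∈ range J, incrementMaximal M j f) p .count
      ≤ ∑ j ∈ range J, eLpNorm' (incrementMaximal M j f) p .count :=
        eLpNorm'_sum_le (fun _ _ => Measurable.of_discrete.aestronglyMeasurable) hp.le
    _ ≤ ∑ j ∈ range J, ENNReal.ofReal
          (C / (p - 1) * (scale j ^ 3 * Real.exp (-((p - 1) / 8 * scale j)))) *
            eLpNorm' f p .count := by
        gcongr with j
        rw [← hnorm]
        refine hincrement p hp hp2 j (sieveScales M j) (fun m hm => ?_) _ hf'
        exact ⟨(mem_sieveScales.1 hm).1.1, (mem_sieveScales.1 hm).2⟩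
    _ = ENNReal.ofReal (C / (p - 1) *
          ∑ j ∈ range J, scale j ^ 3 * Real.exp (-((p - 1) / 8 * scale j))) *
            eLpNorm' f p .count := by
        rw [← sum_mul, mul_sum, ENNReal.ofReal_sum_of_nonneg fun j _ => ?_]
        have := scale_pos j
        positivity
    _ ≤ ENNReal.ofReal (C / (p - 1) * (106 / ((p - 1) / 8) ^ 3)) * eLpNorm' f p .count := by
        refine mul_le_mul_left (ENNReal.ofReal_le_ofReal ?_) _
        gcongr
        exact sum_scale_pow_three_mul_exp_le (by positivity) J
    _ = ENNReal.ofReal (C * (106 * 8 ^ 3) * (p - 1)⁻¹ ^ 4) * eLpNorm' f p .count := by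
        congr 2
        field_simp

/-- The maximal function `sup_{2 ≤ N ≤ 2 ^ M} |ℳ_N f|`. -/
noncomputable def truncatedPrimeMaximal (M : ℕ) (f : ℤ → ℂ) (x : ℤ) : ℝ≥0∞ :=
  ⨆ N ∈ Icc 2 (2 ^ M), ‖weightedPrimeAvg f N x‖ₑ

/-- The maximal function `sup_{N ≥ 2} |ℳ_N f|`, with the value `∞` where the supremum is infinite
(the real supremum would be `0` there). -/
noncomputable def primeMaximal (f : ℤ → ℂ) (x : ℤ) : ℝ≥0∞ :=
  ⨆ (N : ℕ) (_ : 2 ≤ N), ‖weightedPrimeAvg f N x‖ₑ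

lemma eLpNorm'_ergodicMaximal_comp_add_right_le {p : ℝ} (hp : 1 < p) (hp2 : p ≤ 2) (f : ℤ → ℂ)
    (d : ℤ) :
    eLpNorm' (fun x => ergodicMaximal (· + d) (fun y => ‖f y‖ₑ) (x + d)) p .count ≤
      ENNReal.ofReal (4 * (p - 1)⁻¹ ^ 4) * eLpNorm' f p .count := by
  rw [eLpNorm'_comp_add_right (ergodicMaximal _ _), ← eLpNorm'_enorm (f := f)]
  refine (eLpNorm'_ergodicMaximal_le (F := fun y => ‖f y‖ₑ) hp
    (measurePreserving_add_right _ _) .of_discrete).trans ?_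
  refine mul_le_mul_left (ENNReal.ofReal_le_ofReal ?_) _
  have hp1 : 0 < p - 1 := sub_pos.2 hp
  have hinv : 1 ≤ (p - 1)⁻¹ := (one_le_inv₀ hp1).2 (by linarith)
  calc 2 * p / (p - 1) ≤ 4 * (p - 1)⁻¹ := by
        rw [div_eq_mul_inv]
        gcongr
        linarith
    _ ≤ 4 * (p - 1)⁻¹ ^ 4 := by
        gcongr
        exact le_self_pow₀ hinv four_ne_zero

lemma exists_eLpNorm'_truncatedPrimeMaximal_le_of_hasFiniteSupport :
    ∃ C : ℝ, 0 < C ∧ ∀ p : ℝ, 1 < p → p ≤ 2 → ∀ (M : ℕ) (f : ℤ → ℂ), f.HasFiniteSupport →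
      eLpNorm' (truncatedPrimeMaximal M f) p .count ≤
        ENNReal.ofReal (C * (p - 1)⁻¹ ^ 4) * eLpNorm' f p .count := by
  obtain ⟨C₁, hC₁, hpointwise⟩ := exists_enorm_weightedPrimeAvg_le
  obtain ⟨C₂, hC₂, hincrement⟩ := exists_eLpNorm'_sum_incrementMaximal_le
  refine ⟨C₁ * (4 + C₂), by positivity, fun p hp hp2 M f hf => ?_⟩
  have : 0 < p - 1 := sub_pos.2 hp
  set H : ℤ → ℝ≥0∞ := fun x => ergodicMaximal (· + (1 : ℤ)) (fun y => ‖f y‖ₑ) (x + 1) with hH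
  set G := ∑ j ∈ range ((Icc 200 (M + 1)).sup sieveDepth), incrementMaximal (M + 1) j f with hG
  calc eLpNorm' (truncatedPrimeMaximal M f) p .count
      ≤ ENNReal.ofReal C₁ * eLpNorm' (H + G) p .count := by
        refine eLpNorm'_le_mul_eLpNorm'_of_ae_le_mul
          (Measurable.of_discrete.aestronglyMeasurable) (.of_forall fun x => ?_) (by linarith)
        simpa only [truncatedPrimeMaximal, enorm_eq_self, hH, hG, Pi.add_apply, Finset.sum_apply]
          using iSup₂_le (hpointwise M f x)
    _ ≤ ENNReal.ofReal C₁ * (ENNReal.ofReal (4 * (p - 1)⁻¹ ^ 4) * eLpNorm' f p .count +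
          ENNReal.ofReal (C₂ * (p - 1)⁻¹ ^ 4) * eLpNorm' f p .count) := by
        gcongr
        exact (eLpNorm'_add_le (Measurable.of_discrete.aestronglyMeasurable)
          (Measurable.of_discrete.aestronglyMeasurable) hp.le).trans
            (add_le_add (eLpNorm'_ergodicMaximal_comp_add_right_le hp hp2 f 1)
              (hincrement p hp hp2 _ _ f hf))
    _ = ENNReal.ofReal (C₁ * (4 + C₂) * (p - 1)⁻¹ ^ 4) * eLpNorm' f p .count := by
        rw [← add_mul, ← ENNReal.ofReal_add (by positivity) (by positivity), ← mul_assoc,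
          ← ENNReal.ofReal_mul hC₁.le]
        ring_nf

lemma weightedPrimeAvg_congr {f g : ℤ → ℂ} {N : ℕ} {x : ℤ} (h : ∀ n ≤ N, f (x + n) = g (x + n)) :
    weightedPrimeAvg f N x = weightedPrimeAvg g N x := by
  rw [weightedPrimeAvg, weightedPrimeAvg]
  congr 1
  exact sum_congr rfl fun p hp => by rw [h p (mem_primesUpTo.1 hp).1]

lemma exists_hasFiniteSupport_truncatedPrimeMaximal_eq (M : ℕ) (f : ℤ → ℂ) (Y : Finset ℤ) :
    ∃ g : ℤ → ℂ, g.HasFiniteSupport ∧ (∀ x, ‖g x‖ₑ ≤ ‖f x‖ₑ) ∧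
      ∀ x ∈ Y, truncatedPrimeMaximal M g x = truncatedPrimeMaximal M f x := by
  classical
  set X : Finset ℤ := (Y ×ˢ range (2 ^ M + 1)).image fun z => z.1 + z.2
  refine ⟨fun y => if y ∈ X then f y else 0,
    X.finite_toSet.subset (Function.support_subset_iff'.2 fun y hy => if_neg hy), fun x => ?_,
    fun x hx => ?_⟩
  · dsimp only
    split_ifs <;> simp
  · refine biSup_congr fun N hN => congrArg _ (weightedPrimeAvg_congr fun n hn => if_pos ?_)
    have hnM : n < 2 ^ M + 1 := Nat.lt_succ_of_le (hn.trans (mem_Icc.1 hN).2)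
    exact mem_image.2 ⟨(x, n), mem_product.2 ⟨hx, mem_range.2 hnM⟩, rfl⟩

lemma exists_eLpNorm'_truncatedPrimeMaximal_le :
    ∃ C : ℝ, 0 < C ∧ ∀ p : ℝ, 1 < p → p ≤ 2 → ∀ (M : ℕ) (f : ℤ → ℂ),
      eLpNorm' (truncatedPrimeMaximal M f) p .count ≤
        ENNReal.ofReal (C * (p - 1)⁻¹ ^ 4) * eLpNorm' f p .count := by
  obtain ⟨C, hC, hfinite⟩ := exists_eLpNorm'_truncatedPrimeMaximal_le_of_hasFiniteSupport
  refine ⟨C, hC, fun p hp hp2 M f => (eLpNorm'_count_le_iff (by linarith)).2 fun Y => ?_⟩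
  obtain ⟨g, hg_supp, hgf, hg⟩ := exists_hasFiniteSupport_truncatedPrimeMaximal_eq M f Y
  calc (∑ x ∈ Y, ‖truncatedPrimeMaximal M f x‖ₑ ^ p) ^ (1 / p)
      = (∑ x ∈ Y, ‖truncatedPrimeMaximal M g x‖ₑ ^ p) ^ (1 / p) := by
        congr 1
        exact sum_congr rfl fun x hx => by rw [hg x hx]
    _ ≤ eLpNorm' (truncatedPrimeMaximal M g) p .count :=
        (eLpNorm'_count_le_iff (by linarith)).1 le_rfl Y
    _ ≤ ENNReal.ofReal (C * (p - 1)⁻¹ ^ 4) * eLpNorm' g p .count := hfinite p hp hp2 M g hg_supp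
    _ ≤ ENNReal.ofReal (C * (p - 1)⁻¹ ^ 4) * eLpNorm' f p .count := by
        gcongr
        exact eLpNorm'_mono_enorm_ae (by linarith) (.of_forall hgf)

lemma monotone_truncatedPrimeMaximal (f : ℤ → ℂ) :
    Monotone fun M => truncatedPrimeMaximal M f := fun _ _ hM _ =>
  biSup_mono fun _ hN => Icc_subset_Icc_right (Nat.pow_le_pow_right two_pos hM) hN

lemma primeMaximal_le_iSup_truncatedPrimeMaximal (f : ℤ → ℂ) (x : ℤ) :
    primeMaximal f x ≤ ⨆ M, truncatedPrimeMaximal M f x :=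
  iSup₂_le fun N hN => le_iSup_of_le N <|
    le_iSup₂_of_le (f := fun N (_ : N ∈ Icc 2 (2 ^ _)) => ‖weightedPrimeAvg f N x‖ₑ) N
      (mem_Icc.2 ⟨hN, Nat.lt_two_pow_self.le⟩) le_rfl

lemma eLpNorm'_iSup_le_of_monotone {X : Type*} [MeasurableSpace X] {μ : Measure X} {p : ℝ}
    (hp : 0 < p) {G : ℕ → X → ℝ≥0∞} (hG : ∀ n, Measurable (G n)) (hG_mono : Monotone G)
    {B : ℝ≥0∞} (hB : ∀ n, eLpNorm' (G n) p μ ≤ B) :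
    eLpNorm' (fun x => ⨆ n, G n x) p μ ≤ B := by
  simp only [eLpNorm'_eq_lintegral_enorm, enorm_eq_self, one_div,
    ENNReal.rpow_inv_le_iff hp] at hB ⊢
  rw [lintegral_iSup_rpow hp hG hG_mono]
  exact iSup_le hB

theorem exists_eLpNorm'_primeMaximal_le :
    ∃ C : ℝ, 0 < C ∧ ∀ p : ℝ, 1 < p → p ≤ 2 → ∀ f : ℤ → ℂ,
      eLpNorm' (primeMaximal f) p .count ≤
        ENNReal.ofReal (C * (p - 1)⁻¹ ^ 4) * eLpNorm' f p .count := by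
  obtain ⟨C, hC, htruncated⟩ := exists_eLpNorm'_truncatedPrimeMaximal_le
  refine ⟨C, hC, fun p hp hp2 f => ?_⟩
  refine le_trans (eLpNorm'_mono_enorm_ae (by linarith) (.of_forall fun _ => ?_))
    (eLpNorm'_iSup_le_of_monotone (by linarith) (fun _ => .of_discrete)
      (monotone_truncatedPrimeMaximal f) fun M => htruncated p hp hp2 M f)
  exact primeMaximal_le_iSup_truncatedPrimeMaximal f _

lemma ofReal_iSup_norm_weightedPrimeAvg_le (f : ℤ → ℂ) (x : ℤ) :
    ENNReal.ofReal (⨆ (N : ℕ) (_ : 2 ≤ N), ‖weightedPrimeAvg f N x‖) ≤ primeMaximal f x := by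
  by_cases htop : primeMaximal f x = ⊤
  · rw [htop]
    exact le_top
  rw [ENNReal.ofReal_le_iff_le_toReal htop]
  refine Real.iSup_le (fun N => Real.iSup_le (fun hN => ?_) ENNReal.toReal_nonneg)
    ENNReal.toReal_nonneg
  rw [← ENNReal.ofReal_le_iff_le_toReal htop, ofReal_norm]
  exact le_iSup₂_of_le (f := fun N (_ : 2 ≤ N) => ‖weightedPrimeAvg f N x‖ₑ) N hN le_rfl

variable {α : Type*} [MeasurableSpace α] [MeasurableSingletonClass α]

lemma eLpNorm'_count_eq_ofReal_tsum {E : Type*} [SeminormedAddGroup E] {f : α → E} {p : ℝ}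
    (hp : 0 ≤ p) (hf : Summable fun x => ‖f x‖ ^ p) :
    eLpNorm' f p .count = ENNReal.ofReal ((∑' x, ‖f x‖ ^ p) ^ (1 / p)) := by
  rw [eLpNorm'_count, ← ENNReal.ofReal_rpow_of_nonneg (tsum_nonneg fun x => by positivity)
    (by positivity), ENNReal.ofReal_tsum_of_nonneg (fun x => by positivity) hf]
  simp only [← ENNReal.ofReal_rpow_of_nonneg (norm_nonneg _) hp, ofReal_norm]

lemma tsum_rpow_rpow_le_of_eLpNorm'_le {u : α → ℝ} (hu : ∀ x, 0 ≤ u x) {F : α → ℝ≥0∞}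
    (huF : ∀ x, ENNReal.ofReal (u x) ≤ F x) {p B : ℝ} (hp : 0 < p) (hB : 0 ≤ B)
    (hF : eLpNorm' F p .count ≤ ENNReal.ofReal B) : (∑' x, u x ^ p) ^ (1 / p) ≤ B := by
  have hsum_nonneg : ∀ Y : Finset α, 0 ≤ ∑ x ∈ Y, u x ^ p :=
    fun Y => sum_nonneg fun x _ => Real.rpow_nonneg (hu x) p
  rw [one_div, Real.rpow_inv_le_iff_of_pos (tsum_nonneg fun x => Real.rpow_nonneg (hu x) p) hB hp]
  refine Real.tsum_le_of_sum_le (fun x => Real.rpow_nonneg (hu x) p) fun Y => ?_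
  rw [← Real.rpow_inv_le_iff_of_pos (hsum_nonneg Y) hB hp, ← one_div,
    ← ENNReal.ofReal_le_ofReal_iff hB]
  refine le_trans ?_ ((eLpNorm'_count_le_iff hp).1 hF Y)
  have hY := sum_enorm_rpow_eq_ofReal u hp.le Y
  simp only [Real.norm_of_nonneg (hu _)] at hY
  rw [← hY]
  gcongr with x
  rw [Real.enorm_of_nonneg (hu x)]
  exact huF x

end MaximalInequality

end PrimeMaximal

/-- `ℓ^p` bound, `1 < p ≤ 2`, for the maximal function of the weighted averages along the
primes: `‖sup_{N ≥ 2} |ℳ_N f|‖_{ℓ^p} ≤ C (p−1)⁻⁴ ‖f‖_{ℓ^p}`. -/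
theorem stmt_18 :
    ∃ C : ℝ, 0 < C ∧
      ∀ (p : ℝ), 1 < p → p ≤ 2 →
        ∀ (f : ℤ → ℂ), Summable (fun x : ℤ => ‖f x‖ ^ p) →
          (∑' x : ℤ, (⨆ (N : ℕ) (_ : 2 ≤ N), ‖weightedPrimeAvg f N x‖) ^ p) ^ (1 / p) ≤
            C * (p - 1)⁻¹ ^ 4 * (∑' x : ℤ, ‖f x‖ ^ p) ^ (1 / p) := by
  obtain ⟨C, hC, hmaximal⟩ := PrimeMaximal.exists_eLpNorm'_primeMaximal_le
  refine ⟨C, hC, fun p hp hp2 f hf => ?_⟩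
  have hp0 : 0 < p := by linarith
  have : 0 ≤ p - 1 := by linarith
  have hbound := hmaximal p hp hp2 f
  rw [PrimeMaximal.eLpNorm'_count_eq_ofReal_tsum hp0.le hf,
    ← ENNReal.ofReal_mul (by positivity)] at hbound
  have : 0 ≤ ∑' x, ‖f x‖ ^ p := tsum_nonneg fun x => by positivity
  exact PrimeMaximal.tsum_rpow_rpow_le_of_eLpNorm'_le
    (fun x => Real.iSup_nonneg fun N => Real.iSup_nonneg fun _ => norm_nonneg _)
    (PrimeMaximal.ofReal_iSup_norm_weightedPrimeAvg_le f) hp0 (by positivity) hbound
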